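/- arXiv:2206.12776 — 2 statements merged into one kernel-verified Lean document; each statement's English description precedes it below -/
import Mathlib

section
/- There exists a smooth fan with homogeneity degree 𝔠; that is, there exists a smooth fan X such that the action of the group of self-homeomorphisms of X on X has exactly 𝔠 (the cardinality of the continuum) orbits. -/
/-! The fan has one leg for every binary sequence `z`, via the homeomorphism of the Cantor set
with `ℕ → Bool`; the leg in direction `z` has height `height z`, and `height` is upper
semicontinuous, so that the region below its graph is compact (`isCompact_region`).

* The zero sequence has height `1`.
* The sequence `oneAt m` with a single `1`, at place `m`, has height `mark n`, where `n` is the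
  first component of the pair coded by `m` and `mark` is a dense sequence in `(0,1)`.
* A sequence with at least two `1`s has a height depending only on the places `m` and `m + 1 + j`
  of the first two; for fixed `m` these heights run periodically in `j` through `n + 2` equally
  spaced values, the largest of which is the height of `oneAt m`.

Hence the closure of the set of endpoints meets the leg of `oneAt m` in exactly `n + 2` points,
the leg of the zero sequence in infinitely many, and any other leg in its endpoint only
(`closure_inter_oneAt`, `encard_zeroSeq`, `encard_headTwo`). The endpoints of legs with exactly
`n + 2` such points are therefore those of the legs `oneAt m` with first component `n`, and the only
limit point outside their set is the point at height `mark n` on the zero leg (`limitSet_eq`).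

All notions involved are topological: the vertex is the only point whose complement splits into
three nonempty open pieces (`threeCut_vtx`, `not_threeCut`), the legs are the components of its
complement (`connectedComponent_legs`), and the endpoints are the points that do not cut their
leg (`mem_tips`). So a self-homeomorphism fixes a dense set of points of the zero leg, hence the
points of that leg (`homeo_rigidPt`). These lie in distinct orbits, which gives at least `𝔠`
orbits; there are at most `𝔠` since the plane has `𝔠` points. -/


open Set Topology

noncomputable section

namespace SmoothFanPaper

/-- `A` is an arc (a homeomorphic copy of `[0,1]`) with endpoints `a` and `b`. -/
def IsArc {α : Type*} [TopologicalSpace α] (A : Set α) (a b : α) : Prop :=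
  ∃ h : (Set.Icc (0:ℝ) 1) ≃ₜ A,
    (h ⟨0, Set.left_mem_Icc.mpr zero_le_one⟩ : α) = a ∧
    (h ⟨1, Set.right_mem_Icc.mpr zero_le_one⟩ : α) = b

/-- The order of `x` in `X` is at least `n`: there are `n` arcs contained in `X`, each with
`x` as an endpoint, which pairwise meet only in `x`. -/
def OrderAtLeast {α : Type*} [TopologicalSpace α] (X : Set α) (x : α) (n : ℕ) : Prop :=
  ∃ A : Fin n → Set α, (∀ i, A i ⊆ X) ∧ (∀ i, ∃ b, IsArc (A i) x b) ∧
    ∀ i j, i ≠ j → A i ∩ A j = {x}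

/-- The set of endpoints of `X`: points of order exactly `1`. -/
def Endpoints {α : Type*} [TopologicalSpace α] (X : Set α) : Set α :=
  {x | x ∈ X ∧ OrderAtLeast X x 1 ∧ ¬ OrderAtLeast X x 2}

/-- The Cantor fan: the union of all straight-line segments from the origin to the points of
`cantorSet × {1}` in the plane. -/
def CantorFan : Set (ℝ × ℝ) :=
  {q | ∃ c ∈ cantorSet, ∃ t ∈ Set.Icc (0:ℝ) 1, q = (t * c, t)}

/-- The cone point of the Cantor fan. -/
def fanVertex : ℝ × ℝ := (0, 0)

/-- A smooth fan: a non-degenerate subcontinuum of the Cantor fan containing the cone point,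
whose cone point (the vertex) has order at least 2.  (Every statement below about smooth fans
is invariant under homeomorphisms, so we may realize all smooth fans concretely as such
subcontinua.) -/
structure IsSmoothFan (X : Set (ℝ × ℝ)) : Prop where
  subset_fan : X ⊆ CantorFan
  isCompact : IsCompact X
  isConnected : IsConnected X
  nondegenerate : ∃ x ∈ X, ∃ y ∈ X, x ≠ y
  vertex_mem : fanVertex ∈ X
  vertex_order : OrderAtLeast X fanVertex 2

/-- Two subsets of `(0,1)` are order isomorphic if some order preserving self-homeomorphism
of `[0,1]` maps one onto the other. -/
def OrderIsomorphic (A B : Set ℝ) : Prop :=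
  ∃ h : (Set.Icc (0:ℝ) 1) ≃ₜ (Set.Icc (0:ℝ) 1), StrictMono h ∧
    Subtype.val '' (⇑h '' (Subtype.val ⁻¹' A)) = B

/-- The canonical parametrization of (subsets of) the leg of the Cantor fan through `e`:
a point of the leg is sent to its height, rescaled so that `e` is at height `1`. -/
def legParam (e : ℝ × ℝ) (S : Set (ℝ × ℝ)) : Set ℝ :=
  (fun q : ℝ × ℝ => q.2 / e.2) '' S

/-- The trace of the closure of a set `T` on the open leg `pe ∖ {p, e}` (where `p` is the
vertex and `pe = segment ℝ p e` is the unique arc in a smooth fan from `p` to an endpoint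
`e`), viewed as a subset of `(0,1)` via the canonical parametrization of the leg. -/
def legTrace (T : Set (ℝ × ℝ)) (e : ℝ × ℝ) : Set ℝ :=
  legParam e ((closure T ∩ segment ℝ fanVertex e) \ {fanVertex, e})

/-- `K` enumerates a countably infinite set `𝒦` of compact subsets of `(0,1)`, no two of
which are order isomorphic. -/
def KFamily (K : ℕ → Set ℝ) : Prop :=
  (∀ n, IsCompact (K n) ∧ K n ⊆ Set.Ioo (0:ℝ) 1) ∧
    ∀ m n, m ≠ n → ¬ OrderIsomorphic (K m) (K n)

/-- `X` is a `𝒦`-fan with witnessing endpoint set `E_𝒦 = {e n : n ∈ ℕ}`. -/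
structure IsKFan (K : ℕ → Set ℝ) (X : Set (ℝ × ℝ)) (e : ℕ → ℝ × ℝ) : Prop where
  fan : IsSmoothFan X
  mem_endpoints : ∀ n, e n ∈ Endpoints X
  trace_iso : ∀ n, OrderIsomorphic (legTrace (Endpoints X) (e n)) (K n)
  trace_not_iso : ∀ x ∈ Endpoints X \ Set.range e, ∀ n,
    ¬ OrderIsomorphic (legTrace (Endpoints X) x) (K n)
  meets_closure : ∀ x ∈ Endpoints X \ Set.range e,
    ((closure (Set.range e) ∩ segment ℝ fanVertex x) \ {fanVertex}).Nonempty

/-- A smooth fan is endpoint rigid if every self-homeomorphism fixes every endpoint. -/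
def EndpointRigid (X : Set (ℝ × ℝ)) : Prop :=
  ∀ h : X ≃ₜ X, ∀ x : X, (x : ℝ × ℝ) ∈ Endpoints X → ((h x : X) : ℝ × ℝ) = (x : ℝ × ℝ)

/-- Complete Erdős space `𝔈_c`: the points of the Hilbert space `ℓ²` all of whose
coordinates lie in `{0} ∪ {1/m : m ≥ 1}`. -/
def ErdosSpace : Set (lp (fun _ : ℕ => ℝ) 2) :=
  {x | ∀ n : ℕ, x n = 0 ∨ ∃ m : ℕ, 0 < m ∧ x n = 1 / m}

/-- `z` is a point of zero-dimensionality of the space it lives in: it has a neighborhood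
basis of clopen subsets. -/
def ZeroDimPointAt {α : Type*} [TopologicalSpace α] (z : α) : Prop :=
  ∀ U ∈ nhds z, ∃ V : Set α, IsClopen V ∧ z ∈ V ∧ V ⊆ U
/-- `L₀^φ = {(x,y) : x ∈ C, 0 ≤ y ≤ φ(x)}`, over the Cantor set. -/
def L0 (φ : ℝ → ℝ) : Set (ℝ × ℝ) :=
  {q | q.1 ∈ cantorSet ∧ 0 ≤ q.2 ∧ q.2 ≤ φ q.1}

/-- `G₀^φ = {(x,φ(x)) : x ∈ C, φ(x) > 0}`, over the Cantor set. -/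
def G0 (φ : ℝ → ℝ) : Set (ℝ × ℝ) :=
  {q | q.1 ∈ cantorSet ∧ 0 < q.2 ∧ q.2 = φ q.1}

/-- The setoid on `L₀^φ` identifying the set `C × {0}` to a point. -/
def L0Setoid (φ : ℝ → ℝ) : Setoid (L0 φ) where
  r a b := a = b ∨ ((a : ℝ × ℝ).2 = 0 ∧ (b : ℝ × ℝ).2 = 0)
  iseqv := by
    constructor
    · exact fun _ => Or.inl rfl
    · rintro a b (rfl | ⟨h1, h2⟩)
      · exact Or.inl rfl
      · exact Or.inr ⟨h2, h1⟩
    · rintro a b c (rfl | ⟨h1, h2⟩) (rfl | ⟨h3, h4⟩)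
      · exact Or.inl rfl
      · exact Or.inr ⟨h3, h4⟩
      · exact Or.inr ⟨h1, h2⟩
      · exact Or.inr ⟨h1, h4⟩

/-- The quotient space `L₀^φ / (C × {0})`. -/
def L0Quot (φ : ℝ → ℝ) : Type := Quotient (L0Setoid φ)

instance (φ : ℝ → ℝ) : TopologicalSpace (L0Quot φ) :=
  inferInstanceAs (TopologicalSpace (Quotient (L0Setoid φ)))

/-- The quotient projection `L₀^φ → L₀^φ / (C × {0})`. -/
def L0Proj (φ : ℝ → ℝ) : L0 φ → L0Quot φ := Quotient.mk (L0Setoid φ)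

/-- The setoid on `E × [0,1]` identifying `E × {0}` to a point. -/
def coneSetoid (E : Type*) : Setoid (E × Set.Icc (0:ℝ) 1) where
  r a b := a = b ∨ ((a.2 : ℝ) = 0 ∧ (b.2 : ℝ) = 0)
  iseqv := by
    constructor
    · exact fun _ => Or.inl rfl
    · rintro a b (rfl | ⟨h1, h2⟩)
      · exact Or.inl rfl
      · exact Or.inr ⟨h2, h1⟩
    · rintro a b c (rfl | ⟨h1, h2⟩) (rfl | ⟨h3, h4⟩)
      · exact Or.inl rfl
      · exact Or.inr ⟨h3, h4⟩
      · exact Or.inr ⟨h1, h2⟩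
      · exact Or.inr ⟨h1, h4⟩

/-- The cone over a space `E`: the quotient `(E × [0,1]) / (E × {0})`. -/
def Cone (E : Type*) [TopologicalSpace E] : Type _ := Quotient (coneSetoid E)

instance (E : Type*) [TopologicalSpace E] : TopologicalSpace (Cone E) :=
  inferInstanceAs (TopologicalSpace (Quotient (coneSetoid E)))

/-- A point of the one-point compactification of the disjoint union of the fans `X i`
is to be glued iff it is `∞` or the vertex of one of the fans. -/
def isGluedPoint {ι : Type*} (X : ι → Set (ℝ × ℝ)) :
    OnePoint (Σ i : ι, X i) → Prop :=
  fun a => a.elim True (fun q => (q.2 : ℝ × ℝ) = fanVertex)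

/-- The setoid gluing the vertices (and the point at infinity) of the fans `X i`. -/
def fanSumSetoid {ι : Type*} (X : ι → Set (ℝ × ℝ)) :
    Setoid (OnePoint (Σ i : ι, X i)) where
  r a b := a = b ∨ (isGluedPoint X a ∧ isGluedPoint X b)
  iseqv := by
    constructor
    · exact fun _ => Or.inl rfl
    · rintro a b (rfl | ⟨h1, h2⟩)
      · exact Or.inl rfl
      · exact Or.inr ⟨h2, h1⟩
    · rintro a b c (rfl | ⟨h1, h2⟩) (rfl | ⟨h3, h4⟩)
      · exact Or.inl rfl
      · exact Or.inr ⟨h3, h4⟩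
      · exact Or.inr ⟨h1, h2⟩
      · exact Or.inr ⟨h1, h4⟩

/-- The sum `Σᵢ Xᵢ` of a (finite or countably infinite) family of smooth fans: the quotient of
the one-point compactification of their disjoint union identifying the set consisting of all
the vertices and the point at infinity to a single point.  (For a finite family, `∞` is an
isolated point which is absorbed by the vertex class, so this agrees with the quotient of the
plain disjoint union identifying the vertices.) -/
def FanSum {ι : Type*} (X : ι → Set (ℝ × ℝ)) : Type _ := Quotient (fanSumSetoid X)

instance {ι : Type*} (X : ι → Set (ℝ × ℝ)) : TopologicalSpace (FanSum X) :=
  inferInstanceAs (TopologicalSpace (Quotient (fanSumSetoid X)))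

/-! ### The family of heights over the Cantor space -/

/-- The binary sequences whose first `1` stands at place `m`. -/
def headAt (m : ℕ) : Set (ℕ → Bool) := {z | (∀ i < m, z i = false) ∧ z m = true}

/-- The binary sequences whose first `1` stands at place `m` and whose second `1` stands at
place `m + 1 + j`. -/
def headTwo (m j : ℕ) : Set (ℕ → Bool) :=
  {z | z ∈ headAt m ∧ (∀ i < j, z (m + 1 + i) = false) ∧ z (m + 1 + j) = true}

/-- The zero sequence, the direction of the rigid leg. -/
def zeroSeq : ℕ → Bool := fun _ => false

/-- The sequence with a single `1`, at place `m`. -/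
def oneAt (m : ℕ) : ℕ → Bool := fun i => decide (i = m)

/-- The sequence with exactly two `1`s, at places `m` and `m + 1 + j`. -/
def twoAt (m j : ℕ) : ℕ → Bool := fun i => decide (i = m ∨ i = m + 1 + j)

instance : Nonempty (Ioo (0:ℝ) 1) := ⟨⟨1/2, by norm_num, by norm_num⟩⟩

/-- A dense sequence in the open unit interval: the heights on the rigid leg that get marked. -/
def mark (n : ℕ) : ℝ := (TopologicalSpace.denseSeq (Ioo (0:ℝ) 1) n : ℝ)

/-- The number of marks on the leg in direction `oneAt m`.  Each value `n + 2` is taken for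
infinitely many `m`. -/
def num (m : ℕ) : ℕ := m.unpair.1 + 2

/-- The height of the leg in direction `oneAt m`. -/
def qHeight (m : ℕ) : ℝ := mark m.unpair.1

/-- The common height of all legs with direction in `headTwo m j`. As `j` varies it runs
periodically through the `num m` multiples of `qHeight m / num m` up to `qHeight m`. -/
def rHeight (m j : ℕ) : ℝ := qHeight m * ((j % num m + 1 : ℕ) / (num m : ℝ))

lemma mark_pos (n : ℕ) : 0 < mark n := (TopologicalSpace.denseSeq (Ioo (0:ℝ) 1) n).2.1
lemma mark_lt (n : ℕ) : mark n < 1 := (TopologicalSpace.denseSeq (Ioo (0:ℝ) 1) n).2.2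

lemma num_pos (m : ℕ) : 0 < num m := by unfold num; omega

lemma rHeight_pos (m j : ℕ) : 0 < rHeight m j := by
  have h1 := mark_pos m.unpair.1
  have h2 : (0:ℝ) < num m := by exact_mod_cast num_pos m
  unfold rHeight qHeight
  positivity

lemma rHeight_le (m j : ℕ) : rHeight m j ≤ qHeight m := by
  have h1 := mark_pos m.unpair.1
  have h2 : (0:ℝ) < num m := by exact_mod_cast num_pos m
  unfold rHeight
  apply mul_le_of_le_one_right (by unfold qHeight; exact h1.le)
  rw [div_le_one h2]
  exact_mod_cast Nat.mod_lt j (num_pos m)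

lemma isOpen_coord (i : ℕ) (b : Bool) : IsOpen {z : ℕ → Bool | z i = b} :=
  (isOpen_discrete ({b} : Set Bool)).preimage (continuous_apply (A := fun _ => Bool) i)

lemma isOpen_headAt (m : ℕ) : IsOpen (headAt m) := by
  have : headAt m = (⋂ i ∈ Iio m, {z : ℕ → Bool | z i = false}) ∩ {z | z m = true} := by
    ext z; simp [headAt]
  rw [this]
  refine IsOpen.inter ((finite_Iio m).isOpen_biInter fun i _ => ?_) ?_
  · exact isOpen_coord i false
  · exact isOpen_coord m true

lemma isOpen_headTwo (m j : ℕ) : IsOpen (headTwo m j) := by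
  have : headTwo m j = headAt m ∩ ((⋂ i ∈ Iio j, {z : ℕ → Bool | z (m + 1 + i) = false}) ∩
      {z | z (m + 1 + j) = true}) := by
    ext z
    simp only [headTwo, mem_ofPred_eq, mem_inter_iff, mem_iInter, mem_Iio]
  rw [this]
  refine (isOpen_headAt m).inter
    (IsOpen.inter ((finite_Iio j).isOpen_biInter fun i _ => ?_) ?_)
  · exact isOpen_coord _ false
  · exact isOpen_coord _ true

lemma headAt_unique {z : ℕ → Bool} {m m' : ℕ} (h : z ∈ headAt m) (h' : z ∈ headAt m') :
    m = m' := by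
  rcases lt_trichotomy m m' with hl | hl | hl
  · have := h'.1 m hl; rw [h.2] at this; cases this
  · exact hl
  · have := h.1 m' hl; rw [h'.2] at this; cases this

lemma headTwo_unique {z : ℕ → Bool} {m j j' : ℕ} (h : z ∈ headTwo m j)
    (h' : z ∈ headTwo m j') : j = j' := by
  rcases lt_trichotomy j j' with hl | hl | hl
  · have := h'.2.1 j hl; rw [h.2.2] at this; cases this
  · exact hl
  · have := h.2.1 j' hl; rw [h'.2.2] at this; cases this

lemma zeroSeq_notMem (m : ℕ) : zeroSeq ∉ headAt m := fun h => by
  have := h.2; simp [zeroSeq] at this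

lemma oneAt_mem (m : ℕ) : oneAt m ∈ headAt m := by
  refine ⟨fun i hi => ?_, ?_⟩
  · simp [oneAt]; omega
  · simp [oneAt]

lemma oneAt_notMem (m j : ℕ) : oneAt m ∉ headTwo m j := fun h => by
  have := h.2.2; simp [oneAt] at this; omega

lemma twoAt_mem (m j : ℕ) : twoAt m j ∈ headTwo m j := by
  refine ⟨⟨fun i hi => ?_, ?_⟩, fun i hi => ?_, ?_⟩
  · simp [twoAt]; omega
  · simp [twoAt]
  · simp [twoAt]; omega
  · simp [twoAt]

/-- Every sequence has no `1`, exactly one `1`, or at least two. -/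
lemma seq_cases (z : ℕ → Bool) :
    z = zeroSeq ∨ (∃ m, z = oneAt m) ∨ ∃ m j, z ∈ headTwo m j := by
  by_cases h0 : ∃ m, z m = true
  · right
    have hm : z ∈ headAt (Nat.find h0) :=
      ⟨fun i hi => by simpa using Nat.find_min h0 hi, Nat.find_spec h0⟩
    generalize Nat.find h0 = m at hm
    by_cases h1 : ∃ j, z (m + 1 + j) = true
    · right
      exact ⟨m, Nat.find h1, hm, fun i hi => by simpa using Nat.find_min h1 hi,
        Nat.find_spec h1⟩
    · left
      push Not at h1
      refine ⟨m, funext fun i => ?_⟩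
      rcases lt_trichotomy i m with hl | hl | hl
      · rw [hm.1 i hl]; simp [oneAt]; omega
      · subst hl; rw [hm.2]; simp [oneAt]
      · obtain ⟨k, rfl⟩ := Nat.exists_eq_add_of_lt hl
        have := h1 k
        rw [show m + k + 1 = m + 1 + k by ring]
        simp only [oneAt]
        simp at this
        rw [this]; symm; simp; omega
  · left
    push Not at h0
    funext i
    simpa [zeroSeq] using h0 i

/-- The compact region below the graph of the height function, described by closed
conditions. -/
def region : Set ((ℕ → Bool) × ℝ) :=
  {p | 0 ≤ p.2 ∧ p.2 ≤ 1 ∧ ∀ m, (p.1 ∈ headAt m → p.2 ≤ qHeight m) ∧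
    ∀ j, p.1 ∈ headTwo m j → p.2 ≤ rHeight m j}

lemma isClosed_imp_le {U : Set (ℕ → Bool)} (hU : IsOpen U) (c : ℝ) :
    IsClosed {p : (ℕ → Bool) × ℝ | p.1 ∈ U → p.2 ≤ c} :=
  isClosed_imp (hU.preimage continuous_fst) (isClosed_le continuous_snd continuous_const)

lemma isCompact_region : IsCompact region := by
  have hc : IsClosed region := by
    have : region = {p | 0 ≤ p.2} ∩ ({p | p.2 ≤ 1} ∩ ⋂ m,
        ({p | p.1 ∈ headAt m → p.2 ≤ qHeight m} ∩
          ⋂ j, {p | p.1 ∈ headTwo m j → p.2 ≤ rHeight m j})) := by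
      ext p; simp [region]
    rw [this]
    refine (isClosed_le continuous_const continuous_snd).inter
      ((isClosed_le continuous_snd continuous_const).inter
        (isClosed_iInter fun m => (isClosed_imp_le (isOpen_headAt m) _).inter
          (isClosed_iInter fun j => isClosed_imp_le (isOpen_headTwo m j) _)))
  refine IsCompact.of_isClosed_subset (isCompact_univ.prod (isCompact_Icc (a := (0:ℝ)) (b := 1)))
    hc fun p hp => ⟨trivial, hp.1, hp.2.1⟩

/-- The fibre of `region` over each direction is an interval `[0, φ z]` with `φ z > 0`, and `φ`
takes the prescribed values. -/
lemma exists_height : ∃ φ : (ℕ → Bool) → ℝ, (∀ z, 0 < φ z ∧ φ z ≤ 1) ∧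
    (∀ z t, (z, t) ∈ region ↔ 0 ≤ t ∧ t ≤ φ z) ∧ φ zeroSeq = 1 ∧
    (∀ m, φ (oneAt m) = qHeight m) ∧ ∀ m j, ∀ z ∈ headTwo m j, φ z = rHeight m j := by
  have key : ∀ z, ∃ c : ℝ, (0 < c ∧ c ≤ 1) ∧
      (∀ t, (z, t) ∈ region ↔ 0 ≤ t ∧ t ≤ c) ∧ (z = zeroSeq → c = 1) ∧
      (∀ m, z = oneAt m → c = qHeight m) ∧ ∀ m j, z ∈ headTwo m j → c = rHeight m j := by
    intro z
    rcases seq_cases z with rfl | ⟨m, rfl⟩ | ⟨m, j, hz⟩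
    · refine ⟨1, by norm_num, fun t => ?_, fun _ => rfl, fun m hm => ?_, fun m j h => ?_⟩
      · refine ⟨fun h => ⟨h.1, h.2.1⟩, fun h => ⟨h.1, h.2, fun m => ⟨fun h => ?_, fun j h => ?_⟩⟩⟩
        · exact absurd h (zeroSeq_notMem m)
        · exact absurd h.1 (zeroSeq_notMem m)
      · exact absurd (hm ▸ oneAt_mem m) (zeroSeq_notMem m)
      · exact absurd h.1 (zeroSeq_notMem m)
    · refine ⟨qHeight m, ⟨mark_pos _, (mark_lt _).le⟩, fun t => ?_, fun h => ?_, fun m' h => ?_,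
        fun m' j h => ?_⟩
      · refine ⟨fun h => ⟨h.1, (h.2.2 m).1 (oneAt_mem m)⟩, fun h => ⟨h.1, h.2.trans (mark_lt _).le,
          fun m' => ⟨fun h' => ?_, fun j h' => ?_⟩⟩⟩
        · rw [← headAt_unique (oneAt_mem m) h']; exact h.2
        · obtain rfl := headAt_unique (oneAt_mem m) h'.1
          exact absurd h' (oneAt_notMem m j)
      · exact absurd (h ▸ oneAt_mem m) (zeroSeq_notMem m)
      · rw [headAt_unique (oneAt_mem m) (h ▸ oneAt_mem m')]
      · obtain rfl := headAt_unique (oneAt_mem m) h.1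
        exact absurd h (oneAt_notMem m j)
    · refine ⟨rHeight m j, ⟨rHeight_pos _ _, (rHeight_le m j).trans (mark_lt _).le⟩, fun t => ?_,
        fun h => ?_, fun m' h => ?_, fun m' j' h => ?_⟩
      · refine ⟨fun h => ⟨h.1, (h.2.2 m).2 j hz⟩, fun h => ⟨h.1,
          h.2.trans ((rHeight_le m j).trans (mark_lt _).le),
          fun m' => ⟨fun h' => ?_, fun j' h' => ?_⟩⟩⟩
        · rw [← headAt_unique hz.1 h']; exact h.2.trans (rHeight_le m j)
        · obtain rfl := headAt_unique hz.1 h'.1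
          rw [← headTwo_unique hz h']; exact h.2
      · exact absurd (h ▸ hz.1) (zeroSeq_notMem m)
      · obtain rfl := headAt_unique hz.1 (h ▸ oneAt_mem m')
        exact absurd (h ▸ hz) (oneAt_notMem m j)
      · obtain rfl := headAt_unique hz.1 h.1
        rw [headTwo_unique hz h]
  choose φ h1 h2 h3 h4 h5 using key
  exact ⟨φ, h1, h2, h3 _ rfl, fun m => h4 _ m rfl, fun m j z hz => h5 z m j hz⟩

/-- The height of the leg in direction `z`. -/
def height : (ℕ → Bool) → ℝ := Classical.choose exists_height

lemma height_pos (z : ℕ → Bool) : 0 < height z := ((Classical.choose_spec exists_height).1 z).1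
lemma height_le (z : ℕ → Bool) : height z ≤ 1 := ((Classical.choose_spec exists_height).1 z).2
lemma mem_region {z : ℕ → Bool} {t : ℝ} : (z, t) ∈ region ↔ 0 ≤ t ∧ t ≤ height z :=
  (Classical.choose_spec exists_height).2.1 z t
lemma height_zeroSeq : height zeroSeq = 1 := (Classical.choose_spec exists_height).2.2.1
lemma height_oneAt (m : ℕ) : height (oneAt m) = qHeight m :=
  (Classical.choose_spec exists_height).2.2.2.1 m
lemma height_headTwo {m j : ℕ} {z : ℕ → Bool} (h : z ∈ headTwo m j) : height z = rHeight m j :=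
  (Classical.choose_spec exists_height).2.2.2.2 m j z h

/-! ### Topological invariants -/

/-- The points whose removal does not disconnect their connected component.  In the fan
without its vertex these are the endpoints of the legs. -/
def Tips (Y : Type*) [TopologicalSpace Y] : Set Y :=
  {y | IsPreconnected (connectedComponent y \ {y})}

/-- The tips whose connected component meets the closure of the set of tips in exactly `n`
points. -/
def TipsOfType (Y : Type*) [TopologicalSpace Y] (n : ℕ) : Set Y :=
  {y | y ∈ Tips Y ∧ (closure (Tips Y) ∩ connectedComponent y).encard = n}

lemma image_connectedComponent_homeo {Y : Type*} [TopologicalSpace Y] (g : Y ≃ₜ Y) (y : Y) :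
    g '' connectedComponent y = connectedComponent (g y) := by
  have := g.image_connectedComponentIn (mem_univ y)
  simpa [connectedComponentIn_univ] using this

lemma image_tips {Y : Type*} [TopologicalSpace Y] (g : Y ≃ₜ Y) : g '' Tips Y = Tips Y := by
  have key : ∀ (g : Y ≃ₜ Y) (y : Y), y ∈ Tips Y → g y ∈ Tips Y := by
    intro g y hy
    have := IsPreconnected.image hy g g.continuous.continuousOn
    rwa [image_sdiff g.injective, image_connectedComponent_homeo, image_singleton] at this
  refine Subset.antisymm (image_subset_iff.2 fun y hy => key g y hy) fun y hy =>
    ⟨g.symm y, key g.symm y hy, by simp⟩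

lemma image_tipsOfType {Y : Type*} [TopologicalSpace Y] (g : Y ≃ₜ Y) (n : ℕ) :
    g '' TipsOfType Y n = TipsOfType Y n := by
  have key : ∀ (g : Y ≃ₜ Y) (y : Y), y ∈ TipsOfType Y n → g y ∈ TipsOfType Y n := by
    intro g y hy
    refine ⟨image_tips g ▸ mem_image_of_mem g hy.1, ?_⟩
    rw [← hy.2, ← g.injective.encard_image (closure (Tips Y) ∩ connectedComponent y),
      image_inter g.injective, g.image_closure, image_tips, image_connectedComponent_homeo]
  refine Subset.antisymm (image_subset_iff.2 fun y hy => key g y hy) fun y hy =>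
    ⟨g.symm y, key g.symm y hy, by simp⟩

lemma image_limitSet {Y : Type*} [TopologicalSpace Y] (g : Y ≃ₜ Y) (n : ℕ) :
    g '' (closure (TipsOfType Y n) \ TipsOfType Y n) =
      closure (TipsOfType Y n) \ TipsOfType Y n := by
  rw [image_sdiff g.injective, g.image_closure, image_tipsOfType]

/-! ### The fan without its vertex -/

lemma isPreconnected_of_val {α : Type*} [TopologicalSpace α] {p : α → Prop} {S : Set {x // p x}}
    (h : IsPreconnected ((Subtype.val : {x // p x} → α) '' S)) : IsPreconnected S :=
  (Topology.IsInducing.isPreconnected_image (f := (Subtype.val : {x // p x} → α)) ⟨rfl⟩).1 h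

/-- The fan without its vertex, in coordinates (direction, height). -/
abbrev Legs : Type := {p : (ℕ → Bool) × ℝ // 0 < p.2 ∧ p.2 ≤ height p.1}

/-- The tip of the leg in direction `z`. -/
def tip (z : ℕ → Bool) : Legs := ⟨(z, height z), height_pos z, le_rfl⟩

/-- The point at height `t` on the leg in direction `zeroSeq`. -/
def onZero (t : Ioo (0:ℝ) 1) : Legs :=
  ⟨(zeroSeq, t), t.2.1, by rw [height_zeroSeq]; exact t.2.2.le⟩

lemma continuous_onZero : Continuous onZero := by
  unfold onZero; fun_prop

lemma legs_ext {y y' : Legs} (h1 : y.1.1 = y'.1.1) (h2 : y.1.2 = y'.1.2) : y = y' :=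
  Subtype.ext (Prod.ext h1 h2)

lemma isPreconnected_leg (z : ℕ → Bool) {I : Set ℝ} (hI : I.OrdConnected)
    (hs : I ⊆ Ioc 0 (height z)) : IsPreconnected {y : Legs | y.1.1 = z ∧ y.1.2 ∈ I} := by
  apply isPreconnected_of_val
  have : Subtype.val '' {y : Legs | y.1.1 = z ∧ y.1.2 ∈ I} = {z} ×ˢ I := by
    ext ⟨w, t⟩
    constructor
    · rintro ⟨y, ⟨h1, h2⟩, h3⟩
      rw [h3] at h1 h2
      exact ⟨h1, h2⟩
    · rintro ⟨h1, h2⟩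
      obtain rfl : w = z := h1
      exact ⟨⟨(w, t), (hs h2).1, (hs h2).2⟩, ⟨rfl, h2⟩, rfl⟩
  rw [this]
  exact isPreconnected_singleton.prod hI.isPreconnected

/-- Directions live in a totally disconnected space, so the components are the legs. -/
lemma connectedComponent_legs (y : Legs) :
    connectedComponent y = {y' : Legs | y'.1.1 = y.1.1} := by
  apply Subset.antisymm
  · intro y' hy'
    have h : IsPreconnected ((fun p : Legs => p.1.1) '' connectedComponent y) :=
      isPreconnected_connectedComponent.image _ (by fun_prop)
    exact h.subsingleton (mem_image_of_mem _ hy') (mem_image_of_mem _ mem_connectedComponent)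
  · have h := isPreconnected_leg y.1.1 (I := Ioc 0 (height y.1.1)) ordConnected_Ioc Subset.rfl
    intro y' hy'
    refine h.subset_connectedComponent (x := y) ⟨rfl, y.2⟩ ⟨hy', ?_⟩
    have : y'.1.1 = y.1.1 := hy'
    rw [← this]; exact y'.2

lemma mem_tips {y : Legs} : y ∈ Tips Legs ↔ y.1.2 = height y.1.1 := by
  constructor
  · intro h
    by_contra hne
    have hlt : y.1.2 < height y.1.1 := lt_of_le_of_ne y.2.2 hne
    have h0 := y.2.1
    have hp : IsPreconnected ((fun p : Legs => p.1.2) '' (connectedComponent y \ {y})) :=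
      IsPreconnected.image h _ (by fun_prop)
    rw [connectedComponent_legs] at hp
    have h1 : y.1.2 / 2 ∈ (fun p : Legs => p.1.2) '' ({y' : Legs | y'.1.1 = y.1.1} \ {y}) := by
      refine ⟨⟨(y.1.1, y.1.2 / 2), half_pos h0, (half_lt_self h0).le.trans y.2.2⟩,
        ⟨rfl, fun h => ?_⟩, rfl⟩
      have := congrArg (fun p : Legs => p.1.2) h
      simp only at this
      linarith
    have h2 : height y.1.1 ∈ (fun p : Legs => p.1.2) '' ({y' : Legs | y'.1.1 = y.1.1} \ {y}) := by
      refine ⟨tip y.1.1, ⟨rfl, fun h => hne ?_⟩, rfl⟩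
      exact (congrArg (fun p : Legs => p.1.2) h).symm
    obtain ⟨y', ⟨h3, h4⟩, h5⟩ := hp.ordConnected.out h1 h2 ⟨(half_lt_self h0).le, hlt.le⟩
    exact h4 (legs_ext h3 h5)
  · intro h
    have : connectedComponent y \ {y} =
        {y' : Legs | y'.1.1 = y.1.1 ∧ y'.1.2 ∈ Ioo 0 (height y.1.1)} := by
      rw [connectedComponent_legs]
      ext y'
      constructor
      · rintro ⟨h1, h2⟩
        have h1' : y'.1.1 = y.1.1 := h1
        refine ⟨h1, y'.2.1, lt_of_le_of_ne (h1' ▸ y'.2.2) fun h3 => h2 ?_⟩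
        exact legs_ext h1 (h3.trans h.symm)
      · rintro ⟨h1, h2⟩
        refine ⟨h1, fun h3 => ?_⟩
        rw [h3, h] at h2
        exact lt_irrefl _ h2.2
    show IsPreconnected _
    rw [this]
    exact isPreconnected_leg _ ordConnected_Ioo Ioo_subset_Ioc_self

lemma tip_mem (z : ℕ → Bool) : tip z ∈ Tips Legs := mem_tips.2 rfl

lemma eq_tip {y : Legs} (h : y ∈ Tips Legs) : y = tip y.1.1 := legs_ext rfl (mem_tips.1 h)

/-- Closure points are controlled by what happens near their direction. -/
lemma mem_of_closure {S F : Set Legs} {O : Set (ℕ → Bool)} (hO : IsOpen O) (hF : IsClosed F)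
    (hSF : ∀ y ∈ S, y.1.1 ∈ O → y ∈ F) {y : Legs} (hy : y ∈ closure S) (hyO : y.1.1 ∈ O) :
    y ∈ F := by
  have hO' : IsOpen {y : Legs | y.1.1 ∈ O} := hO.preimage (by fun_prop)
  have := hO'.inter_closure ⟨hyO, hy⟩
  exact closure_minimal (fun y hy => hSF y hy.2 hy.1) hF this

lemma isClosed_snd {F : Set ℝ} (hF : IsClosed F) : IsClosed {y : Legs | y.1.2 ∈ F} :=
  hF.preimage (by fun_prop)

/-- The `i`-th mark on the leg in direction `oneAt m`. -/
def markHeight (m : ℕ) (i : Fin (num m)) : ℝ := qHeight m * ((i + 1 : ℕ) / (num m : ℝ))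

lemma rHeight_eq (m j : ℕ) :
    rHeight m j = markHeight m ⟨j % num m, Nat.mod_lt _ (num_pos m)⟩ := rfl

/-- Each mark height recurs along an arithmetic progression of indices. -/
lemma markHeight_eq (m : ℕ) (i : Fin (num m)) (k : ℕ) :
    rHeight m (i + k * num m) = markHeight m i := by
  rw [rHeight_eq]
  congr 1
  ext
  simp [Nat.mod_eq_of_lt i.2]

lemma markHeight_top (m : ℕ) : markHeight m ⟨num m - 1, Nat.sub_lt (num_pos m) one_pos⟩ =
    qHeight m := by
  have h := num_pos m
  have h2 : (num m : ℝ) ≠ 0 := by exact_mod_cast h.ne'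
  simp only [markHeight]
  rw [show num m - 1 + 1 = num m by omega, div_self h2, mul_one]

lemma markHeight_injective (m : ℕ) : Function.Injective (markHeight m) := by
  intro i i' h
  have h1 := (mark_pos m.unpair.1).ne'
  have h2 : (num m : ℝ) ≠ 0 := by exact_mod_cast (num_pos m).ne'
  have h3 := mul_left_cancel₀ (a := qHeight m) h1 h
  rw [div_left_inj' h2] at h3
  have h4 : (i : ℕ) + 1 = i' + 1 := by exact_mod_cast h3
  ext; omega

/-- The `i`-th mark on the leg in direction `oneAt m`, as a point. -/
def markPt (m : ℕ) (i : Fin (num m)) : Legs :=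
  ⟨(oneAt m, markHeight m i), by
    rw [← markHeight_eq m i 0]
    exact ⟨rHeight_pos _ _, by rw [height_oneAt]; exact rHeight_le _ _⟩⟩

lemma tendsto_twoAt (m i : ℕ) {n : ℕ} (hn : 0 < n) :
    Filter.Tendsto (fun k => twoAt m (i + k * n)) Filter.atTop (𝓝 (oneAt m)) := by
  rw [tendsto_pi_nhds]
  intro x
  apply tendsto_const_nhds.congr'
  filter_upwards [Filter.eventually_ge_atTop x] with k hk
  have : k ≤ k * n := Nat.le_mul_of_pos_right k hn
  simp only [oneAt, twoAt]
  congr 1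
  apply propext
  omega

lemma tendsto_oneAt (n : ℕ) :
    Filter.Tendsto (fun k => oneAt (Nat.pair n k)) Filter.atTop (𝓝 zeroSeq) := by
  rw [tendsto_pi_nhds]
  intro x
  apply tendsto_const_nhds.congr'
  filter_upwards [Filter.eventually_gt_atTop x] with k hk
  have := Nat.right_le_pair n k
  simp only [oneAt, zeroSeq]
  symm
  simp; omega

lemma markPt_mem_closure (m : ℕ) (i : Fin (num m)) : markPt m i ∈ closure (Tips Legs) := by
  refine mem_closure_of_tendsto (f := fun k : ℕ => tip (twoAt m (i + k * num m)))
    (b := Filter.atTop) ?_ (Filter.Eventually.of_forall fun k => tip_mem _)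
  rw [tendsto_subtype_rng]
  refine Filter.Tendsto.prodMk_nhds (tendsto_twoAt m i (num_pos m)) ?_
  apply tendsto_const_nhds.congr
  intro k
  rw [height_headTwo (twoAt_mem _ _), markHeight_eq]

/-- The closure of the tips meets the leg in direction `oneAt m` exactly in its marks. -/
lemma closure_inter_oneAt (m : ℕ) :
    closure (Tips Legs) ∩ connectedComponent (tip (oneAt m)) = range (markPt m) := by
  rw [connectedComponent_legs]
  apply Subset.antisymm
  · rintro y ⟨hy, hz⟩
    have hz : y.1.1 = oneAt m := hz
    have := mem_of_closure (isOpen_headAt m)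
      (isClosed_snd (finite_range (markHeight m)).isClosed) (fun y' hy' hU => ?_) hy
      (hz ▸ oneAt_mem m)
    · obtain ⟨i, hi⟩ := this
      exact ⟨i, legs_ext hz.symm hi⟩
    · show y'.1.2 ∈ range (markHeight m)
      rw [mem_tips.1 hy']
      rcases seq_cases y'.1.1 with h | ⟨m', h⟩ | ⟨m', j, h⟩
      · exact absurd (h ▸ hU) (zeroSeq_notMem m)
      · obtain rfl := headAt_unique hU (h ▸ oneAt_mem m')
        rw [h, height_oneAt]
        exact ⟨_, markHeight_top m⟩
      · obtain rfl := headAt_unique hU h.1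
        rw [height_headTwo h]
        exact ⟨_, (rHeight_eq m j).symm⟩
  · rintro _ ⟨i, rfl⟩
    exact ⟨markPt_mem_closure m i, rfl⟩

lemma encard_oneAt (m : ℕ) :
    (closure (Tips Legs) ∩ connectedComponent (tip (oneAt m))).encard = num m := by
  rw [closure_inter_oneAt]
  have hinj : Function.Injective (markPt m) := fun i i' h =>
    markHeight_injective m (congrArg (fun p : Legs => p.1.2) h)
  rw [← image_univ, hinj.encard_image]
  simp

/-- Near a direction in `headTwo m j` all legs have the same height, so the only limit of tips on
such a leg is its own tip. -/
lemma encard_headTwo {m j : ℕ} {z : ℕ → Bool} (hz : z ∈ headTwo m j) :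
    (closure (Tips Legs) ∩ connectedComponent (tip z)).encard = 1 := by
  rw [encard_eq_one]
  refine ⟨tip z, Subset.antisymm ?_ ?_⟩
  · rw [connectedComponent_legs]
    rintro y ⟨hy, hyz⟩
    have hyz : y.1.1 = z := hyz
    have := mem_of_closure (isOpen_headTwo m j) (isClosed_snd (isClosed_singleton (x := rHeight m j)))
      (fun y' hy' hU => by
        show y'.1.2 = _
        rw [mem_tips.1 hy', height_headTwo hU]) hy (hyz ▸ hz)
    refine legs_ext hyz ?_
    rw [show y.1.2 = _ from this]
    exact (height_headTwo hz).symm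
  · rintro _ rfl
    exact ⟨subset_closure (tip_mem z), mem_connectedComponent⟩

/-- The marked point of index `n` on the leg in direction `zeroSeq`. -/
def zeroMark (n : ℕ) : Legs := onZero (TopologicalSpace.denseSeq (Ioo (0:ℝ) 1) n)

lemma tendsto_zeroMark (n : ℕ) :
    Filter.Tendsto (fun k => tip (oneAt (Nat.pair n k))) Filter.atTop (𝓝 (zeroMark n)) := by
  rw [tendsto_subtype_rng]
  refine Filter.Tendsto.prodMk_nhds (tendsto_oneAt n) ?_
  apply tendsto_const_nhds.congr
  intro k
  rw [height_oneAt, qHeight, Nat.unpair_pair]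
  rfl

/-- Tips accumulate at a dense subset of the leg in direction `zeroSeq`. -/
lemma encard_zeroSeq : (closure (Tips Legs) ∩ connectedComponent (tip zeroSeq)).encard = ⊤ := by
  rw [encard_eq_top_iff]
  intro hfin
  have hsub : range zeroMark ⊆ closure (Tips Legs) ∩ connectedComponent (tip zeroSeq) := by
    rintro _ ⟨n, rfl⟩
    refine ⟨mem_closure_of_tendsto (tendsto_zeroMark n)
      (Filter.Eventually.of_forall fun k => tip_mem _), ?_⟩
    rw [connectedComponent_legs]
    rfl
  have hf2 : (range (TopologicalSpace.denseSeq (Ioo (0:ℝ) 1))).Finite := by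
    have h1 : (onZero '' range (TopologicalSpace.denseSeq (Ioo (0:ℝ) 1))).Finite := by
      rw [← range_comp]; exact hfin.subset hsub
    refine h1.of_finite_image fun s _ t _ h => ?_
    exact Subtype.ext (congrArg (fun p : Legs => p.1.2) h)
  have h3 : range (TopologicalSpace.denseSeq (Ioo (0:ℝ) 1)) = univ := by
    rw [← hf2.isClosed.closure_eq]
    exact (TopologicalSpace.denseRange_denseSeq _).closure_eq
  rw [h3, finite_univ_iff] at hf2
  exact (Ioo_infinite (zero_lt_one (α := ℝ))) hf2

/-- The tips of type `n + 2` are exactly the tips of the legs in direction `oneAt m` where the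
first component of `m` is `n`. -/
lemma mem_tipsOfType {n : ℕ} {y : Legs} :
    y ∈ TipsOfType Legs (n + 2) ↔ ∃ m : ℕ, m.unpair.1 = n ∧ y = tip (oneAt m) := by
  constructor
  · rintro ⟨h1, h2⟩
    rw [eq_tip h1] at h2 ⊢
    rcases seq_cases y.1.1 with h | ⟨m, h⟩ | ⟨m, j, h⟩
    · rw [h, encard_zeroSeq] at h2
      exact absurd h2.symm (ENat.natCast_ne_top _)
    · rw [h, encard_oneAt] at h2
      have h3 : num m = n + 2 := by exact_mod_cast h2
      exact ⟨m, by unfold num at h3; omega, by rw [h]⟩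
    · rw [encard_headTwo h] at h2
      have h3 : 1 = n + 2 := by exact_mod_cast h2
      omega
  · rintro ⟨m, rfl, rfl⟩
    exact ⟨tip_mem _, encard_oneAt m⟩

/-- The tips of type `n + 2` accumulate at exactly one point outside their set. -/
lemma limitSet_eq (n : ℕ) :
    closure (TipsOfType Legs (n + 2)) \ TipsOfType Legs (n + 2) = {zeroMark n} := by
  apply Subset.antisymm
  · rintro y ⟨hy, hy'⟩
    by_cases hz : ∃ m, y.1.1 ∈ headAt m
    · -- At most one tip of this type has its direction in `headAt m`.
      obtain ⟨m, hm⟩ := hz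
      exfalso
      have hsub : (TipsOfType Legs (n + 2) ∩ {y | y.1.1 ∈ headAt m}) ⊆ {tip (oneAt m)} := by
        rintro y' ⟨h1, h2⟩
        obtain ⟨m', -, rfl⟩ := mem_tipsOfType.1 h1
        rw [headAt_unique h2 (oneAt_mem m')]
        rfl
      exact hy' (mem_of_closure (isOpen_headAt m) ((finite_singleton _).subset hsub).isClosed
        (fun y h1 h2 => ⟨h1, h2⟩) hy hm).1
    · have h0 : y.1.1 = zeroSeq := by
        rcases seq_cases y.1.1 with h | ⟨m, h⟩ | ⟨m, j, h⟩
        · exact h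
        · exact absurd ⟨m, h ▸ oneAt_mem m⟩ hz
        · exact absurd ⟨m, h.1⟩ hz
      refine legs_ext h0 ?_
      refine mem_of_closure isOpen_univ (isClosed_snd (isClosed_singleton (x := mark n)))
        (fun y' h1 _ => ?_) hy trivial
      obtain ⟨m, rfl, rfl⟩ := mem_tipsOfType.1 h1
      exact height_oneAt m
  · rintro _ rfl
    refine ⟨mem_closure_of_tendsto (tendsto_zeroMark n)
      (Filter.Eventually.of_forall fun k => mem_tipsOfType.2 ⟨_, by rw [Nat.unpair_pair], rfl⟩),
      fun h => ?_⟩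
    obtain ⟨m, -, h⟩ := mem_tipsOfType.1 h
    have : zeroSeq = oneAt m := congrArg (fun p : Legs => p.1.1) h
    exact zeroSeq_notMem m (this ▸ oneAt_mem m)

/-- Every self-homeomorphism of the fan without its vertex fixes all points of height less than
`1` on the leg in direction `zeroSeq`: it fixes the dense set of marked points. -/
lemma homeo_fixes (g : Legs ≃ₜ Legs) (t : Ioo (0:ℝ) 1) : g (onZero t) = onZero t := by
  have h : g ∘ onZero = onZero := by
    refine DenseRange.equalizer (TopologicalSpace.denseRange_denseSeq (Ioo (0:ℝ) 1))
      (g.continuous.comp continuous_onZero) continuous_onZero (funext fun n => ?_)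
    have h1 := image_limitSet g (n + 2)
    rw [limitSet_eq, image_singleton] at h1
    exact singleton_injective h1
  exact congrFun h t

/-! ### The fan in the plane -/

/-- The Cantor set, parametrized by binary sequences. -/
def slope (z : ℕ → Bool) : ℝ := (cantorSetHomeomorphNatToBool.symm z : ℝ)

lemma slope_mem (z : ℕ → Bool) : slope z ∈ cantorSet :=
  (cantorSetHomeomorphNatToBool.symm z).2

lemma continuous_slope : Continuous slope := by
  unfold slope; fun_prop

lemma slope_injective : Function.Injective slope :=
  Subtype.val_injective.comp cantorSetHomeomorphNatToBool.symm.injective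

/-- The point at height `p.2` on the line through the origin in direction `p.1`. -/
def conePt (p : (ℕ → Bool) × ℝ) : ℝ × ℝ := (p.2 * slope p.1, p.2)

lemma continuous_conePt : Continuous conePt := by
  have := continuous_slope
  unfold conePt; fun_prop

lemma conePt_inj {z z' : ℕ → Bool} {t t' : ℝ} (ht : 0 < t) (h : conePt (z, t) = conePt (z', t')) :
    z = z' ∧ t = t' := by
  obtain ⟨h1, h2⟩ := Prod.ext_iff.1 h
  simp only [conePt] at h1 h2
  subst h2
  exact ⟨slope_injective (mul_left_cancel₀ ht.ne' h1), rfl⟩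

/-- The fan whose leg in direction `z` has height `height z`. -/
def fan : Set (ℝ × ℝ) := conePt '' region

lemma mem_fan {q : ℝ × ℝ} :
    q ∈ fan ↔ ∃ z t, 0 ≤ t ∧ t ≤ height z ∧ q = conePt (z, t) := by
  constructor
  · rintro ⟨⟨z, t⟩, h, rfl⟩
    have := mem_region.1 h
    exact ⟨z, t, this.1, this.2, rfl⟩
  · rintro ⟨z, t, h1, h2, rfl⟩
    exact ⟨(z, t), mem_region.2 ⟨h1, h2⟩, rfl⟩

lemma conePt_zero (z : ℕ → Bool) : conePt (z, 0) = fanVertex := by simp [conePt, fanVertex]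

lemma vertex_mem_fan : fanVertex ∈ fan :=
  mem_fan.2 ⟨zeroSeq, 0, le_rfl, (height_pos _).le, (conePt_zero _).symm⟩

lemma isPreconnected_ray (z : ℕ → Bool) {I : Set ℝ} (hI : I.OrdConnected)
    (hs : I ⊆ Icc 0 (height z)) :
    IsPreconnected {x : fan | ∃ t ∈ I, (x : ℝ × ℝ) = conePt (z, t)} := by
  apply isPreconnected_of_val
  have : Subtype.val '' {x : fan | ∃ t ∈ I, (x : ℝ × ℝ) = conePt (z, t)} =
      (fun t => conePt (z, t)) '' I := by
    ext q
    constructor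
    · rintro ⟨x, ⟨t, h1, h2⟩, rfl⟩
      exact ⟨t, h1, h2.symm⟩
    · rintro ⟨t, h1, rfl⟩
      exact ⟨⟨_, mem_fan.2 ⟨z, t, (hs h1).1, (hs h1).2, rfl⟩⟩, ⟨t, h1, rfl⟩, rfl⟩
  rw [this]
  refine hI.isPreconnected.image _ (Continuous.continuousOn ?_)
  exact continuous_conePt.comp (by fun_prop)

/-- The vertex, as a point of the fan. -/
def vtx : fan := ⟨fanVertex, vertex_mem_fan⟩

lemma vtx_mem_ray (z : ℕ → Bool) {t : ℝ} (ht : 0 ≤ t) :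
    vtx ∈ {x : fan | ∃ s ∈ Icc 0 t, (x : ℝ × ℝ) = conePt (z, s)} :=
  ⟨0, ⟨le_rfl, ht⟩, (conePt_zero z).symm⟩

lemma isArc_leg (z : ℕ → Bool) :
    IsArc ((fun t => conePt (z, t)) '' Icc 0 (height z)) fanVertex (conePt (z, height z)) := by
  have hpos := height_pos z
  let f : Icc (0:ℝ) 1 → ((fun t => conePt (z, t)) '' Icc 0 (height z)) := fun s =>
    ⟨conePt (z, s * height z), s * height z,
      ⟨mul_nonneg s.2.1 hpos.le, mul_le_of_le_one_left hpos.le s.2.2⟩, rfl⟩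
  have hf : Continuous f :=
    Continuous.subtype_mk (continuous_conePt.comp (by fun_prop)) _
  have hb : Function.Bijective f := by
    constructor
    · intro s s' h
      have h1 : s.1 * height z = s'.1 * height z := congrArg (fun p => p.1.2) h
      exact Subtype.ext (mul_right_cancel₀ hpos.ne' h1)
    · rintro ⟨_, t, ht, rfl⟩
      refine ⟨⟨t / height z, div_nonneg ht.1 hpos.le, (div_le_one hpos).2 ht.2⟩, ?_⟩
      apply Subtype.ext
      simp only [f]
      rw [div_mul_cancel₀ _ hpos.ne']
  refine ⟨Continuous.homeoOfEquivCompactToT2 (f := Equiv.ofBijective f hb) hf, ?_, ?_⟩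
  · show conePt (z, 0 * height z) = _
    rw [zero_mul, conePt_zero]
  · show conePt (z, 1 * height z) = _
    rw [one_mul]

lemma isSmoothFan_fan : IsSmoothFan fan where
  subset_fan := by
    rintro q hq
    obtain ⟨z, t, h1, h2, rfl⟩ := mem_fan.1 hq
    exact ⟨slope z, slope_mem z, t, ⟨h1, h2.trans (height_le z)⟩, rfl⟩
  isCompact := isCompact_region.image continuous_conePt
  isConnected := by
    refine ⟨⟨_, vertex_mem_fan⟩, ?_⟩
    have : IsPreconnected (univ : Set fan) := by
      refine isPreconnected_of_forall vtx fun x _ => ?_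
      obtain ⟨z, t, h1, h2, h3⟩ := mem_fan.1 x.2
      exact ⟨_, subset_univ _, vtx_mem_ray z h1, ⟨t, ⟨h1, le_rfl⟩, h3⟩,
        isPreconnected_ray z ordConnected_Icc (Icc_subset_Icc le_rfl h2)⟩
    have h2 := this.image _ continuous_subtype_val.continuousOn
    rwa [image_univ, Subtype.range_coe] at h2
  nondegenerate := by
    refine ⟨_, vertex_mem_fan, conePt (zeroSeq, height zeroSeq),
      mem_fan.2 ⟨_, _, (height_pos _).le, le_rfl, rfl⟩, fun h => ?_⟩
    exact (height_pos zeroSeq).ne (congrArg Prod.snd h)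
  vertex_mem := vertex_mem_fan
  vertex_order := by
    refine ⟨fun i => (fun t => conePt (oneAt i, t)) '' Icc 0 (height (oneAt i)),
      fun i => ?_, fun i => ⟨_, isArc_leg _⟩, fun i j hij => ?_⟩
    · rintro _ ⟨t, ht, rfl⟩
      exact mem_fan.2 ⟨_, t, ht.1, ht.2, rfl⟩
    · apply Subset.antisymm
      · rintro _ ⟨⟨t, ht, rfl⟩, ⟨t', ht', h⟩⟩
        rcases ht.1.eq_or_lt with h0 | h0
        · simp only [← h0, conePt_zero]; rfl
        · exfalso
          have h1 := (conePt_inj h0 h.symm).1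
          exact hij (Fin.ext (headAt_unique (oneAt_mem i) (h1 ▸ oneAt_mem j)))
      · rintro _ rfl
        exact ⟨⟨0, ⟨le_rfl, (height_pos _).le⟩, conePt_zero _⟩,
          ⟨0, ⟨le_rfl, (height_pos _).le⟩, conePt_zero _⟩⟩

lemma ne_vtx_iff {x : fan} : x ≠ vtx ↔ 0 < (x : ℝ × ℝ).2 := by
  obtain ⟨z, t, h1, h2, h3⟩ := mem_fan.1 x.2
  constructor
  · intro h
    rcases h1.eq_or_lt with h0 | h0
    · exact absurd (Subtype.ext (by rw [h3, ← h0, conePt_zero]; rfl)) h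
    · rw [h3]; exact h0
  · rintro h rfl
    exact lt_irrefl _ h

lemma fan_slope_mem {x : fan} (hx : x ≠ vtx) : (x : ℝ × ℝ).1 / (x : ℝ × ℝ).2 ∈ cantorSet := by
  obtain ⟨z, t, h1, h2, h3⟩ := mem_fan.1 x.2
  have h0 := ne_vtx_iff.1 hx
  rw [h3] at h0 ⊢
  simp only [conePt] at h0 ⊢
  rw [mul_div_cancel_left₀ _ h0.ne']
  exact slope_mem z

/-- The direction of a point of the fan other than the vertex. -/
def direction (x : {x : fan // x ≠ vtx}) : ℕ → Bool :=
  cantorSetHomeomorphNatToBool ⟨_, fan_slope_mem x.2⟩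

lemma direction_eq {x : {x : fan // x ≠ vtx}} {z : ℕ → Bool} {t : ℝ}
    (h : (x : ℝ × ℝ) = conePt (z, t)) : direction x = z := by
  have h0 := ne_vtx_iff.1 x.2
  unfold direction
  rw [← cantorSetHomeomorphNatToBool.apply_symm_apply z]
  congr 1
  apply Subtype.ext
  show (x : ℝ × ℝ).1 / (x : ℝ × ℝ).2 = slope z
  rw [h] at h0 ⊢
  simp only [conePt] at h0 ⊢
  rw [mul_div_cancel_left₀ _ h0.ne']

lemma continuous_direction : Continuous direction := by
  refine cantorSetHomeomorphNatToBool.continuous.comp (Continuous.subtype_mk ?_ _)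
  refine Continuous.div (by fun_prop) (by fun_prop) fun x => (ne_vtx_iff.1 x.2).ne'

/-- The fan without its vertex is homeomorphic to the disjoint union of its legs. -/
def legsHomeo : Legs ≃ₜ {x : fan // x ≠ vtx} where
  toFun y := ⟨⟨conePt y.1, mem_fan.2 ⟨y.1.1, y.1.2, y.2.1.le, y.2.2, rfl⟩⟩,
    ne_vtx_iff.2 y.2.1⟩
  invFun x := ⟨(direction x, (x : ℝ × ℝ).2), ne_vtx_iff.1 x.2, by
    obtain ⟨z, t, h1, h2, h3⟩ := mem_fan.1 x.1.2
    rw [direction_eq h3, h3]; exact h2⟩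
  left_inv y := legs_ext (direction_eq (z := y.1.1) (t := y.1.2) rfl) rfl
  right_inv x := by
    obtain ⟨z, t, h1, h2, h3⟩ := mem_fan.1 x.1.2
    apply Subtype.ext
    apply Subtype.ext
    show conePt (direction x, (x : ℝ × ℝ).2) = (x : ℝ × ℝ)
    rw [direction_eq h3, h3]
    rfl
  continuous_toFun := by
    have := continuous_conePt
    refine Continuous.subtype_mk (Continuous.subtype_mk (by fun_prop) _) _
  continuous_invFun := by
    have := continuous_direction
    refine Continuous.subtype_mk (by fun_prop) _

/-! ### The vertex is fixed -/

/-- The complement of `x` can be split into three nonempty relatively open pieces. -/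
def ThreeCut {X : Type*} [TopologicalSpace X] (x : X) : Prop :=
  ∃ f : {y : X // y ≠ x} → Fin 3, Continuous f ∧ Function.Surjective f

lemma ThreeCut.map {X : Type*} [TopologicalSpace X] (h : X ≃ₜ X) {x : X} (hx : ThreeCut x) :
    ThreeCut (h x) := by
  obtain ⟨f, hf, hs⟩ := hx
  let e : {y : X // y ≠ x} ≃ₜ {y : X // y ≠ h x} :=
    h.subtype fun y => not_congr h.injective.eq_iff.symm
  exact ⟨f ∘ e.symm, hf.comp e.symm.continuous, hs.comp e.symm.surjective⟩

lemma threeCut_vtx : ThreeCut vtx := by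
  let g : (ℕ → Bool) → Fin 3 := fun z => if z 0 then 0 else if z 1 then 1 else 2
  have hg : Continuous g := by
    have : g = (fun p : Bool × Bool => if p.1 then (0 : Fin 3) else if p.2 then 1 else 2) ∘
        fun z => (z 0, z 1) := rfl
    rw [this]
    exact continuous_of_discreteTopology.comp (by fun_prop)
  refine ⟨g ∘ direction, hg.comp continuous_direction, ?_⟩
  have hd : ∀ z, ∃ x, direction x = z := fun z =>
    ⟨legsHomeo (tip z), direction_eq (z := z) (t := height z) rfl⟩
  intro i
  fin_cases i
  · obtain ⟨x, hx⟩ := hd (oneAt 0)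
    exact ⟨x, by simp [hx, g, oneAt]⟩
  · obtain ⟨x, hx⟩ := hd (oneAt 1)
    exact ⟨x, by simp [hx, g, oneAt]⟩
  · obtain ⟨x, hx⟩ := hd zeroSeq
    exact ⟨x, by simp [hx, g, zeroSeq]⟩

/-- Removing a point other than the vertex leaves the union of two connected sets: the part
beyond the point, and the rest. -/
lemma not_threeCut {x : fan} (hx : x ≠ vtx) : ¬ ThreeCut x := by
  rintro ⟨f, hf, hs⟩
  obtain ⟨z₀, t₀, h1, h2, h3⟩ := mem_fan.1 x.2
  have h0 : 0 < t₀ := by have := ne_vtx_iff.1 hx; rwa [h3] at this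
  let A : Set fan := {y | ∃ z t, 0 ≤ t ∧ t ≤ height z ∧ (z = z₀ → t < t₀) ∧
    (y : ℝ × ℝ) = conePt (z, t)}
  let B : Set fan := {y | ∃ t ∈ Ioc t₀ (height z₀), (y : ℝ × ℝ) = conePt (z₀, t)}
  have hA : IsPreconnected A := by
    refine isPreconnected_of_forall vtx fun y hy => ?_
    obtain ⟨z, t, k1, k2, k3, k4⟩ := hy
    refine ⟨_, ?_, vtx_mem_ray z k1, ⟨t, ⟨k1, le_rfl⟩, k4⟩,
        isPreconnected_ray z ordConnected_Icc (Icc_subset_Icc le_rfl k2)⟩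
    rintro w ⟨s, hs, hw⟩
    exact ⟨z, s, hs.1, hs.2.trans k2, fun hz => hs.2.trans_lt (k3 hz), hw⟩
  have hB : IsPreconnected B :=
    isPreconnected_ray z₀ ordConnected_Ioc fun s hs => ⟨h1.trans hs.1.le, hs.2⟩
  have hAx : A ⊆ {y | y ≠ x} := by
    rintro y ⟨z, t, -, -, k3, k4⟩ rfl
    obtain ⟨rfl, rfl⟩ := conePt_inj h0 (h3.symm.trans k4)
    exact lt_irrefl _ (k3 rfl)
  have hBx : B ⊆ {y | y ≠ x} := by
    rintro y ⟨t, ht, k4⟩ rfl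
    obtain ⟨-, rfl⟩ := conePt_inj h0 (h3.symm.trans k4)
    exact lt_irrefl _ ht.1
  have hcover : ∀ y : {y : fan // y ≠ x}, y.1 ∈ A ∨ y.1 ∈ B := by
    intro y
    obtain ⟨z, t, k1, k2, k3⟩ := mem_fan.1 y.1.2
    by_cases hz : z = z₀
    · subst hz
      rcases lt_trichotomy t t₀ with hl | hl | hl
      · exact Or.inl ⟨z, t, k1, k2, fun _ => hl, k3⟩
      · exact absurd (Subtype.ext (by rw [k3, h3, hl])) y.2
      · exact Or.inr ⟨t, ⟨hl, k2⟩, k3⟩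
    · exact Or.inl ⟨z, t, k1, k2, fun h => absurd h hz, k3⟩
  have hconst : ∀ S : Set fan, IsPreconnected S → S ⊆ {y | y ≠ x} →
      ∀ y y' : {y : fan // y ≠ x}, y.1 ∈ S → y'.1 ∈ S → f y = f y' := by
    intro S hS hSx y y' hy hy'
    have hS' : IsPreconnected ((Subtype.val : {y : fan // y ≠ x} → fan) ⁻¹' S) := by
      apply isPreconnected_of_val
      rwa [image_preimage_eq_of_subset fun w hw => ⟨⟨w, hSx hw⟩, rfl⟩]
    exact (hS'.image f hf.continuousOn).subsingleton ⟨y, hy, rfl⟩ ⟨y', hy', rfl⟩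
  obtain ⟨y0, e0⟩ := hs 0
  obtain ⟨y1, e1⟩ := hs 1
  obtain ⟨y2, e2⟩ := hs 2
  -- Two of three points lie in the same connected set.
  have hA' := hconst A hA hAx
  have hB' := hconst B hB hBx
  have n01 : f y0 ≠ f y1 := by rw [e0, e1]; decide
  have n02 : f y0 ≠ f y2 := by rw [e0, e2]; decide
  have n12 : f y1 ≠ f y2 := by rw [e1, e2]; decide
  rcases hcover y0 with c0 | c0 <;> rcases hcover y1 with c1 | c1 <;>
    rcases hcover y2 with c2 | c2 <;>
    first
    | exact n01 (hA' _ _ c0 c1)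
    | exact n01 (hB' _ _ c0 c1)
    | exact n02 (hA' _ _ c0 c2)
    | exact n02 (hB' _ _ c0 c2)
    | exact n12 (hA' _ _ c1 c2)
    | exact n12 (hB' _ _ c1 c2)

lemma homeo_vtx (h : fan ≃ₜ fan) : h vtx = vtx := by
  by_contra hne
  exact not_threeCut hne (threeCut_vtx.map h)

/-! ### Counting orbits -/

/-- The point at height `t` on the leg of the fan in direction `zeroSeq`. -/
def rigidPt (t : Ioo (0:ℝ) 1) : fan := (legsHomeo (onZero t)).1

lemma rigidPt_injective : Function.Injective rigidPt := fun _ _ h =>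
  Subtype.ext (congrArg (fun x : fan => (x : ℝ × ℝ).2) h)

lemma homeo_rigidPt (h : fan ≃ₜ fan) (t : Ioo (0:ℝ) 1) : h (rigidPt t) = rigidPt t := by
  let e : {y : fan // y ≠ vtx} ≃ₜ {y : fan // y ≠ vtx} :=
    h.subtype fun y => not_congr (by
      constructor
      · rintro rfl; exact homeo_vtx h
      · intro hy; exact h.injective (hy.trans (homeo_vtx h).symm))
  have h1 := homeo_fixes ((legsHomeo.trans e).trans legsHomeo.symm) t
  have h2 : e (legsHomeo (onZero t)) = legsHomeo (onZero t) := by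
    apply legsHomeo.symm.injective
    rw [legsHomeo.symm_apply_apply]
    exact h1
  exact congrArg Subtype.val h2

/-- There exists a smooth fan whose homogeneity degree is `𝔠`: the action
of the group of self-homeomorphisms has exactly continuum many orbits. -/
theorem exists_fan_homogeneity_degree_continuum :
    ∃ X : Set (ℝ × ℝ), IsSmoothFan X ∧
      Cardinal.mk ↥(Set.range fun x : X => {y : X | ∃ h : X ≃ₜ X, h x = y}) =
        Cardinal.continuum := by
  refine ⟨fan, isSmoothFan_fan, le_antisymm ?_ ?_⟩
  · calc _ ≤ Cardinal.mk fan := Cardinal.mk_range_le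
      _ ≤ Cardinal.mk (ℝ × ℝ) := Cardinal.mk_set_le fan
      _ = Cardinal.continuum := by simp [Cardinal.mk_real]
  · rw [← Cardinal.mk_Ioo_real (zero_lt_one (α := ℝ))]
    -- The points of the rigid leg are fixed, hence distinct ones have distinct orbits.
    refine Cardinal.mk_le_of_injective (f := fun t : Ioo (0:ℝ) 1 =>
      ⟨{y : fan | ∃ h : fan ≃ₜ fan, h (rigidPt t) = y}, rigidPt t, rfl⟩) fun s t hst => ?_
    have h1 : {y : fan | ∃ h : fan ≃ₜ fan, h (rigidPt s) = y} =
        {y : fan | ∃ h : fan ≃ₜ fan, h (rigidPt t) = y} := congrArg Subtype.val hst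
    have h2 : rigidPt s ∈ {y : fan | ∃ h : fan ≃ₜ fan, h (rigidPt s) = y} :=
      ⟨Homeomorph.refl fan, rfl⟩
    rw [h1] at h2
    obtain ⟨h, hh⟩ := h2
    exact rigidPt_injective (hh.symm.trans (homeo_rigidPt h t))

end SmoothFanPaper
end
end

section
/- Let X be a smooth fan and let 𝒦 = {K_n : n ∈ ω} be a countably infinite set of compact subsets of (0,1), no two of which are order isomorphic. Then there exists a 𝒦-fan X' such that X embeds in X' and, identifying X with its image in X', E(X) ⊆ E(X') and X ⊆ cl(E(X') ∖ E(X)). Moreover, X' can be chosen so that additionally any one of the following holds: (1) (when every K_n is nonempty) E(X') ∖ E(X) is homeomorphic to the natural numbers (countably infinite discrete) and E(X') ∖ E(X) = E_𝒦, where E_𝒦 is the witnessing set of the 𝒦-fan; or (2) E(X') ∖ E(X) is homeomorphic to the space of irrational numbers; or (3) E(X') ∖ E(X) is homeomorphic to the product of the Cantor set with the natural numbers. -/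
/-!
The fan `X'` is `X` with a tree of small clusters of legs added to it.

A subfan of the Cantor fan is coded by the height function of its legs: if `Y` is compact and embeds
in the Cantor set, and `Φ : Y → [0,1]` has closed superlevel sets (is upper semicontinuous), then
the cone over the region under the graph of `Φ` is a smooth fan whose endpoints are the points
`(y, Φ y)` with `0 < Φ y` (`endpoints_fanSet`, `isSmoothFan_fanSet`). Every smooth fan `X` arises
from such a `φ` on the Cantor set (`IsSmoothFan.exists_height`).

Cluster `0` is `X` itself. Each later cluster `n + 1` is a family of legs of nearly equal height,
whose set of endpoints is a copy of a space `Γ`. It is attached to a point of a leg of an earlier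
cluster, its parent, meaning that its legs run close to that leg and its height is proportional to
that of the point. In the compact space `Pos` of sequences of places, the position of a leg records
the clusters passed through on the way from the root, so that clusters of large index lie close to
their points of attachment (`leg`). Heights along a branch decrease fast (`ht`, `ha`), so that
endpoints can accumulate below the tips of cluster `n` only at limits of attaching points on cluster
`n`; this gives the semicontinuity of the height function (`Sys.isClosed_le_Φ`).

The attaching points are dense in a prescribed set (`spots`). On cluster `0` this is all of `X` apart
from the vertex, whence `X ⊆ cl(E(X') ∖ E(X))`. On cluster `n + 1` one leg, that of `M.pt`, is
selected: there the attaching points accumulate exactly at a shrunken copy of `K n`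
(`Sys.mem_K_of_mem_closure`, `Sys.spot_mem_closure`), and shrinking does not affect the order type
(`orderIsomorphic_scale`). The other legs of the cluster get attaching points on an initial segment,
whose length is bounded by the distance to the selected leg and so does not disturb that leg. The tips
of the selected legs form the witnessing set. On any other leg the closure of the endpoints contains
a neighborhood of the vertex, which no compact subset of `(0,1)` can match (`not_orderIsomorphic`);
since every cluster contains a point of the witnessing set, these limits are also limits of the
witnessing set.

The new endpoints form a space homeomorphic to `ℕ × Γ` (`Sys.isEmbedding_ep`), and the three cases
come from three models for `Γ`. A point gives `ℕ`; then `K n ≠ ∅` is needed for cluster `n + 1` to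
have attaching points at all. The Cantor set gives `ℕ × C`. The Baire space, realized as the graph of
an upper semicontinuous function over a subset of the Cantor set (`baireModel`), gives a space
homeomorphic to the irrationals, by continued fractions (`nonempty_baire_homeo_irrational`).
-/

open Set Topology

noncomputable section

namespace SmoothFanPaper

/-- The image of the endpoint set of `X` inside `X'` under the map `g : X → X'`,
viewed as a subset of the plane. -/
def imageOfEndpoints (X X' : Set (ℝ × ℝ)) (g : ↥X → ↥X') : Set (ℝ × ℝ) :=
  (fun x : X => ((g x : X') : ℝ × ℝ)) '' {x : X | (x : ℝ × ℝ) ∈ Endpoints X}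

/-- `X'` is a `𝒦`-fan in which `X` embeds via `g`, with (the image of) `E(X)` contained in
`E(X')`. -/
structure IsKFanExtension (K : ℕ → Set ℝ) (X X' : Set (ℝ × ℝ)) (e : ℕ → ℝ × ℝ)
    (g : ↥X → ↥X') : Prop where
  kfan : IsKFan K X' e
  embedding : Topology.IsEmbedding g
  endpoints_subset : ∀ x : X, (x : ℝ × ℝ) ∈ Endpoints X →
    ((g x : X') : ℝ × ℝ) ∈ Endpoints X'


/-! ### Fans in the plane coded by height functions -/

set_option linter.unusedSectionVars false
set_option linter.unusedVariables false

section Fans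

variable {Y : Type*} [TopologicalSpace Y]

/-- The point at height `q.2` on the leg of direction `ι q.1`. -/
def fanPt (ι : Y → ℝ) (q : Y × ℝ) : ℝ × ℝ := (q.2 * ι q.1, q.2)

/-- The union of the legs in the directions `ι y`, where the leg of `y` has height `Φ y`. -/
def fanSet (ι : Y → ℝ) (Φ : Y → ℝ) : Set (ℝ × ℝ) :=
  {p | ∃ y t, 0 ≤ t ∧ t ≤ Φ y ∧ p = fanPt ι (y, t)}

/-- The region under the graph of `Φ`. -/
def hypo (Φ : Y → ℝ) : Set (Y × ℝ) := {q | 0 ≤ q.2 ∧ q.2 ≤ Φ q.1}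

lemma fanSet_eq_image (ι : Y → ℝ) (Φ : Y → ℝ) : fanSet ι Φ = fanPt ι '' hypo Φ := by
  ext p
  constructor
  · rintro ⟨y, t, h0, h1, rfl⟩
    exact ⟨(y, t), ⟨h0, h1⟩, rfl⟩
  · rintro ⟨⟨y, t⟩, ⟨h0, h1⟩, rfl⟩
    exact ⟨y, t, h0, h1, rfl⟩

lemma isTotallyDisconnected_cantorSet : IsTotallyDisconnected cantorSet := by
  have : TotallyDisconnectedSpace cantorSet :=
    cantorSetHomeomorphNatToBool.symm.totallyDisconnectedSpace
  have h := (IsEmbedding.subtypeVal (p := fun x => x ∈ cantorSet)).isTotallyDisconnected_range.2 this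
  simpa using h

lemma cantor_mem_Icc {x : ℝ} (hx : x ∈ cantorSet) : 0 ≤ x ∧ x ≤ 1 :=
  cantorSet_subset_unitInterval hx

@[simp] lemma fanPt_snd (ι : Y → ℝ) (q : Y × ℝ) : (fanPt ι q).2 = q.2 := rfl

lemma fanPt_zero (ι : Y → ℝ) (y : Y) : fanPt ι (y, 0) = fanVertex := by
  simp [fanPt, fanVertex]

lemma continuous_fanPt {ι : Y → ℝ} (hι : Continuous ι) : Continuous (fanPt ι) := by
  unfold fanPt; fun_prop

lemma fanPt_inj {ι : Y → ℝ} (hι : Function.Injective ι) {q r : Y × ℝ} (h : fanPt ι q = fanPt ι r)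
    (hq : 0 < q.2) : q = r := by
  have h2 : q.2 = r.2 := by simpa using congrArg Prod.snd h
  have h1 : q.2 * ι q.1 = r.2 * ι r.1 := congrArg Prod.fst h
  rw [← h2] at h1
  exact Prod.ext (hι (mul_left_cancel₀ hq.ne' h1)) h2

/-- Away from the vertex the parametrization `fanPt ι` is a topological embedding. -/
lemma isEmbedding_fanPt {ι : Y → ℝ} (hι : IsEmbedding ι) {A : Type*} [TopologicalSpace A]
    {f : A → Y × ℝ} (hf : IsEmbedding f) (hpos : ∀ a, 0 < (f a).2) :
    IsEmbedding (fun a => fanPt ι (f a)) := by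
  have e1 : IsEmbedding (fun a => (Prod.map ι id (f a) : ℝ × ℝ)) :=
    (hι.prodMap IsEmbedding.id).comp hf
  refine ⟨⟨?_⟩, fun a b h => hf.injective (fanPt_inj hι.injective h (hpos a))⟩
  apply le_antisymm
  · exact continuous_iff_le_induced.1 ((continuous_fanPt hι.continuous).comp hf.continuous)
  · rw [e1.eq_induced]
    rw [← continuous_iff_le_induced]
    have : (fun a => (Prod.map ι id (f a) : ℝ × ℝ))
        = fun a => ((fanPt ι (f a)).1 / (fanPt ι (f a)).2, (fanPt ι (f a)).2) := by
      funext a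
      have := (hpos a).ne'
      simp only [fanPt, Prod.map, id]
      rw [mul_div_cancel_left₀ _ this]
    rw [this]
    let _ : TopologicalSpace A := TopologicalSpace.induced (fun a => fanPt ι (f a)) inferInstance
    have hc : Continuous (fun a => fanPt ι (f a)) := continuous_induced_dom
    exact ((continuous_fst.comp hc).div (continuous_snd.comp hc) (fun a => (hpos a).ne')).prodMk
      (continuous_snd.comp hc)

lemma mem_closure_fanPt {ι : Y → ℝ} (hι : IsEmbedding ι) {S : Set (Y × ℝ)} {q : Y × ℝ}
    (hq : 0 < q.2) : fanPt ι q ∈ closure (fanPt ι '' S) ↔ q ∈ closure S := by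
  constructor
  · intro h
    rw [mem_closure_iff] at h ⊢
    intro o ho hqo
    obtain ⟨u, v, hu, hv, hqu, hqv, huv⟩ := isOpen_prod_iff.1 ho q.1 q.2 hqo
    obtain ⟨O, hO, rfl⟩ := hι.isOpen_iff.1 hu
    have hcont : ContinuousOn (fun p : ℝ × ℝ => p.1 / p.2) {p | 0 < p.2} :=
      continuousOn_fst.div continuousOn_snd (fun p hp => ne_of_gt hp)
    have hopen : IsOpen ({p : ℝ × ℝ | 0 < p.2} ∩ (fun p : ℝ × ℝ => p.1 / p.2) ⁻¹' O) :=
      hcont.isOpen_inter_preimage (isOpen_lt continuous_const continuous_snd) hO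
    have hopen2 : IsOpen (({p : ℝ × ℝ | 0 < p.2} ∩ (fun p : ℝ × ℝ => p.1 / p.2) ⁻¹' O) ∩
        Prod.snd ⁻¹' v) := hopen.inter (hv.preimage continuous_snd)
    obtain ⟨p, ⟨⟨hp0, hpO⟩, hpv⟩, ⟨r, hr, rfl⟩⟩ := h _ hopen2
      ⟨⟨hq, by simpa [fanPt, mul_div_cancel_left₀ _ hq.ne'] using hqu⟩, hqv⟩
    refine ⟨r, huv ⟨?_, hpv⟩, hr⟩
    have hp0' : 0 < r.2 := hp0
    simpa [fanPt, mul_div_cancel_left₀ _ hp0'.ne'] using hpO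
  · intro h
    exact image_closure_subset_closure_image (continuous_fanPt hι.continuous) ⟨q, h, rfl⟩

lemma isArc_leg_s8 {ι : Y → ℝ} (y : Y) {a b : ℝ} (hab : a ≠ b) :
    IsArc (fanPt ι '' {q | q.1 = y ∧ q.2 ∈ uIcc a b}) (fanPt ι (y, a)) (fanPt ι (y, b)) := by
  let f : Icc (0:ℝ) 1 → ℝ × ℝ := fun s => fanPt ι (y, a + s * (b - a))
  have hf : Continuous f := by simp only [f, fanPt]; fun_prop
  have hinj : Function.Injective f := by
    intro s s' h
    have h2 : a + s * (b - a) = a + s' * (b - a) := congrArg Prod.snd h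
    have : (s : ℝ) = s' := mul_right_cancel₀ (sub_ne_zero.2 hab.symm) (add_left_cancel h2)
    exact Subtype.ext this
  have hr : range f = fanPt ι '' {q | q.1 = y ∧ q.2 ∈ uIcc a b} := by
    ext p
    constructor
    · rintro ⟨s, rfl⟩
      refine ⟨(y, a + s * (b - a)), ⟨rfl, ?_⟩, rfl⟩
      rw [← segment_eq_uIcc, segment_eq_image']
      exact ⟨s, s.2, by simp⟩
    · rintro ⟨⟨y', t⟩, ⟨rfl, ht⟩, rfl⟩
      rw [← segment_eq_uIcc, segment_eq_image'] at ht
      obtain ⟨s, hs, rfl⟩ := ht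
      exact ⟨⟨s, hs⟩, by simp [f]⟩
  have hemb : IsEmbedding f := (hf.isClosedEmbedding hinj).isEmbedding
  rw [← hr]
  exact ⟨hemb.toHomeomorph, by simp [f], by simp [f]⟩

/-- An arc of the fan that starts at the top of the leg of `y` contains an upper part of that
leg: near its start, its direction varies continuously in the totally disconnected Cantor set,
hence is constant. -/
lemma arc_from_top {ι : Y → ℝ} (hι : Function.Injective ι) (hC : ∀ y, ι y ∈ cantorSet)
    {Φ : Y → ℝ} {y : Y} (hy : 0 < Φ y) {A : Set (ℝ × ℝ)} (hA : A ⊆ fanSet ι Φ) {b : ℝ × ℝ}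
    (harc : IsArc A (fanPt ι (y, Φ y)) b) :
    ∃ τ < Φ y, ∀ s ∈ Icc τ (Φ y), fanPt ι (y, s) ∈ A := by
  obtain ⟨h, h0, -⟩ := harc
  let f : ℝ → ℝ × ℝ := fun s => h (projIcc 0 1 zero_le_one s)
  have hf : Continuous f := continuous_subtype_val.comp (h.continuous.comp continuous_projIcc)
  have hfA : ∀ s, f s ∈ A := fun s => (h _).2
  have hf0 : f 0 = fanPt ι (y, Φ y) := by
    simp only [f]; rw [projIcc_left]; exact h0
  have hpos0 : 0 < (f 0).2 := by rw [hf0]; exact hy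
  have hev : ∀ᶠ s in 𝓝 (0:ℝ), 0 < (f s).2 :=
    (continuous_snd.comp hf).continuousAt.eventually (lt_mem_nhds hpos0)
  obtain ⟨δ, hδ, hball⟩ := Metric.eventually_nhds_iff.1 hev
  set ε := min (δ / 2) 1 with hε
  have hε0 : 0 < ε := by positivity
  have hε1 : ε ≤ 1 := min_le_right _ _
  have hpos : ∀ s ∈ Icc 0 ε, 0 < (f s).2 := by
    intro s hs
    apply hball
    rw [Real.dist_eq, sub_zero, abs_of_nonneg hs.1]
    have : ε ≤ δ / 2 := min_le_left _ _
    linarith [hs.2]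
  have hrat : ContinuousOn (fun s => (f s).1 / (f s).2) (Icc 0 ε) :=
    (continuous_fst.comp hf).continuousOn.div (continuous_snd.comp hf).continuousOn
      (fun s hs => (hpos s hs).ne')
  have hform : ∀ s ∈ Icc 0 ε, ∃ y' t, 0 < t ∧ t ≤ Φ y' ∧ f s = fanPt ι (y', t) ∧
      (f s).1 / (f s).2 = ι y' := by
    intro s hs
    obtain ⟨y', t, ht0, ht1, hft⟩ := hA (hfA s)
    have : 0 < t := by have := hpos s hs; rw [hft] at this; exact this
    refine ⟨y', t, this, ht1, hft, ?_⟩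
    rw [hft]; simp [fanPt, mul_div_cancel_left₀ _ this.ne']
  have hsub : ((fun s => (f s).1 / (f s).2) '' Icc 0 ε).Subsingleton := by
    apply isTotallyDisconnected_cantorSet _ _ (isPreconnected_Icc.image _ hrat)
    rintro _ ⟨s, hs, rfl⟩
    obtain ⟨y', t, -, -, -, h5⟩ := hform s hs
    simp only [h5]; exact hC y'
  have h0mem : (0:ℝ) ∈ Icc 0 ε := ⟨le_rfl, hε0.le⟩
  have hconst : ∀ s ∈ Icc 0 ε, ∃ t, t ≤ Φ y ∧ f s = fanPt ι (y, t) := by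
    intro s hs
    obtain ⟨y', t, ht0, ht1, hft, h5⟩ := hform s hs
    have := hsub ⟨s, hs, rfl⟩ ⟨0, h0mem, rfl⟩
    simp only [h5] at this
    rw [hf0] at this
    simp only [fanPt, mul_div_cancel_left₀ _ hy.ne'] at this
    have hyy := hι this
    subst hyy
    exact ⟨t, ht1, hft⟩
  have hεmem : ε ∈ Icc 0 ε := ⟨hε0.le, le_rfl⟩
  obtain ⟨τ, hτ, hfτ⟩ := hconst ε hεmem
  refine ⟨τ, lt_of_le_of_ne hτ ?_, ?_⟩
  · rintro rfl
    have : f ε = f 0 := by rw [hfτ, hf0]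
    have h2 := h.injective (Subtype.ext this)
    rw [projIcc_of_mem zero_le_one ⟨hε0.le, hε1⟩, projIcc_left] at h2
    have := congrArg Subtype.val h2
    simp at this
    exact hε0.ne' this
  · intro s hs
    have hivt := intermediate_value_Icc' hε0.le (continuous_snd.comp hf).continuousOn (f := fun s => (f s).2)
    have h1 : (f ε).2 = τ := by rw [hfτ]; rfl
    have h2 : (f 0).2 = Φ y := by rw [hf0]; rfl
    simp only [h1, h2] at hivt
    obtain ⟨u, hu, hus⟩ := hivt hs
    obtain ⟨t, -, hft⟩ := hconst u hu
    have : t = s := by rw [← hus]; simp only [hft]; rfl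
    rw [← this, ← hft]
    exact hfA u

lemma orderAtLeast_two {α : Type*} [TopologicalSpace α] {X A B : Set α} {x a b : α}
    (hA : A ⊆ X) (hB : B ⊆ X) (ha : IsArc A x a) (hb : IsArc B x b) (hAB : A ∩ B = {x}) :
    OrderAtLeast X x 2 := by
  refine ⟨![A, B], ?_, ?_, ?_⟩
  · intro i; fin_cases i <;> simpa
  · intro i; fin_cases i
    · exact ⟨a, ha⟩
    · exact ⟨b, hb⟩
  · intro i j hij
    fin_cases i <;> fin_cases j <;> simp at hij ⊢
    · exact hAB
    · rw [inter_comm]; exact hAB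

lemma leg_subset_fanSet {ι : Y → ℝ} {Φ : Y → ℝ} {y : Y} {a b : ℝ} (ha : 0 ≤ a) (hb : 0 ≤ b)
    (ha' : a ≤ Φ y) (hb' : b ≤ Φ y) :
    fanPt ι '' {q | q.1 = y ∧ q.2 ∈ uIcc a b} ⊆ fanSet ι Φ := by
  rintro _ ⟨⟨y', t⟩, ⟨rfl, ht⟩, rfl⟩
  exact ⟨_, t, le_trans (le_inf ha hb) ht.1, le_trans ht.2 (sup_le ha' hb'), rfl⟩

lemma vertex_orderAtLeast_two {ι : Y → ℝ} (hι : Function.Injective ι) {Φ : Y → ℝ} {y z : Y}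
    (hyz : y ≠ z) (hy : 0 < Φ y) (hz : 0 < Φ z) : OrderAtLeast (fanSet ι Φ) fanVertex 2 := by
  have a1 := isArc_leg_s8 (ι := ι) y hy.ne
  have a2 := isArc_leg_s8 (ι := ι) z hz.ne
  rw [fanPt_zero] at a1 a2
  refine orderAtLeast_two (leg_subset_fanSet le_rfl hy.le hy.le le_rfl)
    (leg_subset_fanSet le_rfl hz.le hz.le le_rfl) a1 a2 ?_
  apply Subset.antisymm
  · rintro p ⟨⟨⟨y1, t1⟩, ⟨rfl, ht1⟩, rfl⟩, ⟨⟨y2, t2⟩, ⟨rfl, ht2⟩, h⟩⟩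
    simp only at *
    rw [uIcc_of_le hy.le] at ht1
    rcases ht1.1.eq_or_lt with h0 | h0
    · rw [← h0]; exact fanPt_zero ι y1
    · exact absurd (congrArg Prod.fst (fanPt_inj hι h.symm h0)) hyz
  · rintro p rfl
    exact ⟨⟨(y, 0), ⟨rfl, left_mem_uIcc⟩, fanPt_zero ι y⟩,
      ⟨(z, 0), ⟨rfl, left_mem_uIcc⟩, fanPt_zero ι z⟩⟩

/-- The endpoints of a fan are exactly the tops of its nontrivial legs. -/
lemma endpoints_fanSet {ι : Y → ℝ} (hι : Function.Injective ι) (hC : ∀ y, ι y ∈ cantorSet)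
    {Φ : Y → ℝ} (hv : OrderAtLeast (fanSet ι Φ) fanVertex 2) :
    Endpoints (fanSet ι Φ) = fanPt ι '' {q | 0 < q.2 ∧ q.2 = Φ q.1} := by
  apply Subset.antisymm
  · rintro p ⟨⟨y, t, h0, h1, rfl⟩, -, h3⟩
    rcases h0.eq_or_lt with h0 | h0
    · rw [← h0, fanPt_zero] at h3; exact absurd hv h3
    rcases h1.eq_or_lt with h1 | h1
    · exact ⟨(y, t), ⟨h0, h1⟩, rfl⟩
    exfalso
    apply h3
    refine orderAtLeast_two (leg_subset_fanSet h0.le le_rfl h1.le (h0.trans h1).le)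
      (leg_subset_fanSet h0.le (h0.trans h1).le h1.le le_rfl) (isArc_leg_s8 y h0.ne')
      (isArc_leg_s8 y h1.ne) ?_
    apply Subset.antisymm
    · rintro p ⟨⟨⟨y1, t1⟩, ⟨rfl, ht1⟩, rfl⟩, ⟨⟨y2, t2⟩, ⟨rfl, ht2⟩, h⟩⟩
      rw [uIcc_of_ge h0.le] at ht1
      rw [uIcc_of_le h1.le] at ht2
      have : t2 = t1 := congrArg Prod.snd h
      subst this
      have : t2 = t := le_antisymm ht1.2 ht2.1
      subst this; rfl
    · rintro p rfl
      exact ⟨⟨(y, t), ⟨rfl, left_mem_uIcc⟩, rfl⟩, ⟨(y, t), ⟨rfl, left_mem_uIcc⟩, rfl⟩⟩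
  · rintro _ ⟨⟨y, t⟩, ⟨h0, h1⟩, rfl⟩
    simp only at h0 h1
    subst h1
    refine ⟨⟨y, _, h0.le, le_rfl, rfl⟩, ?_, ?_⟩
    · refine ⟨fun _ => fanPt ι '' {q | q.1 = y ∧ q.2 ∈ uIcc (Φ y) 0},
        fun _ => leg_subset_fanSet h0.le le_rfl le_rfl h0.le, fun _ => ⟨_, isArc_leg_s8 y h0.ne'⟩, ?_⟩
      intro i j hij
      exact absurd (Subsingleton.elim i j) hij
    · rintro ⟨A, hA, harc, hd⟩
      obtain ⟨b0, h0'⟩ := harc 0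
      obtain ⟨b1, h1'⟩ := harc 1
      obtain ⟨τ0, hτ0, k0⟩ := arc_from_top hι hC h0 (hA 0) h0'
      obtain ⟨τ1, hτ1, k1⟩ := arc_from_top hι hC h0 (hA 1) h1'
      have hm : max τ0 τ1 < Φ y := max_lt hτ0 hτ1
      have : fanPt ι (y, max τ0 τ1) ∈ A 0 ∩ A 1 :=
        ⟨k0 _ ⟨le_max_left _ _, hm.le⟩, k1 _ ⟨le_max_right _ _, hm.le⟩⟩
      rw [hd 0 1 (by decide)] at this
      exact hm.ne (congrArg Prod.snd this)

lemma isClosed_hypo {Φ : Y → ℝ} (h0 : ∀ y, 0 ≤ Φ y) (h : ∀ ε > 0, IsClosed {y | ε ≤ Φ y}) :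
    IsClosed (hypo Φ) := by
  rw [← isOpen_compl_iff, isOpen_iff_mem_nhds]
  rintro ⟨y, t⟩ hq
  by_cases ht : 0 ≤ t
  · have hlt : Φ y < t := by
      by_contra h'; exact hq ⟨ht, not_lt.1 h'⟩
    obtain ⟨s, hs1, hs2⟩ := exists_between hlt
    have ho : IsOpen ({y | s ≤ Φ y}ᶜ) := (h s ((h0 y).trans_lt hs1)).isOpen_compl
    have hU : {y | s ≤ Φ y}ᶜ ∈ 𝓝 y := ho.mem_nhds (by simpa using hs1)
    filter_upwards [prod_mem_nhds hU (lt_mem_nhds hs2)] with p hp hp'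
    have h1 : Φ p.1 < s := not_le.1 hp.1
    have h2 : s < p.2 := hp.2
    exact absurd hp'.2 (not_le.2 (h1.trans h2))
  · have : ∀ᶠ p : Y × ℝ in 𝓝 (y, t), p.2 < 0 :=
      continuous_snd.continuousAt.eventually (gt_mem_nhds (not_le.1 ht))
    filter_upwards [this] with p hp hp'
    exact absurd hp'.1 (not_le.2 hp)

lemma isCompact_hypo [CompactSpace Y] {Φ : Y → ℝ} (h0 : ∀ y, 0 ≤ Φ y) (h1 : ∀ y, Φ y ≤ 1)
    (h : ∀ ε > 0, IsClosed {y | ε ≤ Φ y}) : IsCompact (hypo Φ) :=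
  (isCompact_univ.prod (isCompact_Icc (a := (0:ℝ)) (b := 1))).of_isClosed_subset
    (isClosed_hypo h0 h) (fun q hq => ⟨mem_univ _, hq.1, hq.2.trans (h1 _)⟩)

lemma isSmoothFan_fanSet [CompactSpace Y] {ι : Y → ℝ} (hι : IsEmbedding ι)
    (hC : ∀ y, ι y ∈ cantorSet) {Φ : Y → ℝ} (h0 : ∀ y, 0 ≤ Φ y) (h1 : ∀ y, Φ y ≤ 1)
    (h : ∀ ε > 0, IsClosed {y | ε ≤ Φ y}) {y z : Y} (hyz : y ≠ z) (hy : 0 < Φ y) (hz : 0 < Φ z) :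
    IsSmoothFan (fanSet ι Φ) where
  subset_fan := by
    rintro _ ⟨y, t, ht0, ht1, rfl⟩
    exact ⟨ι y, hC y, t, ⟨ht0, ht1.trans (h1 y)⟩, rfl⟩
  isCompact := by
    rw [fanSet_eq_image]
    exact (isCompact_hypo h0 h1 h).image (continuous_fanPt hι.continuous)
  isConnected := by
    apply IsPathConnected.isConnected
    apply StarConvex.isPathConnected (a := fanVertex)
    · rw [starConvex_iff_segment_subset]
      rintro _ ⟨y, t, ht0, ht1, rfl⟩
      rw [segment_eq_image']
      rintro _ ⟨s, hs, rfl⟩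
      refine ⟨y, s * t, mul_nonneg hs.1 ht0, ?_, ?_⟩
      · exact (mul_le_of_le_one_left ht0 hs.2).trans ht1
      · simp [fanPt, fanVertex, mul_assoc]
    · exact ⟨y, 0, le_rfl, h0 y, (fanPt_zero ι y).symm⟩
  nondegenerate := ⟨_, ⟨y, _, hy.le, le_rfl, rfl⟩, _, ⟨z, _, hz.le, le_rfl, rfl⟩,
    fun he => hyz (congrArg Prod.fst (fanPt_inj hι.injective he hy))⟩
  vertex_mem := ⟨y, 0, le_rfl, h0 y, (fanPt_zero ι y).symm⟩
  vertex_order := vertex_orderAtLeast_two hι.injective hyz hy hz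

/-- The inclusion of the Cantor set in the line. -/
def cval : cantorSet → ℝ := Subtype.val

lemma isEmbedding_cval : IsEmbedding cval := IsEmbedding.subtypeVal

/-- A smooth fan contains, with each point, the whole segment from the vertex to that point:
otherwise a clopen set of directions cuts off a clopen part of the fan. -/
lemma IsSmoothFan.downward {X : Set (ℝ × ℝ)} (hX : IsSmoothFan X) {c : cantorSet} {s t : ℝ}
    (hs : 0 ≤ s) (hst : s ≤ t) (ht : fanPt cval (c, t) ∈ X) : fanPt cval (c, s) ∈ X := by
  by_contra hno
  have hs0 : 0 < s := by
    rcases hs.eq_or_lt with h | h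
    · rw [← h, fanPt_zero] at hno; exact absurd hX.vertex_mem hno
    · exact h
  have hlt : s < t := lt_of_le_of_ne hst (by rintro rfl; exact hno ht)
  have hcl : IsClosed {v : cantorSet | fanPt cval (v, s) ∈ X} :=
    hX.isCompact.isClosed.preimage
      ((continuous_fanPt isEmbedding_cval.continuous).comp (by fun_prop))
  have : TotallyDisconnectedSpace cantorSet :=
    cantorSetHomeomorphNatToBool.symm.totallyDisconnectedSpace
  have : CompactSpace cantorSet := isCompact_iff_compactSpace.1 isCompact_cantorSet
  obtain ⟨V, hV, hcV, hVs⟩ := compact_exists_isClopen_in_isOpen hcl.isOpen_compl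
    (show c ∈ {v : cantorSet | fanPt cval (v, s) ∈ X}ᶜ from hno)
  have hVim : ∀ U : Set cantorSet, IsClosed U →
      IsClosed (X ∩ {p | s ≤ p.2 ∧ ∃ v ∈ U, p.1 = p.2 * (v : ℝ)}) := by
    intro U hU
    have hc : IsCompact (fanPt cval '' (U ×ˢ Icc s 1)) :=
      (hU.isCompact.prod isCompact_Icc).image (continuous_fanPt isEmbedding_cval.continuous)
    have : X ∩ {p | s ≤ p.2 ∧ ∃ v ∈ U, p.1 = p.2 * (v : ℝ)} =
        X ∩ fanPt cval '' (U ×ˢ Icc s 1) := by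
      ext p
      constructor
      · rintro ⟨hp, h1, v, hv, h2⟩
        obtain ⟨c', hc', t', ht', rfl⟩ := hX.subset_fan hp
        exact ⟨hp, (v, t'), ⟨hv, h1, ht'.2⟩, Prod.ext h2.symm rfl⟩
      · rintro ⟨hp, ⟨v, t'⟩, ⟨hv, h1⟩, rfl⟩
        exact ⟨hp, h1.1, v, hv, rfl⟩
    rw [this]
    exact hX.isCompact.isClosed.inter hc.isClosed
  -- `X` is covered by two disjoint closed sets, each of which meets it
  set F := X ∩ {p | s ≤ p.2 ∧ ∃ v ∈ V, p.1 = p.2 * (v : ℝ)} with hF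
  set G := (X ∩ {p | p.2 ≤ s}) ∪ (X ∩ {p | s ≤ p.2 ∧ ∃ v ∈ Vᶜ, p.1 = p.2 * (v : ℝ)}) with hG
  have hFc : IsClosed F := hVim V hV.isClosed
  have hGc : IsClosed G := (hX.isCompact.isClosed.inter
    (isClosed_le continuous_snd continuous_const)).union (hVim _ hV.compl.isClosed)
  have hcov : X ⊆ F ∪ G := by
    intro p hp
    obtain ⟨c', hc', t', ht', rfl⟩ := hX.subset_fan hp
    rcases le_total t' s with h | h
    · exact Or.inr (Or.inl ⟨hp, h⟩)
    · by_cases hv : (⟨c', hc'⟩ : cantorSet) ∈ V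
      · exact Or.inl ⟨hp, h, _, hv, rfl⟩
      · exact Or.inr (Or.inr ⟨hp, h, _, hv, rfl⟩)
  obtain ⟨p, hp, hpF, hpG⟩ := isPreconnected_closed_iff.1 hX.isConnected.isPreconnected F G hFc hGc
    hcov ⟨_, ht, ht, hlt.le, c, hcV, rfl⟩
    ⟨_, hX.vertex_mem, Or.inl ⟨hX.vertex_mem, hs⟩⟩
  obtain ⟨-, hsp, v, hv, hpv⟩ := hpF
  rcases hpG with ⟨-, hps⟩ | ⟨-, -, w, hw, hpw⟩
  · have h2 : p.2 = s := le_antisymm hps hsp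
    apply hVs hv
    have : fanPt cval (v, s) = p := Prod.ext (by rw [hpv, h2]; rfl) h2.symm
    show fanPt cval (v, s) ∈ X
    rw [this]; exact hp
  · have hp0 : p.2 ≠ 0 := (hs0.trans_le hsp).ne'
    rw [hpv] at hpw
    exact hw (Subtype.ext (mul_left_cancel₀ hp0 hpw) ▸ hv)

/-- Every smooth fan is the fan of an upper semicontinuous height function. -/
lemma IsSmoothFan.exists_height {X : Set (ℝ × ℝ)} (hX : IsSmoothFan X) :
    ∃ φ : cantorSet → ℝ, (∀ c, 0 ≤ φ c) ∧ (∀ c, φ c ≤ 1) ∧ (∀ ε > 0, IsClosed {c | ε ≤ φ c}) ∧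
      X = fanSet cval φ ∧ ∃ c, 0 < φ c := by
  let S : cantorSet → Set ℝ := fun c => Icc 0 1 ∩ {t | fanPt cval (c, t) ∈ X}
  have h0S : ∀ c, (0:ℝ) ∈ S c := fun c =>
    ⟨⟨le_rfl, zero_le_one⟩, by show fanPt cval (c, 0) ∈ X; rw [fanPt_zero]; exact hX.vertex_mem⟩
  have hSc : ∀ c, IsCompact (S c) := fun c => isCompact_Icc.inter_right
    (hX.isCompact.isClosed.preimage
      ((continuous_fanPt isEmbedding_cval.continuous).comp (by fun_prop)))
  have hmem : ∀ c, sSup (S c) ∈ S c := fun c => (hSc c).sSup_mem ⟨0, h0S c⟩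
  have hle : ∀ c, ∀ t ∈ S c, t ≤ sSup (S c) := fun c t ht => le_csSup (hSc c).bddAbove ht
  have key : ∀ c t, 0 ≤ t → (t ≤ sSup (S c) ↔ fanPt cval (c, t) ∈ X) := by
    intro c t ht
    constructor
    · intro h; exact hX.downward ht h (hmem c).2
    · intro h
      refine hle c t ⟨⟨ht, ?_⟩, h⟩
      obtain ⟨c', hc', t', ht', he⟩ := hX.subset_fan h
      have : t = t' := congrArg Prod.snd he
      rw [this]; exact ht'.2
  have hXeq : X = fanSet cval (fun c => sSup (S c)) := by
    ext p
    constructor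
    · intro hp
      obtain ⟨c', hc', t', ht', rfl⟩ := hX.subset_fan hp
      exact ⟨⟨c', hc'⟩, t', ht'.1, (key _ _ ht'.1).2 hp, rfl⟩
    · rintro ⟨c, t, h0, h1, rfl⟩
      exact (key c t h0).1 h1
  refine ⟨fun c => sSup (S c), fun c => (hmem c).1.1, fun c => (hmem c).1.2, ?_, hXeq, ?_⟩
  · intro ε hε
    have : {c | ε ≤ sSup (S c)} = {c : cantorSet | fanPt cval (c, ε) ∈ X} := by
      ext c; exact key c ε hε.le
    rw [this]
    exact hX.isCompact.isClosed.preimage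
      ((continuous_fanPt isEmbedding_cval.continuous).comp (by fun_prop))
  · by_contra hno
    push Not at hno
    obtain ⟨x, hx, y, hy, hxy⟩ := hX.nondegenerate
    have hv : ∀ p ∈ X, p = fanVertex := by
      intro p hp
      rw [hXeq] at hp
      obtain ⟨c, t, h0, h1, rfl⟩ := hp
      have : t = 0 := le_antisymm (h1.trans (hno c)) h0
      rw [this, fanPt_zero]
    exact hxy ((hv x hx).trans (hv y hy).symm)

end Fans

/-! ### The irrationals and the Baire space -/

section Irrationals

open BoundedContinuousFunction

/-- The inverse branches `y ↦ 1 / (n + 1 + y)` of the Gauss map on the unit interval. -/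
def gaussBranch (n : ℕ) (y : Icc (0:ℝ) 1) : Icc (0:ℝ) 1 :=
  ⟨1 / (n + 1 + y), by
    have := y.2.1
    refine ⟨by positivity, ?_⟩
    rw [div_le_one (by positivity)]
    have : (0:ℝ) ≤ n := by positivity
    linarith [y.2.1]⟩

lemma gaussBranch_dist_two (m n : ℕ) (x y : Icc (0:ℝ) 1) :
    dist (gaussBranch m (gaussBranch n x)) (gaussBranch m (gaussBranch n y)) ≤
      1 / 4 * dist x y := by
  have hx := x.2.1
  have hy := y.2.1
  have hm : (0:ℝ) ≤ m := by positivity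
  have hn : (0:ℝ) ≤ n := by positivity
  simp only [Subtype.dist_eq, Real.dist_eq, gaussBranch]
  generalize (x:ℝ) = x' at hx ⊢
  generalize (y:ℝ) = y' at hy ⊢
  have hA : (2:ℝ) ≤ (m + 1) * (n + 1 + x') + 1 := by nlinarith [mul_nonneg hm hn, mul_nonneg hm hx]
  have hB : (2:ℝ) ≤ (m + 1) * (n + 1 + y') + 1 := by nlinarith [mul_nonneg hm hn, mul_nonneg hm hy]
  have e : 1 / (m + 1 + 1 / (n + 1 + x')) - 1 / (m + 1 + 1 / (n + 1 + y')) =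
      (x' - y') / (((m + 1) * (n + 1 + x') + 1) * ((m + 1) * (n + 1 + y') + 1)) := by
    have h1 : (0:ℝ) < n + 1 + x' := by positivity
    have h2 : (0:ℝ) < n + 1 + y' := by positivity
    have h3 : (m + 1) * (n + 1 + x') + 1 ≠ 0 := by linarith
    have h4 : (m + 1) * (n + 1 + y') + 1 ≠ 0 := by linarith
    field_simp
    ring
  rw [e, abs_div, abs_of_pos (by nlinarith : 0 < ((m + 1) * (n + 1 + x') + 1) *
    ((m + 1) * (n + 1 + y') + 1)), div_le_iff₀ (by nlinarith)]
  nlinarith [abs_nonneg (x' - y'), mul_le_mul hA hB (by norm_num) (by linarith)]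

lemma gaussBranch_eq {n : ℕ} {y : Icc (0:ℝ) 1} : (gaussBranch n y : ℝ) = 1 / (n + 1 + y) := rfl

/-- The shift of a sequence. -/
def seqShift (a : ℕ → ℕ) : ℕ → ℕ := fun n => a (n + 1)

/-- The operator on maps from the Baire space to the unit interval whose fixed point assigns to
a sequence the value of the continued fraction with these partial quotients (minus one). -/
def gaussOp (F : (ℕ → ℕ) →ᵇ Icc (0:ℝ) 1) : (ℕ → ℕ) →ᵇ Icc (0:ℝ) 1 :=
  BoundedContinuousFunction.mkOfBound
    ⟨fun a => gaussBranch (a 0) (F (seqShift a)), by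
      refine Continuous.subtype_mk ?_ _
      have h1 : Continuous fun a : ℕ → ℕ => ((a 0 : ℕ) : ℝ) :=
        continuous_of_discreteTopology.comp (continuous_apply 0)
      have h2 : Continuous fun a : ℕ → ℕ => (F (seqShift a) : ℝ) :=
        continuous_subtype_val.comp (F.continuous.comp (by unfold seqShift; fun_prop))
      refine continuous_const.div ((h1.add continuous_const).add h2) fun a => ?_
      have := (F (seqShift a)).2.1
      positivity⟩ 1 fun x y => by
      show |((gaussBranch (x 0) (F (seqShift x)) : Icc (0:ℝ) 1) : ℝ) -
        (gaussBranch (y 0) (F (seqShift y)) : Icc (0:ℝ) 1)| ≤ 1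
      rw [abs_le]
      constructor <;> linarith [(gaussBranch (x 0) (F (seqShift x))).2.1,
        (gaussBranch (x 0) (F (seqShift x))).2.2, (gaussBranch (y 0) (F (seqShift y))).2.1,
        (gaussBranch (y 0) (F (seqShift y))).2.2]

lemma gaussOp_apply (F : (ℕ → ℕ) →ᵇ Icc (0:ℝ) 1) (a : ℕ → ℕ) :
    gaussOp F a = gaussBranch (a 0) (F (seqShift a)) := rfl

lemma exists_gauss_fixed : ∃ X : (ℕ → ℕ) →ᵇ Icc (0:ℝ) 1, gaussOp X = X := by
  have : Nonempty (Icc (0:ℝ) 1) := ⟨⟨0, by simp⟩⟩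
  have : Nonempty ((ℕ → ℕ) →ᵇ Icc (0:ℝ) 1) :=
    ⟨BoundedContinuousFunction.const _ ⟨0, by simp⟩⟩
  have hc : ContractingWith (1 / 4) gaussOp^[2] := by
    refine ⟨by rw [div_lt_one] <;> norm_num, LipschitzWith.of_dist_le_mul fun F G => ?_⟩
    rw [BoundedContinuousFunction.dist_le (by positivity)]
    intro a
    refine (gaussBranch_dist_two _ _ _ _).trans ?_
    push_cast
    exact mul_le_mul_of_nonneg_left (BoundedContinuousFunction.dist_coe_le_dist _) (by norm_num)
  exact ⟨_, hc.isFixedPt_fixedPoint_iterate⟩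

/-- The value of an infinite continued fraction, as a continuous map. -/
def cfVal : (ℕ → ℕ) →ᵇ Icc (0:ℝ) 1 := Classical.choose exists_gauss_fixed

lemma cfVal_eq (a : ℕ → ℕ) : cfVal a = gaussBranch (a 0) (cfVal (seqShift a)) :=
  (DFunLike.congr_fun (Classical.choose_spec exists_gauss_fixed) a).symm

lemma cfVal_mem (a : ℕ → ℕ) : (cfVal a : ℝ) ∈ Ioo (0:ℝ) 1 := by
  have pos : ∀ a, (0:ℝ) < cfVal a := by
    intro a
    rw [cfVal_eq, gaussBranch_eq]
    have := (cfVal (seqShift a)).2.1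
    positivity
  refine ⟨pos a, ?_⟩
  rw [cfVal_eq, gaussBranch_eq]
  have := pos (seqShift a)
  rw [div_lt_one (by positivity)]
  have : (0:ℝ) ≤ a 0 := by positivity
  linarith

lemma inv_cfVal (a : ℕ → ℕ) : 1 / (cfVal a : ℝ) = a 0 + 1 + cfVal (seqShift a) := by
  rw [cfVal_eq, gaussBranch_eq, one_div_one_div]

/-- Passing to the shifted sequence strictly decreases the denominator of a rational value. -/
lemma cfVal_irrational (a : ℕ → ℕ) : Irrational (cfVal a : ℝ) := by
  have key : ∀ q : ℕ, 0 < q → ∀ a, ∀ p : ℤ, (cfVal a : ℝ) * q ≠ p := by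
    intro q
    induction q using Nat.strong_induction_on with
    | _ q ih =>
      intro hq a p h
      have hx := cfVal_mem a
      have hq' : (0:ℝ) < q := by exact_mod_cast hq
      have hp : (0:ℝ) < p := by rw [← h]; exact mul_pos hx.1 hq'
      have hpq : (p:ℝ) < q := by rw [← h]; nlinarith [hx.2]
      have hp' : 0 < p := by exact_mod_cast hp
      lift p to ℕ using hp'.le
      have hpq' : p < q := by exact_mod_cast hpq
      refine ih p hpq' (by exact_mod_cast hp') (seqShift a) (q - (a 0 + 1) * p) ?_
      have e := inv_cfVal a
      have e2 : (cfVal (seqShift a) : ℝ) = 1 / (cfVal a : ℝ) - (a 0 + 1) := by linarith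
      rw [e2]
      push_cast at h ⊢
      rw [← h]
      have := hx.1.ne'
      field_simp
  rw [irrational_iff_ne_rational]
  intro p q hq h
  rcases lt_or_gt_of_ne hq with h1 | h1
  · refine key q.natAbs (by omega) a (-p) ?_
    have : ((q.natAbs : ℕ) : ℝ) = -(q:ℝ) := by
      rw [Nat.cast_natAbs, abs_of_neg h1]; push_cast; ring
    have hq' : (q:ℝ) ≠ 0 := by exact_mod_cast hq
    rw [this, h]; push_cast; field_simp
  · refine key q.natAbs (by omega) a p ?_
    have : ((q.natAbs : ℕ) : ℝ) = (q:ℝ) := by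
      rw [Nat.cast_natAbs, abs_of_pos h1]
    have hq' : (q:ℝ) ≠ 0 := by exact_mod_cast hq
    rw [this, h]; field_simp

/-- The irrational numbers of the unit interval. -/
abbrev IrrUnit : Type := {x : ℝ // Irrational x ∧ x ∈ Ioo (0:ℝ) 1}

lemma one_lt_inv_irr (x : IrrUnit) : 1 < 1 / (x : ℝ) := by
  rw [lt_div_iff₀ x.2.2.1]; linarith [x.2.2.2]

lemma irr_inv (x : IrrUnit) : Irrational (1 / (x : ℝ)) := by
  rw [one_div]; exact x.2.1.inv

lemma irr_fract {x : ℝ} (hx : Irrational x) : Irrational (Int.fract x) := by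
  exact hx.sub_intCast ⌊x⌋

lemma irr_fract_mem {x : ℝ} (hx : Irrational x) : Int.fract x ∈ Ioo (0:ℝ) 1 :=
  ⟨lt_of_le_of_ne (Int.fract_nonneg x) (irr_fract hx).ne_zero.symm, Int.fract_lt_one x⟩

/-- The Gauss map. -/
def gaussMap (x : IrrUnit) : IrrUnit :=
  ⟨Int.fract (1 / (x : ℝ)), irr_fract (irr_inv x), irr_fract_mem (irr_inv x)⟩

/-- The first partial quotient, minus one. -/
def gaussDigit (x : IrrUnit) : ℕ := (⌊1 / (x : ℝ)⌋ - 1).toNat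

lemma gauss_decomp (x : IrrUnit) : 1 / (x : ℝ) = gaussDigit x + 1 + gaussMap x := by
  have h1 : 1 ≤ ⌊1 / (x : ℝ)⌋ := Int.le_floor.2 (by exact_mod_cast (one_lt_inv_irr x).le)
  have h2 : ((gaussDigit x : ℤ)) = ⌊1 / (x : ℝ)⌋ - 1 := Int.toNat_of_nonneg (by omega)
  have h3 : ((gaussDigit x : ℕ) : ℝ) = (⌊1 / (x : ℝ)⌋ : ℝ) - 1 := by exact_mod_cast h2
  have h4 := Int.floor_add_fract (1 / (x : ℝ))
  rw [h3]
  show 1 / (x : ℝ) = (⌊1 / (x : ℝ)⌋ : ℝ) - 1 + 1 + Int.fract (1 / (x : ℝ))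
  linarith

lemma continuousAt_floor_irr {x : ℝ} (hx : Irrational x) : ContinuousAt (Int.floor : ℝ → ℤ) x := by
  have : ∀ᶠ y in 𝓝 x, ⌊y⌋ = ⌊x⌋ := by
    have h1 : (⌊x⌋ : ℝ) < x := lt_of_le_of_ne (Int.floor_le x) (hx.ne_int _).symm
    filter_upwards [Ioo_mem_nhds h1 (Int.lt_floor_add_one x)] with y hy
    exact Int.floor_eq_iff.2 ⟨hy.1.le, hy.2⟩
  exact (continuousAt_const (y := ⌊x⌋)).congr (this.mono fun y hy => hy.symm)

lemma continuous_floor_irr {A : Type*} [TopologicalSpace A] {f : A → ℝ} (hf : Continuous f)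
    (hirr : ∀ a, Irrational (f a)) : Continuous fun a => ⌊f a⌋ :=
  continuous_iff_continuousAt.2 fun a => (continuousAt_floor_irr (hirr a)).comp hf.continuousAt

lemma continuous_inv_irr : Continuous fun x : IrrUnit => 1 / (x : ℝ) :=
  continuous_const.div continuous_subtype_val fun x => x.2.2.1.ne'

lemma continuous_gaussDigit : Continuous gaussDigit :=
  (continuous_of_discreteTopology (f := fun n : ℤ => (n - 1).toNat)).comp
    (continuous_floor_irr continuous_inv_irr irr_inv)

lemma continuous_fract_irr {A : Type*} [TopologicalSpace A] {f : A → ℝ} (hf : Continuous f)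
    (hirr : ∀ a, Irrational (f a)) : Continuous fun a => Int.fract (f a) :=
  hf.sub ((continuous_of_discreteTopology (f := fun n : ℤ => (n : ℝ))).comp
    (continuous_floor_irr hf hirr))

lemma continuous_gaussMap : Continuous gaussMap :=
  (continuous_fract_irr continuous_inv_irr irr_inv).subtype_mk _

/-- The sequence of partial quotients, minus one. -/
def gaussDigits (x : IrrUnit) : ℕ → ℕ := fun n => gaussDigit (gaussMap^[n] x)

lemma gaussDigits_shift (x : IrrUnit) : seqShift (gaussDigits x) = gaussDigits (gaussMap x) := rfl

/-- An element of `IrrUnit` as an element of the closed unit interval. -/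
def irrToIcc (x : IrrUnit) : Icc (0:ℝ) 1 := ⟨x, x.2.2.1.le, x.2.2.2.le⟩

lemma irrToIcc_eq (x : IrrUnit) : irrToIcc x = gaussBranch (gaussDigit x) (irrToIcc (gaussMap x)) := by
  apply Subtype.ext
  have := gauss_decomp x
  show (x : ℝ) = 1 / (gaussDigit x + 1 + gaussMap x)
  rw [← this, one_div_one_div]

lemma cfVal_gaussDigits (x : IrrUnit) : cfVal (gaussDigits x) = irrToIcc x := by
  have step : ∀ k : ℕ, ∀ x : IrrUnit, dist (cfVal (gaussDigits x)) (irrToIcc x) ≤ (1 / 4) ^ k := by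
    intro k
    induction k with
    | zero =>
      intro x
      rw [pow_zero, Subtype.dist_eq, Real.dist_eq, abs_le]
      constructor <;> linarith [(cfVal (gaussDigits x)).2.1, (cfVal (gaussDigits x)).2.2,
        (irrToIcc x).2.1, (irrToIcc x).2.2]
    | succ k ih =>
      intro x
      rw [cfVal_eq, cfVal_eq (seqShift _), irrToIcc_eq x, irrToIcc_eq (gaussMap x)]
      refine (gaussBranch_dist_two _ _ _ _).trans ?_
      rw [pow_succ']
      exact mul_le_mul_of_nonneg_left (ih _) (by norm_num)
  have hlim := tendsto_pow_atTop_nhds_zero_of_lt_one (r := (1/4:ℝ)) (by norm_num) (by norm_num)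
  exact dist_le_zero.1 (ge_of_tendsto' hlim fun k => step k x)

lemma gaussDigit_cfVal (a : ℕ → ℕ) :
    gaussDigits ⟨cfVal a, cfVal_irrational a, cfVal_mem a⟩ = a := by
  have hfl : ∀ a : ℕ → ℕ, ⌊1 / (cfVal a : ℝ)⌋ = (a 0 : ℤ) + 1 := by
    intro a
    rw [inv_cfVal, Int.floor_eq_iff]
    push_cast
    have := cfVal_mem (seqShift a)
    constructor <;> linarith [this.1, this.2]
  have hmap : ∀ a : ℕ → ℕ, gaussMap ⟨cfVal a, cfVal_irrational a, cfVal_mem a⟩ =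
      ⟨cfVal (seqShift a), cfVal_irrational _, cfVal_mem _⟩ := by
    intro a
    apply Subtype.ext
    simp only [gaussMap, Int.fract]
    rw [hfl, inv_cfVal]; push_cast; ring
  funext n
  induction n generalizing a with
  | zero =>
    simp only [gaussDigits, Function.iterate_zero, id, gaussDigit]
    rw [hfl]; simp
  | succ n ih =>
    have := ih (seqShift a)
    rw [gaussDigits, Function.iterate_succ_apply, hmap]
    exact this

/-- The continued fraction expansion is a homeomorphism onto the Baire space. -/
def irrUnitHomeo : IrrUnit ≃ₜ (ℕ → ℕ) where
  toFun := gaussDigits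
  invFun a := ⟨cfVal a, cfVal_irrational a, cfVal_mem a⟩
  left_inv x := Subtype.ext (by
    show ((cfVal (gaussDigits x) : Icc (0:ℝ) 1) : ℝ) = x
    rw [cfVal_gaussDigits]; rfl)
  right_inv := gaussDigit_cfVal
  continuous_toFun := continuous_pi fun n =>
    continuous_gaussDigit.comp (continuous_gaussMap.iterate n)
  continuous_invFun := (continuous_subtype_val.comp cfVal.continuous).subtype_mk _

/-- An irrational number is determined by its integer part and its fractional part. -/
def irrHomeo : (ℤ × IrrUnit) ≃ₜ {x : ℝ // Irrational x} where
  toFun q := ⟨q.1 + q.2, q.2.2.1.intCast_add q.1⟩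
  invFun x := (⌊(x:ℝ)⌋, ⟨Int.fract (x:ℝ), irr_fract x.2, irr_fract_mem x.2⟩)
  left_inv q := by
    have h : ⌊(q.1 : ℝ) + q.2⌋ = q.1 := by
      rw [Int.floor_eq_iff]
      constructor <;> linarith [q.2.2.2.1, q.2.2.2.2]
    refine Prod.ext h (Subtype.ext ?_)
    simp only [Int.fract]
    rw [h]; ring
  right_inv x := Subtype.ext (Int.floor_add_fract _)
  continuous_toFun := by
    refine Continuous.subtype_mk ?_ _
    exact ((continuous_of_discreteTopology (f := fun n : ℤ => (n : ℝ))).comp continuous_fst).add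
      (continuous_subtype_val.comp continuous_snd)
  continuous_invFun := (continuous_floor_irr continuous_subtype_val fun x => x.2).prodMk
    ((continuous_fract_irr continuous_subtype_val fun x => x.2).subtype_mk _)

lemma nonempty_baire_homeo_irrational : Nonempty ((ℕ × (ℕ → ℕ)) ≃ₜ {x : ℝ // Irrational x}) :=
  ⟨(Homeomorph.prodCongr Equiv.intEquivNat.symm.toHomeomorphOfDiscrete irrUnitHomeo.symm).trans
    irrHomeo⟩

end Irrationals

/-! ### The tree of clusters -/

section Clusters

/-- The Cantor set, as a space; it indexes the legs of the original fan and of each cluster. -/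
abbrev CC : Type := ↥cantorSet

instance : CompactSpace CC := isCompact_iff_compactSpace.1 isCompact_cantorSet

/-- The space of positions of legs. A position records the clusters passed through on the way
from the root, coordinate `n` holding the place chosen in cluster `n`, or `Sum.inr ()` if cluster
`n` is not passed through. -/
abbrev Pos : Type := ℕ → CC ⊕ Unit

/-- The parent of cluster `k + 1`. -/
def par (k : ℕ) : ℕ := (Nat.unpair k).1

lemma par_le (k : ℕ) : par k ≤ k := Nat.unpair_left_le k

/-- The position of the leg `w` of cluster `n`, where cluster `k + 1` is attached to the leg
`zc k` of its parent. -/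
def leg (zc : ℕ → CC) : ℕ → CC → Pos
  | 0, w => Function.update (fun _ => Sum.inr ()) 0 (Sum.inl w)
  | k + 1, w => Function.update (leg zc (par k) (zc k)) (k + 1) (Sum.inl w)
termination_by n => n
decreasing_by have := par_le k; omega

/-- The height of cluster `n`, where cluster `k + 1` sits on its parent at relative
height `s k`. -/
def ht (s : ℕ → ℝ) : ℕ → ℝ
  | 0 => 1
  | k + 1 => ht s (par k) / (3 * par k + 1) * s k
termination_by n => n
decreasing_by have := par_le k; omega

/-- The range of heights on cluster `n` at which other clusters are attached. The denominator
makes the clusters attached to a cluster of large index small. -/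
def ha (s : ℕ → ℝ) (n : ℕ) : ℝ := ht s n / (3 * n + 1)

lemma ht_zero (s : ℕ → ℝ) : ht s 0 = 1 := by rw [ht]

lemma ha_zero (s : ℕ → ℝ) : ha s 0 = 1 := by rw [ha, ht]; simp

lemma ht_succ (s : ℕ → ℝ) (k : ℕ) : ht s (k + 1) = ha s (par k) * s k := by rw [ht, ha]

lemma leg_self (zc : ℕ → CC) (n : ℕ) (w : CC) : leg zc n w n = Sum.inl w := by
  cases n <;> rw [leg] <;> simp

lemma leg_succ_ne (zc : ℕ → CC) {k i : ℕ} (w : CC) (h : i ≠ k + 1) :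
    leg zc (k + 1) w i = leg zc (par k) (zc k) i := by
  rw [leg, Function.update_of_ne h]

lemma leg_zero_ne (zc : ℕ → CC) {i : ℕ} (w : CC) (h : i ≠ 0) :
    leg zc 0 w i = Sum.inr () := by
  rw [leg, Function.update_of_ne h]

lemma leg_gt (zc : ℕ → CC) (n : ℕ) : ∀ (w : CC) (i : ℕ), n < i → leg zc n w i = Sum.inr () := by
  induction n using Nat.strong_induction_on with
  | _ n ih =>
    intro w i h
    cases n with
    | zero => exact leg_zero_ne zc w (by omega)
    | succ k =>
      have := par_le k
      rw [leg_succ_ne zc w (by omega)]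
      exact ih _ (by omega) _ _ (by omega)

lemma leg_inj (zc : ℕ → CC) {m n : ℕ} {v w : CC} (h : leg zc m v = leg zc n w) :
    m = n ∧ v = w := by
  have key : ∀ {m n : ℕ} {v w : CC}, leg zc m v = leg zc n w → n ≤ m := by
    intro m n v w h
    by_contra! hlt
    have h1 := leg_gt zc m v n hlt
    rw [h, leg_self] at h1
    cases h1
  obtain rfl : m = n := le_antisymm (key h.symm) (key h)
  refine ⟨rfl, ?_⟩
  have := congrFun h m
  rw [leg_self, leg_self] at this
  exact Sum.inl.inj this

lemma continuous_leg (zc : ℕ → CC) (n : ℕ) : Continuous (leg zc n) := by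
  refine continuous_pi fun i => ?_
  by_cases h : i = n
  · subst h; simp only [leg_self]; exact continuous_inl
  · cases n with
    | zero => simp only [leg_zero_ne zc _ h]; exact continuous_const
    | succ k => simp only [leg_succ_ne zc _ h]; exact continuous_const

lemma isEmbedding_leg (zc : ℕ → CC) (n : ℕ) : IsEmbedding (leg zc n) :=
  ((continuous_leg zc n).isClosedEmbedding fun _ _ h => (leg_inj zc h).2).isEmbedding

variable {s : ℕ → ℝ}

lemma ht_mem (hs : ∀ k, 0 < s k ∧ s k ≤ 1) (n : ℕ) : 0 < ht s n ∧ ht s n ≤ 1 := by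
  induction n using Nat.strong_induction_on with
  | _ n ih =>
    cases n with
    | zero => rw [ht_zero]; norm_num
    | succ k =>
      have h := ih (par k) (by have := par_le k; omega)
      rw [ht]
      have hd : (1:ℝ) ≤ 3 * par k + 1 := by
        have : (0:ℝ) ≤ par k := by positivity
        linarith
      have h1 : 0 < ht s (par k) / (3 * par k + 1) := div_pos h.1 (by linarith)
      have h2 : ht s (par k) / (3 * par k + 1) ≤ 1 :=
        (div_le_one (by linarith)).2 (by linarith [h.2])
      exact ⟨mul_pos h1 (hs k).1, mul_le_one₀ h2 (hs k).1.le (hs k).2⟩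

lemma ha_pos (hs : ∀ k, 0 < s k ∧ s k ≤ 1) (n : ℕ) : 0 < ha s n := div_pos (ht_mem hs n).1 (by positivity)

lemma ha_le_ht (hs : ∀ k, 0 < s k ∧ s k ≤ 1) (n : ℕ) : ha s n ≤ ht s n :=
  div_le_self (ht_mem hs n).1.le (by have : (0:ℝ) ≤ n := by positivity
                                     linarith)

lemma ha_succ_le (hs : ∀ k, 0 < s k ∧ s k ≤ 1) (n : ℕ) : ha s (n + 1) ≤ ht s (n + 1) / 4 := by
  rw [ha]
  refine div_le_div_of_nonneg_left (ht_mem hs _).1.le (by norm_num) ?_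
  have : (0:ℝ) ≤ n := by positivity
  push_cast; linarith

lemma ha_le (hs : ∀ k, 0 < s k ∧ s k ≤ 1) (n : ℕ) : ha s n ≤ 1 / (n + 1) := by
  rw [ha]
  have : (0:ℝ) ≤ n := by positivity
  exact div_le_div₀ (by norm_num) (ht_mem hs n).2 (by positivity) (by linarith)

lemma ht_succ_le (hs : ∀ k, 0 < s k ∧ s k ≤ 1) (k : ℕ) : ht s (k + 1) ≤ ha s (par k) := by
  rw [ht_succ]
  exact mul_le_of_le_one_right (ha_pos hs _).le (hs k).2

/-- The clusters lying above cluster `n` are small compared with it. -/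
lemma ht_le_ha (hs : ∀ k, 0 < s k ∧ s k ≤ 1) (zc : ℕ → CC) (m : ℕ) :
    ∀ (w : CC) (n : ℕ), leg zc m w n ≠ Sum.inr () → m ≠ n →
    ht s m ≤ ha s n := by
  induction m using Nat.strong_induction_on with
  | _ m ih =>
    intro w n h hmn
    cases m with
    | zero => exact absurd (leg_zero_ne zc w hmn.symm) h
    | succ k =>
      rw [leg_succ_ne zc w hmn.symm] at h
      by_cases hp : par k = n
      · subst hp; exact ht_succ_le hs k
      · exact (ht_succ_le hs k).trans ((ha_le_ht hs _).trans
          (ih (par k) (by have := par_le k; omega) _ _ h hp))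


/-- A position lying properly above cluster `n` passes through a child `c + 1` of cluster `n`,
and its coordinate `n` is the place at which that child is attached. -/
lemma exists_child (zc : ℕ → CC) (m : ℕ) : ∀ (w : CC) (n : ℕ), leg zc m w n ≠ Sum.inr () →
    m ≠ n → ∃ c, par c = n ∧ leg zc m w (c + 1) ≠ Sum.inr () ∧ leg zc m w n = Sum.inl (zc c) := by
  induction m using Nat.strong_induction_on with
  | _ m ih =>
    intro w n h hmn
    cases m with
    | zero => exact absurd (leg_zero_ne zc w hmn.symm) h
    | succ k =>
      rw [leg_succ_ne zc w hmn.symm] at h ⊢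
      by_cases hp : par k = n
      · subst hp
        exact ⟨k, rfl, by rw [leg_self]; simp, leg_self _ _ _⟩
      · obtain ⟨c, h1, h2, h3⟩ := ih (par k) (by have := par_le k; omega) _ _ h hp
        refine ⟨c, h1, ?_, h3⟩
        have hc : c + 1 ≠ k + 1 := by
          intro e
          rw [e] at h2
          exact h2 (leg_gt zc _ _ _ (by have := par_le k; omega))
        rwa [leg_succ_ne zc w hc]

end Clusters

/-! ### Cluster systems -/

section Systems

variable {Γ : Type*} [TopologicalSpace Γ]

/-- A model for the endpoint set of a cluster: a space `Γ` mapped injectively to the Cantor set by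
`base`, together with a height `g` such that `Γ` is homeomorphic to the graph of `g` over the
base and such that `g`, extended by `-∞`, is upper semicontinuous on the Cantor set. The point
`pt`, of minimal height, becomes a point of the witnessing set. -/
structure Model (Γ : Type*) [TopologicalSpace Γ] where
  base : Γ → CC
  g : Γ → ℝ
  pt : Γ
  inj : Function.Injective base
  g_nonneg : ∀ γ, 0 ≤ g γ
  g_le_one : ∀ γ, g γ ≤ 1
  g_pt : g pt = 0
  closed : ∀ r, IsClosed (base '' {γ | r ≤ g γ})
  emb : IsEmbedding fun γ => (base γ, g γ)

/-- The set of (place, relative height) pairs at which clusters are attached to cluster `n`: all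
of the original fan for `n = 0`; for `n = k + 1`, the points of `K k` on the leg of `M.pt`, and
initial segments of the other legs, shrinking towards the leg of `M.pt`. -/
def spots (K : ℕ → Set ℝ) (φ : CC → ℝ) (M : Model Γ) : ℕ → Set (CC × ℝ)
  | 0 => {q | 0 < q.2 ∧ q.2 ≤ φ q.1}
  | k + 1 => {q | q.1 ∈ range M.base ∧ 0 < q.2 ∧ q.2 ≤ 1 ∧
      (q.2 ∈ K k ∨ q.2 ≤ dist q.1 (M.base M.pt))}

/-- A choice of attaching points for all the clusters, such that clusters of arbitrarily large
index are attached densely in the prescribed spots of each cluster. -/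
structure Sys (K : ℕ → Set ℝ) (φ : CC → ℝ) (M : Model Γ) where
  zc : ℕ → CC
  s : ℕ → ℝ
  mem : ∀ k, (zc k, s k) ∈ spots K φ M (par k)
  dense : ∀ p, ∀ q ∈ spots K φ M p, ∀ U ∈ 𝓝 q, ∀ N, ∃ k ≥ N, par k = p ∧ (zc k, s k) ∈ U

lemma exists_sys (K : ℕ → Set ℝ) (φ : CC → ℝ) (M : Model Γ)
    (h : ∀ p, (spots K φ M p).Nonempty) : Nonempty (Sys K φ M) := by
  have : ∀ p, ∃ D : ℕ → CC × ℝ, (∀ j, D j ∈ spots K φ M p) ∧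
      ∀ q ∈ spots K φ M p, ∀ U ∈ 𝓝 q, ∃ j, D j ∈ U := by
    intro p
    have : Nonempty (spots K φ M p) := (h p).to_subtype
    refine ⟨fun j => TopologicalSpace.denseSeq (spots K φ M p) j, fun j => Subtype.property _, ?_⟩
    intro q hq U hU
    have hd := (TopologicalSpace.denseRange_denseSeq (spots K φ M p)) ⟨q, hq⟩
    rw [mem_closure_iff_nhds] at hd
    obtain ⟨_, h1, ⟨j, rfl⟩⟩ := hd (Subtype.val ⁻¹' U)
      (continuous_subtype_val.continuousAt.preimage_mem_nhds hU)
    exact ⟨j, h1⟩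
  choose D hD hD' using this
  refine ⟨⟨fun k => (D (par k) (Nat.unpair (Nat.unpair k).2).1).1,
    fun k => (D (par k) (Nat.unpair (Nat.unpair k).2).1).2, fun k => hD _ _, ?_⟩⟩
  intro p q hq U hU N
  obtain ⟨j, hj⟩ := hD' p q hq U hU
  have hp : par (Nat.pair p (Nat.pair j N)) = p := by simp [par]
  refine ⟨Nat.pair p (Nat.pair j N),
    (Nat.right_le_pair j N).trans (Nat.right_le_pair p _), hp, ?_⟩
  rw [hp]
  simpa using hj

variable {K : ℕ → Set ℝ} {φ : CC → ℝ} {M : Model Γ} (S : Sys K φ M)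

namespace Sys

/-- The position of a leg. -/
def L (n : ℕ) (w : CC) : Pos := leg S.zc n w

/-- The height of the leg `γ` of cluster `n + 1`. -/
def hh (n : ℕ) (γ : Γ) : ℝ := ht S.s (n + 1) * ((n + 1 + M.g γ) / (n + 2))

/-- The endpoints of the clusters other than the root, as pairs (position, height). -/
def ep (q : ℕ × Γ) : Pos × ℝ := (S.L (q.1 + 1) (M.base q.2), S.hh q.1 q.2)

/-- The endpoints belonging to the original fan. -/
def E0 : Set (Pos × ℝ) := {q | ∃ w, 0 < φ w ∧ q = (S.L 0 w, φ w)}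

/-- All endpoints. -/
def E : Set (Pos × ℝ) := S.E0 ∪ range S.ep

/-- The height of the constructed fan at a position. -/
def Φ (y : Pos) : ℝ := sSup {t | (y, t) ∈ S.E}

lemma hs (hφ1 : ∀ w, φ w ≤ 1) (k : ℕ) : 0 < S.s k ∧ S.s k ≤ 1 := by
  have h := S.mem k
  cases e : par k with
  | zero => rw [e] at h; exact ⟨h.1, h.2.trans (hφ1 _)⟩
  | succ n => rw [e] at h; exact ⟨h.2.1, h.2.2.1⟩

lemma hh_pos (hφ1 : ∀ w, φ w ≤ 1) (n : ℕ) (γ : Γ) : 0 < S.hh n γ := by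
  have := M.g_nonneg γ
  exact mul_pos (ht_mem (S.hs hφ1) _).1 (by positivity)

lemma hh_le (hφ1 : ∀ w, φ w ≤ 1) (n : ℕ) (γ : Γ) : S.hh n γ ≤ ht S.s (n + 1) := by
  refine mul_le_of_le_one_right (ht_mem (S.hs hφ1) _).1.le ?_
  rw [div_le_one (by positivity)]
  linarith [M.g_le_one γ]

/-- The heights of the legs of a cluster of large index are nearly equal. -/
lemma hh_ge (hφ1 : ∀ w, φ w ≤ 1) (n : ℕ) (γ : Γ) :
    ht S.s (n + 1) * ((n + 1) / (n + 2)) ≤ S.hh n γ := by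
  refine mul_le_mul_of_nonneg_left ?_ (ht_mem (S.hs hφ1) _).1.le
  exact div_le_div_of_nonneg_right (by linarith [M.g_nonneg γ]) (by positivity)

lemma ha_lt_hh (hφ1 : ∀ w, φ w ≤ 1) (n : ℕ) (γ : Γ) : ha S.s (n + 1) < S.hh n γ := by
  have h1 := ha_succ_le (S.hs hφ1) n
  have h2 := S.hh_ge hφ1 n γ
  have h3 := (ht_mem (S.hs hφ1) (n + 1)).1
  have h4 : (1:ℝ) / 2 ≤ (n + 1) / (n + 2) := by
    rw [div_le_div_iff₀ (by norm_num) (by positivity)]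
    have : (0:ℝ) ≤ n := by positivity
    linarith
  have := mul_le_mul_of_nonneg_left h4 h3.le
  linarith

lemma hh_pt_le (hφ1 : ∀ w, φ w ≤ 1) (n : ℕ) (γ : Γ) : S.hh n M.pt ≤ S.hh n γ := by
  refine mul_le_mul_of_nonneg_left ?_ (ht_mem (S.hs hφ1) _).1.le
  exact div_le_div_of_nonneg_right (by linarith [M.g_nonneg γ, M.g_pt]) (by positivity)

lemma L_inj {m n : ℕ} {v w : CC} (h : S.L m v = S.L n w) : m = n ∧ v = w := leg_inj S.zc h

lemma mem_E {y : Pos} {t : ℝ} : (y, t) ∈ S.E ↔ (∃ w, 0 < φ w ∧ y = S.L 0 w ∧ t = φ w) ∨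
    ∃ n γ, y = S.L (n + 1) (M.base γ) ∧ t = S.hh n γ := by
  constructor
  · rintro (⟨w, hw, h⟩ | ⟨⟨n, γ⟩, h⟩)
    · exact Or.inl ⟨w, hw, (Prod.mk.inj h).1, (Prod.mk.inj h).2⟩
    · exact Or.inr ⟨n, γ, (Prod.mk.inj h).1.symm, (Prod.mk.inj h).2.symm⟩
  · rintro (⟨w, hw, rfl, rfl⟩ | ⟨n, γ, rfl, rfl⟩)
    · exact Or.inl ⟨w, hw, rfl⟩
    · exact Or.inr ⟨⟨n, γ⟩, rfl⟩

lemma E_unique {y : Pos} {a b : ℝ} (ha : (y, a) ∈ S.E) (hb : (y, b) ∈ S.E) : a = b := by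
  rw [mem_E] at ha hb
  rcases ha with ⟨w, -, rfl, rfl⟩ | ⟨n, γ, rfl, rfl⟩ <;>
    rcases hb with ⟨v, -, hb, rfl⟩ | ⟨m, δ, hb, rfl⟩
  · rw [(S.L_inj hb).2]
  · exact absurd (S.L_inj hb).1 (by simp)
  · exact absurd (S.L_inj hb).1 (by simp)
  · obtain ⟨h, h'⟩ := S.L_inj hb
    obtain rfl : n = m := by simpa using h
    rw [M.inj h']

lemma Φ_eq {y : Pos} {t : ℝ} (h : (y, t) ∈ S.E) : S.Φ y = t := by
  have : {t | (y, t) ∈ S.E} = {t} := by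
    ext u; exact ⟨fun hu => S.E_unique hu h, fun hu => by rw [mem_singleton_iff.1 hu]; exact h⟩
  rw [Φ, this, csSup_singleton]

lemma E_pos (hφ1 : ∀ w, φ w ≤ 1) {q : Pos × ℝ} (h : q ∈ S.E) : 0 < q.2 ∧ q.2 ≤ 1 := by
  rcases h with ⟨w, hw, rfl⟩ | ⟨⟨n, γ⟩, rfl⟩
  · exact ⟨hw, hφ1 w⟩
  · exact ⟨S.hh_pos hφ1 n γ, (S.hh_le hφ1 n γ).trans (ht_mem (S.hs hφ1) _).2⟩

lemma le_Φ_iff {y : Pos} {ε : ℝ} (hε : 0 < ε) :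
    ε ≤ S.Φ y ↔ ∃ t, (y, t) ∈ S.E ∧ ε ≤ t := by
  constructor
  · intro h
    by_cases he : ∃ t, (y, t) ∈ S.E
    · obtain ⟨t, ht⟩ := he
      exact ⟨t, ht, by rwa [S.Φ_eq ht] at h⟩
    · have : {t | (y, t) ∈ S.E} = ∅ := by
        ext u; exact ⟨fun hu => he ⟨u, hu⟩, fun hu => hu.elim⟩
      rw [Φ, this, Real.sSup_empty] at h
      linarith
  · rintro ⟨t, ht, h⟩
    rwa [S.Φ_eq ht]

lemma mem_E_iff (hφ1 : ∀ w, φ w ≤ 1) {q : Pos × ℝ} : q ∈ S.E ↔ 0 < q.2 ∧ q.2 = S.Φ q.1 := by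
  constructor
  · exact fun h => ⟨(S.E_pos hφ1 h).1, (S.Φ_eq h).symm⟩
  · rintro ⟨h1, h2⟩
    obtain ⟨t, ht, -⟩ := (S.le_Φ_iff h1).1 h2.le
    rw [S.Φ_eq ht] at h2
    rw [← h2] at ht
    exact ht

lemma Φ_nonneg (hφ1 : ∀ w, φ w ≤ 1) (y : Pos) : 0 ≤ S.Φ y :=
  Real.sSup_nonneg fun _ ht => (S.E_pos hφ1 ht).1.le

lemma Φ_le_one (hφ1 : ∀ w, φ w ≤ 1) (y : Pos) : S.Φ y ≤ 1 :=
  Real.sSup_le (fun _ ht => (S.E_pos hφ1 ht).2) zero_le_one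

lemma Φ_L_zero (hφ0 : ∀ w, 0 ≤ φ w) (w : CC) : S.Φ (S.L 0 w) = φ w := by
  rcases (hφ0 w).eq_or_lt with h | h
  · rw [← h]
    have : {t | (S.L 0 w, t) ∈ S.E} = ∅ := by
      ext u
      refine ⟨?_, fun hu => hu.elim⟩
      intro hu
      rcases S.mem_E.1 hu with ⟨v, hv, e, -⟩ | ⟨n, γ, e, -⟩
      · obtain ⟨-, rfl⟩ := S.L_inj e
        exact absurd h hv.ne
      · exact absurd (S.L_inj e).1 (by simp)
    rw [Φ, this, Real.sSup_empty]
  · exact S.Φ_eq (Or.inl ⟨w, h, rfl⟩)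

end Sys

end Systems

/-! ### Topology of a cluster system -/

section Topology

variable {Γ : Type*} [TopologicalSpace Γ]
variable {K : ℕ → Set ℝ} {φ : CC → ℝ} {M : Model Γ} (S : Sys K φ M)

namespace Sys

/-- The legs of cluster `n` of height at least `ε`. -/
def big (ε : ℝ) : ℕ → Set CC
  | 0 => {w | ε ≤ φ w}
  | n + 1 => M.base '' {γ | ε ≤ S.hh n γ}

lemma isClosed_big (hφ1 : ∀ w, φ w ≤ 1) (hφ : ∀ ε > 0, IsClosed {w | ε ≤ φ w}) {ε : ℝ}
    (hε : 0 < ε) (n : ℕ) : IsClosed (S.big ε n) := by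
  cases n with
  | zero => exact hφ ε hε
  | succ n =>
    have h := (ht_mem (S.hs hφ1) (n + 1)).1
    have : {γ | ε ≤ S.hh n γ} = {γ | ε / ht S.s (n + 1) * (n + 2) - (n + 1) ≤ M.g γ} := by
      ext γ
      have h2 : (0:ℝ) < n + 2 := by positivity
      simp only [mem_ofPred_eq, hh]
      rw [← div_le_iff₀' h, le_div_iff₀ h2, sub_le_iff_le_add, add_comm (M.g γ)]
    rw [big, this]
    exact M.closed _

lemma le_Φ_iff_big {y : Pos} {ε : ℝ} (hε : 0 < ε) :
    ε ≤ S.Φ y ↔ ∃ n, ∃ w ∈ S.big ε n, y = S.L n w := by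
  rw [S.le_Φ_iff hε]
  constructor
  · rintro ⟨t, ht, h⟩
    rcases S.mem_E.1 ht with ⟨w, hw, rfl, rfl⟩ | ⟨n, γ, rfl, rfl⟩
    · exact ⟨0, w, h, rfl⟩
    · exact ⟨n + 1, _, ⟨γ, h, rfl⟩, rfl⟩
  · rintro ⟨n, w, hw, rfl⟩
    cases n with
    | zero => exact ⟨φ w, S.mem_E.2 (Or.inl ⟨w, hε.trans_le hw, rfl, rfl⟩), hw⟩
    | succ n =>
      obtain ⟨γ, hγ, rfl⟩ := hw
      exact ⟨_, S.mem_E.2 (Or.inr ⟨n, γ, rfl, rfl⟩), hγ⟩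

lemma le_ht_of_big (hφ1 : ∀ w, φ w ≤ 1) {ε : ℝ} {n : ℕ} {w : CC} (h : w ∈ S.big ε n) :
    ε ≤ ht S.s n := by
  cases n with
  | zero => rw [ht_zero]; exact le_trans h (hφ1 w)
  | succ n =>
    obtain ⟨γ, hγ, -⟩ := h
    exact le_trans hγ (S.hh_le hφ1 n γ)

/-- Heights decrease when passing to a cluster attached to a leg. -/
lemma big_parent (hφ1 : ∀ w, φ w ≤ 1) {ε : ℝ} {k : ℕ} (h : ε ≤ ht S.s (k + 1)) :
    S.zc k ∈ S.big ε (par k) := by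
  have hm := S.mem k
  have h1 := ht_succ_le (S.hs hφ1) k
  cases e : par k with
  | zero =>
    rw [e] at hm
    rw [ht_succ, e, ha_zero, one_mul] at h
    exact h.trans hm.2
  | succ n =>
    rw [e] at hm h1
    obtain ⟨⟨γ, hγ⟩, -⟩ := hm
    exact ⟨γ, h.trans (h1.trans (S.ha_lt_hh hφ1 n γ).le), hγ⟩

/-- Forget the coordinates from `N` on. -/
def trunc (N : ℕ) (y : Pos) : Pos := fun i => if i < N then y i else Sum.inr ()

lemma continuous_trunc (N : ℕ) : Continuous (trunc N) := by
  refine continuous_pi fun i => ?_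
  by_cases h : i < N
  · simp only [trunc, h, if_true]; exact continuous_apply i
  · simp only [trunc, h, if_false]; exact continuous_const

lemma trunc_L_of_lt {n N : ℕ} (h : n < N) (w : CC) : trunc N (S.L n w) = S.L n w := by
  funext i
  by_cases hi : i < N
  · simp [trunc, hi]
  · simp only [trunc, hi, if_false]
    exact (leg_gt _ _ _ _ (by omega)).symm

lemma trunc_mem (hφ1 : ∀ w, φ w ≤ 1) {ε : ℝ} {N : ℕ} (hN : 0 < N) (n : ℕ) :
    ∀ w ∈ S.big ε n, ∃ m < N, ∃ v ∈ S.big ε m, trunc N (S.L n w) = S.L m v := by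
  induction n using Nat.strong_induction_on with
  | _ n ih =>
    intro w hw
    by_cases h : n < N
    · exact ⟨n, h, w, hw, S.trunc_L_of_lt h w⟩
    · cases n with
      | zero => omega
      | succ k =>
        obtain ⟨m, hm, v, hv, e⟩ := ih (par k) (by have := par_le k; omega) (S.zc k)
          (S.big_parent hφ1 (S.le_ht_of_big hφ1 hw))
        refine ⟨m, hm, v, hv, ?_⟩
        rw [← e]
        funext i
        by_cases hi : i < N
        · simp only [trunc, hi, if_true]
          exact leg_succ_ne _ _ (by omega)
        · simp [trunc, hi]

/-- The height function is upper semicontinuous. A position of height at least `ε` is recognized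
by its truncations, because a leg of height at least `ε` passes through no cluster of large index
other than its own. -/
lemma isClosed_le_Φ (hφ1 : ∀ w, φ w ≤ 1) (hφ : ∀ ε > 0, IsClosed {w | ε ≤ φ w}) {ε : ℝ}
    (hε : 0 < ε) : IsClosed {y | ε ≤ S.Φ y} := by
  have : {y | ε ≤ S.Φ y} = ⋂ N : ℕ, trunc (N + 1) ⁻¹' ⋃ n ∈ Finset.range (N + 1),
      S.L n '' S.big ε n := by
    ext y
    simp only [mem_ofPred_eq, mem_iInter, mem_preimage, mem_iUnion, Finset.mem_range, exists_prop]
    rw [S.le_Φ_iff_big hε]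
    constructor
    · rintro ⟨n, w, hw, rfl⟩ N
      obtain ⟨m, hm, v, hv, e⟩ := S.trunc_mem hφ1 (Nat.succ_pos N) n w hw
      exact ⟨m, hm, v, hv, e.symm⟩
    · intro h
      obtain ⟨R, hR⟩ := exists_nat_one_div_lt hε
      by_cases hsupp : ∃ i > R, y i ≠ Sum.inr ()
      · obtain ⟨i, hi, hy⟩ := hsupp
        have key : ∀ N ≥ i, ∃ w ∈ S.big ε i, S.L i w = trunc (N + 1) y := by
          intro N hN
          obtain ⟨n, hn, w, hw, e⟩ := h N
          have hni : leg S.zc n w i ≠ Sum.inr () := by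
            have e' := congrFun e i
            simp only [trunc, Nat.lt_succ_of_le hN, if_true] at e'
            rw [L] at e'
            rwa [e']
          by_cases hin : n = i
          · subst hin; exact ⟨w, hw, e⟩
          · exfalso
            have h1 := ht_le_ha (S.hs hφ1) S.zc n w i hni hin
            have h2 := ha_le (S.hs hφ1) i
            have h3 := S.le_ht_of_big hφ1 hw
            have h4 : (1:ℝ) / (i + 1) ≤ 1 / (R + 1) := by
              apply one_div_le_one_div_of_le (by positivity)
              have : (R:ℝ) ≤ i := by exact_mod_cast hi.le
              linarith
            linarith
        obtain ⟨w, hw, e⟩ := key i le_rfl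
        refine ⟨i, w, hw, ?_⟩
        funext j
        obtain ⟨v, hv, e'⟩ := key (max i j) (le_max_left _ _)
        have hvw : v = w := by
          have h1 := congrFun e i
          have h2 := congrFun e' i
          simp only [trunc, L, leg_self, Nat.lt_succ_of_le (le_max_left i j), Nat.lt_succ_self,
            if_true] at h1 h2
          exact Sum.inl.inj (h2.trans h1.symm)
        have h3 := congrFun e' j
        simp only [trunc, Nat.lt_succ_of_le (le_max_right i j), if_true] at h3
        rw [← h3, hvw]
      · push Not at hsupp
        obtain ⟨n, hn, w, hw, e⟩ := h R
        refine ⟨n, w, hw, ?_⟩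
        rw [e]
        funext i
        by_cases hi : i < R + 1
        · simp [trunc, hi]
        · simp only [trunc, hi, if_false]
          exact hsupp i (by omega)
  rw [this]
  refine isClosed_iInter fun N => IsClosed.preimage (continuous_trunc _) ?_
  refine isClosed_biUnion_finset fun n _ => ?_
  exact ((S.isClosed_big hφ1 hφ hε n).isCompact.image (continuous_leg _ n)).isClosed

/-- The endpoints of the witnessing set. -/
def pts : Set (Pos × ℝ) := range fun n => S.ep (n, M.pt)

/-- The witnessing endpoints accumulate at the spots of every cluster. -/
lemma spot_mem_closure (hφ1 : ∀ w, φ w ≤ 1) {p : ℕ} {w : CC} {r : ℝ}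
    (h : (w, r) ∈ spots K φ M p) : (S.L p w, ha S.s p * r) ∈ closure S.pts := by
  rw [mem_closure_iff_nhds]
  intro U hU
  obtain ⟨V, hV, W, hW, hVW⟩ := mem_nhds_prod_iff.1 hU
  rw [nhds_pi, Filter.mem_pi] at hV
  obtain ⟨I, hI, B, hB, hBV⟩ := hV
  obtain ⟨δ, hδ, hδW⟩ := Metric.mem_nhds_iff.1 hW
  -- places near `w` and relative heights near `r`
  have h1 : {q : CC × ℝ | (∀ i ∈ I, S.L p q.1 i ∈ B i) ∧ |ha S.s p * q.2 - ha S.s p * r| < δ / 2} ∈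
      𝓝 (w, r) := by
    refine Filter.inter_mem ?_ ?_
    · show ∀ᶠ q : CC × ℝ in 𝓝 (w, r), ∀ i ∈ I, S.L p q.1 i ∈ B i
      rw [Filter.eventually_all_finite hI]
      intro i _
      have hc : Continuous fun q : CC × ℝ => S.L p q.1 i :=
        (continuous_apply i).comp ((continuous_leg _ p).comp continuous_fst)
      exact hc.continuousAt.eventually (hB i)
    · have hc : Continuous fun q : CC × ℝ => |ha S.s p * q.2 - ha S.s p * r| := by fun_prop
      exact hc.continuousAt.eventually (gt_mem_nhds (by simpa using half_pos hδ))
  obtain ⟨R, hR⟩ := exists_nat_one_div_lt (half_pos hδ)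
  obtain ⟨k, hk, hp, hkI, hkδ⟩ := S.dense p _ h _ h1 (max R (hI.toFinset.sup id))
  refine ⟨S.ep (k, M.pt), hVW ⟨hBV fun i hi => ?_, hδW ?_⟩, ⟨k, rfl⟩⟩
  · have hik : i ≠ k + 1 := by
      have : i ≤ hI.toFinset.sup id := Finset.le_sup (f := id) (hI.mem_toFinset.2 hi)
      have := (le_max_right R (hI.toFinset.sup id)).trans hk
      omega
    show leg S.zc (k + 1) (M.base M.pt) i ∈ B i
    rw [leg_succ_ne _ _ hik, hp]
    exact hkI i hi
  · rw [Metric.mem_ball, Real.dist_eq]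
    show |S.hh k M.pt - ha S.s p * r| < δ
    have e1 := S.hh_le hφ1 k M.pt
    have e2 := S.hh_ge hφ1 k M.pt
    have e3 := (ht_mem (S.hs hφ1) (k + 1))
    have e4 : ht S.s (k + 1) = ha S.s p * S.s k := by rw [ht_succ, hp]
    have e5 : ((k:ℝ) + 1) / (k + 2) = 1 - 1 / (k + 2) := by field_simp; ring
    have e6 : (1:ℝ) / (k + 2) ≤ 1 / (R + 1) := by
      apply one_div_le_one_div_of_le (by positivity)
      have : (R:ℝ) ≤ k := by exact_mod_cast (le_max_left _ _).trans hk
      linarith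
    have e7 : ht S.s (k + 1) * (1 / ((k:ℝ) + 2)) ≤ 1 / (k + 2) :=
      mul_le_of_le_one_left (by positivity) e3.2
    rw [e5, mul_sub, mul_one] at e2
    simp only at hkδ
    rw [← e4] at hkδ
    rw [abs_lt] at hkδ ⊢
    constructor <;> linarith [hkδ.1, hkδ.2]

/-- On the leg of a witnessing endpoint, the endpoints accumulate only at the prescribed compact
set. -/
lemma mem_K_of_mem_closure (hφ1 : ∀ w, φ w ≤ 1) {n : ℕ} (hK : IsClosed (K n)) {t : ℝ}
    (ht0 : 0 < t) (ht1 : t < S.hh n M.pt)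
    (h : (S.L (n + 1) (M.base M.pt), t) ∈ closure S.E) : t / ha S.s (n + 1) ∈ K n := by
  rw [← hK.closure_eq, Metric.mem_closure_iff]
  intro δ hδ
  have ha0 := ha_pos (S.hs hφ1) (n + 1)
  set a := ha S.s (n + 1) with hadef
  have ha1 : a ≤ 1 := (ha_le_ht (S.hs hφ1) _).trans (ht_mem (S.hs hφ1) _).2
  obtain ⟨R, hR⟩ := exists_nat_one_div_lt (show 0 < min (t / 2) (a * δ / 2) by positivity)
  have hR1 := hR.trans_le (min_le_left _ _)
  have hR2 := hR.trans_le (min_le_right _ _)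
  set y₀ := S.L (n + 1) (M.base M.pt) with hy₀
  have v1 : ∀ᶠ q : Pos × ℝ in 𝓝 (y₀, t), t / 2 < q.2 ∧ q.2 < S.hh n M.pt ∧ |q.2 - t| < a * δ / 2 := by
    have hc : ContinuousAt (fun q : Pos × ℝ => q.2) (y₀, t) := continuous_snd.continuousAt
    have hc2 : ContinuousAt (fun q : Pos × ℝ => |q.2 - t|) (y₀, t) := by fun_prop
    refine (hc.eventually (lt_mem_nhds (by simpa using ht0))).and
      ((hc.eventually (gt_mem_nhds ht1)).and (hc2.eventually (gt_mem_nhds ?_)))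
    simp only [sub_self, abs_zero]; positivity
  have hci : ∀ i, ContinuousAt (fun q : Pos × ℝ => q.1 i) (y₀, t) := fun i =>
    ((continuous_apply i).comp continuous_fst).continuousAt
  have v2 : ∀ᶠ q : Pos × ℝ in 𝓝 (y₀, t), ∃ z, q.1 (n + 1) = Sum.inl z ∧
      dist z (M.base M.pt) < t / 2 := by
    have ho : Sum.inl '' Metric.ball (M.base M.pt) (t / 2) ∈
        𝓝 ((fun q : Pos × ℝ => q.1 (n + 1)) (y₀, t)) := by
      refine (isOpenMap_inl _ Metric.isOpen_ball).mem_nhds ?_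
      exact ⟨_, Metric.mem_ball_self (by positivity), (leg_self _ _ _).symm⟩
    filter_upwards [(hci (n + 1)).eventually ho] with q hq
    obtain ⟨z, hz, e⟩ := hq
    exact ⟨z, e.symm, hz⟩
  have v3 : ∀ᶠ q : Pos × ℝ in 𝓝 (y₀, t), ∀ i ∈ Finset.Ioc (n + 1) (R + 1), q.1 i = Sum.inr () := by
    rw [Filter.eventually_all_finset]
    intro i hi
    rw [Finset.mem_Ioc] at hi
    have ho : range (Sum.inr : Unit → CC ⊕ Unit) ∈ 𝓝 ((fun q : Pos × ℝ => q.1 i) (y₀, t)) := by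
      refine isOpen_range_inr.mem_nhds ?_
      exact ⟨(), (leg_gt _ _ _ _ hi.1).symm⟩
    filter_upwards [(hci i).eventually ho] with q hq
    obtain ⟨u, e⟩ := hq
    exact e.symm
  obtain ⟨⟨y, u⟩, ⟨⟨hu1, hu2, hu3⟩, ⟨z, hz, hzd⟩, hy⟩, hE⟩ :=
    ((v1.and (v2.and v3)).and_frequently (mem_closure_iff_frequently.1 h)).exists
  simp only at hu1 hu2 hu3 hz hy
  rcases S.mem_E.1 hE with ⟨w, -, rfl, -⟩ | ⟨k, γ, rfl, rfl⟩
  · rw [L, leg_zero_ne _ _ (by simp)] at hz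
    cases hz
  have hkn : k ≠ n := by
    rintro rfl
    exact absurd hu2 (not_lt.2 (S.hh_pt_le hφ1 k γ))
  obtain ⟨c, hc1, hc2, hc3⟩ := exists_child S.zc (k + 1) (M.base γ) (n + 1)
    (by rw [L] at hz; rw [hz]; simp) (by omega)
  have hcR : R + 1 < c + 1 := by
    by_contra! hle
    have hcn : n + 1 < c + 1 := by have := par_le c; omega
    exact hc2 (hy _ (Finset.mem_Ioc.2 ⟨hcn, hle⟩))
  have e1 := S.hh_le hφ1 k γ
  have hkc : k = c := by
    by_contra hne
    have h1 := ht_le_ha (S.hs hφ1) S.zc (k + 1) _ (c + 1) hc2 (by omega)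
    have h2 := ha_le (S.hs hφ1) (c + 1)
    have h4 : (1:ℝ) / (((c + 1 : ℕ) : ℝ) + 1) ≤ 1 / (R + 1) := by
      apply one_div_le_one_div_of_le (by positivity)
      have : ((R + 1 : ℕ):ℝ) ≤ ((c + 1 : ℕ) : ℝ) := by exact_mod_cast hcR.le
      push_cast at this ⊢
      linarith
    linarith
  subst hkc
  have hzk : z = S.zc k := by
    rw [L, hc3] at hz
    exact (Sum.inl.inj hz).symm
  subst hzk
  have e2 := S.hh_ge hφ1 k γ
  have e3 := ht_mem (S.hs hφ1) (k + 1)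
  have e4 : ht S.s (k + 1) = a * S.s k := by rw [ht_succ, hc1]
  have e5 : ((k:ℝ) + 1) / (k + 2) = 1 - 1 / (k + 2) := by field_simp; ring
  have e6 : (1:ℝ) / (k + 2) ≤ 1 / (R + 1) := by
    apply one_div_le_one_div_of_le (by positivity)
    have : (R:ℝ) ≤ k := by exact_mod_cast (by omega : R ≤ k)
    linarith
  have e7 : ht S.s (k + 1) * (1 / ((k:ℝ) + 2)) ≤ 1 / (k + 2) :=
    mul_le_of_le_one_left (by positivity) e3.2
  rw [e5, mul_sub, mul_one] at e2
  have hm := S.mem k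
  rw [hc1] at hm
  obtain ⟨-, hs0, hs1, hs2 | hs2⟩ := hm
  · refine ⟨S.s k, hs2, ?_⟩
    have e8 : t / a - S.s k = (t - ht S.s (k + 1)) / a := by rw [e4]; field_simp
    rw [Real.dist_eq, e8, abs_div, abs_of_pos ha0, div_lt_iff₀ ha0]
    rw [abs_lt] at hu3 ⊢
    constructor <;> linarith [hu3.1, hu3.2]
  · exfalso
    have : ht S.s (k + 1) ≤ S.s k := by rw [e4]; exact mul_le_of_le_one_left hs0.le ha1
    simp only at hs2
    linarith

/-- Points of different clusters are separated by the open sets of positions passing through a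
given cluster at heights exceeding those of the clusters attached to it. -/
lemma isEmbedding_ep (hφ1 : ∀ w, φ w ≤ 1) : IsEmbedding S.ep := by
  have hL : ∀ n, IsEmbedding fun γ => S.ep (n, γ) := by
    intro n
    have h := (ht_mem (S.hs hφ1) (n + 1)).1
    have h2 : (0:ℝ) < n + 2 := by positivity
    have haff : IsEmbedding fun r : ℝ => ht S.s (n + 1) * ((n + 1 + r) / (n + 2)) := by
      refine Function.LeftInverse.isEmbedding
        (f := fun u => u / ht S.s (n + 1) * (n + 2) - (n + 1)) ?_ ?_ ?_
      · intro r; field_simp; ring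
      · fun_prop
      · fun_prop
    exact ((isEmbedding_leg S.zc (n + 1)).prodMap haff).comp M.emb
  have hcont : Continuous S.ep := by
    rw [continuous_prod_of_discrete_left]
    exact fun n => (hL n).continuous
  have hsep : ∀ n, ∃ U : Set (Pos × ℝ), IsOpen U ∧ ∀ k γ, S.ep (k, γ) ∈ U ↔ k = n := by
    intro n
    refine ⟨{q | q.1 (n + 1) ∈ range (Sum.inl : CC → CC ⊕ Unit) ∧ ha S.s (n + 1) < q.2}, ?_, ?_⟩
    · have h1 : IsOpen {q : Pos × ℝ | q.1 (n + 1) ∈ range (Sum.inl : CC → CC ⊕ Unit)} :=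
        isOpen_range_inl.preimage ((continuous_apply (n + 1)).comp continuous_fst)
      exact h1.inter (isOpen_lt continuous_const continuous_snd)
    · intro k γ
      constructor
      · rintro ⟨⟨z, hz⟩, h2⟩
        by_contra hne
        have h1 := ht_le_ha (S.hs hφ1) S.zc (k + 1) (M.base γ) (n + 1)
          (by intro e; rw [show leg S.zc (k + 1) (M.base γ) (n + 1) = Sum.inl z from hz.symm] at e
              cases e) (by omega)
        exact absurd (h2.trans_le ((S.hh_le hφ1 k γ).trans h1)) (lt_irrefl _)
      · rintro rfl
        exact ⟨⟨_, (leg_self _ _ _).symm⟩, S.ha_lt_hh hφ1 k γ⟩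
  refine ⟨isInducing_iff_nhds.2 ?_, ?_⟩
  · rintro ⟨n, γ⟩
    refine le_antisymm hcont.continuousAt.le_comap ?_
    intro V hV
    rw [nhds_prod_eq, nhds_discrete, Filter.mem_prod_iff] at hV
    obtain ⟨A, hA, B, hB, hAB⟩ := hV
    rw [(hL n).isInducing.nhds_eq_comap] at hB
    obtain ⟨O, hO, hOB⟩ := hB
    obtain ⟨U, hU, hUn⟩ := hsep n
    refine ⟨O ∩ U, Filter.inter_mem hO (hU.mem_nhds ((hUn n γ).2 rfl)), ?_⟩
    rintro ⟨k, δ⟩ ⟨h1, h2⟩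
    obtain rfl := (hUn k δ).1 h2
    exact hAB ⟨Filter.mem_pure.1 hA, hOB h1⟩
  · rintro ⟨n, γ⟩ ⟨k, δ⟩ h
    obtain ⟨h1, h2⟩ := S.L_inj (Prod.mk.inj h).1
    obtain rfl : n = k := by simpa using h1
    exact congrArg (Prod.mk n) (M.inj h2)

end Sys

end Topology

/-! ### The three models and the coordinates of positions -/

section Models

/-- The Cantor set as a countable power of two points indexed by pairs. -/
def ccHomeo : CC ≃ₜ (ℕ × ℕ → Bool) :=
  cantorSetHomeomorphNatToBool.trans
    (Homeomorph.piCongrLeft (Y := fun _ : ℕ => Bool) Nat.pairEquiv).symm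

/-- Binary coordinates for a single place. -/
def code : CC ⊕ Unit → ℕ → Bool :=
  Sum.elim (fun w n => Nat.casesOn n true (cantorSetHomeomorphNatToBool w)) fun _ _ => false

lemma continuous_code : Continuous code := by
  refine continuous_sum_dom.2 ⟨continuous_pi fun n => ?_, continuous_const⟩
  cases n with
  | zero => exact continuous_const
  | succ n => exact (continuous_apply n).comp cantorSetHomeomorphNatToBool.continuous

lemma code_injective : Function.Injective code := by
  rintro (v | u) (w | u') h
  · congr 1
    apply cantorSetHomeomorphNatToBool.injective
    funext n
    exact congrFun h (n + 1)
  · exact absurd (congrFun h 0) (by simp [code])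
  · exact absurd (congrFun h 0) (by simp [code])
  · rfl

/-- The embedding of the space of positions in the line. -/
def iota (y : Pos) : ℝ := cval (ccHomeo.symm fun a => code (y a.1) a.2)

lemma iota_mem (y : Pos) : iota y ∈ cantorSet := Subtype.property _

lemma isEmbedding_iota : IsEmbedding iota := by
  refine (Continuous.isClosedEmbedding ?_ ?_).isEmbedding
  · refine isEmbedding_cval.continuous.comp (ccHomeo.symm.continuous.comp ?_)
    exact continuous_pi fun a => (continuous_apply a.2).comp
      (continuous_code.comp (continuous_apply a.1))
  · intro y z h
    have h1 := ccHomeo.symm.injective (isEmbedding_cval.injective h)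
    funext n
    apply code_injective
    funext i
    exact congrFun h1 (n, i)

/-- The one-point model. -/
def unitModel : Model Unit where
  base _ := ccHomeo.symm fun _ => false
  g _ := 0
  pt := ()
  inj _ _ _ := rfl
  g_nonneg _ := le_rfl
  g_le_one _ := zero_le_one
  g_pt := rfl
  closed _ := (Set.toFinite _).isClosed
  emb := IsEmbedding.of_subsingleton _

/-- The Cantor set as a model. -/
def cantorModel : Model CC where
  base w := w
  g _ := 0
  pt := ccHomeo.symm fun _ => false
  inj _ _ h := h
  g_nonneg _ := le_rfl
  g_le_one _ := zero_le_one
  g_pt := rfl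
  closed r := by
    by_cases h : r ≤ 0 <;> simp [h]
  emb := Function.LeftInverse.isEmbedding (f := Prod.fst) (fun _ => rfl) continuous_fst
    (by fun_prop)

/-- The weight of coordinate `k` of a point of the Baire space. -/
def wt (b : ℕ → ℕ) (k : ℕ) : ℝ := (1 / 2) ^ (k + 1) * if b k = 0 then 0 else 1

lemma wt_nonneg (b : ℕ → ℕ) (k : ℕ) : 0 ≤ wt b k := by
  unfold wt; split_ifs <;> positivity

lemma wt_le (b : ℕ → ℕ) (k : ℕ) : wt b k ≤ (1 / 2) ^ (k + 1) := by
  unfold wt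
  split_ifs
  · rw [mul_zero]; positivity
  · rw [mul_one]

lemma summable_half : Summable fun k : ℕ => (1 / 2 : ℝ) ^ (k + 1) :=
  (summable_nat_add_iff 1).2 (summable_geometric_of_lt_one (by norm_num) (by norm_num))

lemma summable_wt (b : ℕ → ℕ) : Summable (wt b) :=
  summable_half.of_nonneg_of_le (wt_nonneg b) (wt_le b)

/-- The total weight of the nonzero coordinates. -/
def tw (b : ℕ → ℕ) : ℝ := ∑' k, wt b k

lemma sum_le_tw (b : ℕ → ℕ) (N : ℕ) : ∑ k ∈ Finset.range N, wt b k ≤ tw b :=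
  (summable_wt b).sum_le_tsum _ fun k _ => wt_nonneg b k

lemma tw_le_of (b : ℕ → ℕ) {r : ℝ} (h : ∀ N, ∑ k ∈ Finset.range N, wt b k ≤ r) : tw b ≤ r :=
  Real.tsum_le_of_sum_range_le (wt_nonneg b) h

lemma tw_le_sum (b : ℕ → ℕ) (N : ℕ) :
    tw b ≤ ∑ k ∈ Finset.range N, wt b k + (1 / 2) ^ N := by
  have key : ∀ J, ∑ k ∈ Finset.range (N + J), wt b k ≤
      ∑ k ∈ Finset.range N, wt b k + (1 / 2) ^ N - (1 / 2) ^ (N + J) := by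
    intro J
    induction J with
    | zero => simp
    | succ J ih =>
      rw [← add_assoc, Finset.sum_range_succ]
      have h1 := wt_le b (N + J)
      have h2 : (1 / 2 : ℝ) ^ (N + J) = 2 * (1 / 2) ^ (N + J + 1) := by rw [pow_succ]; ring
      linarith
  refine tw_le_of b fun M => ?_
  have h1 : ∑ k ∈ Finset.range M, wt b k ≤ ∑ k ∈ Finset.range (N + M), wt b k :=
    Finset.sum_le_sum_of_subset_of_nonneg (Finset.range_mono (by omega)) fun k _ _ => wt_nonneg b k
  have h2 : (0:ℝ) ≤ (1 / 2) ^ (N + M) := by positivity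
  linarith [key M]

lemma tw_le_one (b : ℕ → ℕ) : tw b ≤ 1 := by simpa using tw_le_sum b 0

lemma tw_nonneg (b : ℕ → ℕ) : 0 ≤ tw b := by simpa using sum_le_tw b 0

lemma tw_one : tw (fun _ => 1) = 1 := by
  have h : ∀ k, wt (fun _ => 1) k = 1 / 2 / 2 ^ k := by
    intro k; simp [wt, pow_succ]; ring
  rw [tw, tsum_congr h]
  exact tsum_geometric_two' 1

lemma continuous_tw : Continuous tw := by
  refine continuous_tsum (fun k => ?_) summable_half fun k b => ?_
  · exact (continuous_of_discreteTopology
      (f := fun n : ℕ => (1 / 2 : ℝ) ^ (k + 1) * if n = 0 then 0 else 1)).comp (continuous_apply k)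
  · rw [Real.norm_of_nonneg (wt_nonneg b k)]
    exact wt_le b k

/-- The graph, as a subset of pairs, of the partial function sending `k` to `b k - 1`. -/
def bits (b : ℕ → ℕ) : ℕ × ℕ → Bool := fun a => decide (b a.1 = a.2 + 1)

lemma bits_injective : Function.Injective bits := by
  intro b c h
  have key : ∀ k i, b k = i + 1 ↔ c k = i + 1 := by
    intro k i
    have := congrFun h (k, i)
    simpa [bits] using this
  funext k
  cases hb : b k with
  | succ i => exact ((key k i).1 hb).symm
  | zero =>
    cases hc : c k with
    | zero => rfl
    | succ i => exact absurd ((key k i).2 hc) (by omega)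

lemma continuous_bits : Continuous bits := by
  refine continuous_pi fun a => ?_
  exact (continuous_of_discreteTopology (f := fun n : ℕ => decide (n = a.2 + 1))).comp
    (continuous_apply a.1)

lemma range_bits : range bits = {x | ∀ k i j, x (k, i) = true → x (k, j) = true → i = j} := by
  ext x
  constructor
  · rintro ⟨b, rfl⟩ k i j hi hj
    simp only [bits, decide_eq_true_eq] at hi hj
    omega
  · intro hx
    classical
    have : ∀ k, ∃ n : ℕ, ∀ i, x (k, i) = true ↔ n = i + 1 := by
      intro k
      by_cases h : ∃ i, x (k, i) = true
      · obtain ⟨i, hi⟩ := h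
        refine ⟨i + 1, fun j => ⟨fun hj => by rw [hx k i j hi hj], fun hj => ?_⟩⟩
        obtain rfl : i = j := by omega
        exact hi
      · push Not at h
        exact ⟨0, fun j => ⟨fun hj => absurd hj (h j), fun hj => by omega⟩⟩
    choose b hb using this
    refine ⟨b, ?_⟩
    funext ⟨k, i⟩
    rw [bits, Bool.eq_iff_iff, decide_eq_true_eq]
    exact (hb k i).symm

lemma isClosed_range_bits : IsClosed (range bits) := by
  rw [range_bits]
  simp only [ofPred_forall]
  refine isClosed_iInter fun k => isClosed_iInter fun i => isClosed_iInter fun j => ?_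
  have h : ∀ a : ℕ × ℕ, IsClopen {x : ℕ × ℕ → Bool | x a = true} := fun a =>
    (isClopen_discrete {true}).preimage (continuous_apply a)
  refine isClosed_imp (h _).isOpen (isClosed_imp (h _).isOpen ?_)
  exact isClosed_const

/-- Finite approximations from below of `tw`, as continuous functions of the bits. -/
def approx (N : ℕ) (x : ℕ × ℕ → Bool) : ℝ :=
  ∑ k ∈ Finset.range N, (1 / 2) ^ (k + 1) * ∑ i ∈ Finset.range N, if x (k, i) then 1 else 0

lemma continuous_approx (N : ℕ) : Continuous (approx N) := by
  refine continuous_finsetSum _ fun k _ => continuous_const.mul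
    (continuous_finsetSum _ fun i _ => ?_)
  exact (continuous_of_discreteTopology (f := fun u : Bool => if u then (1:ℝ) else 0)).comp
    (continuous_apply (k, i))

lemma approx_bits (N : ℕ) (b : ℕ → ℕ) : approx N (bits b) =
    ∑ k ∈ Finset.range N, (1 / 2) ^ (k + 1) * if 0 < b k ∧ b k ≤ N then 1 else 0 := by
  refine Finset.sum_congr rfl fun k _ => ?_
  congr 1
  simp only [bits, decide_eq_true_eq]
  cases b k with
  | zero => simp
  | succ m =>
    have h : m < N ↔ 0 < m + 1 ∧ m + 1 ≤ N := by omega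
    simp only [Nat.add_right_cancel_iff, Finset.sum_ite_eq, Finset.mem_range, h]

lemma tw_le_iff (b : ℕ → ℕ) (r : ℝ) : tw b ≤ r ↔ ∀ N, approx N (bits b) ≤ r := by
  constructor
  · intro h N
    refine le_trans ?_ ((sum_le_tw b N).trans h)
    rw [approx_bits]
    refine Finset.sum_le_sum fun k _ => mul_le_mul_of_nonneg_left ?_ (by positivity)
    split_ifs with h1 h2 <;> first | omega | norm_num
  · intro h
    refine tw_le_of b fun n => ?_
    obtain ⟨N, hN, hb⟩ : ∃ N ≥ n, ∀ k ∈ Finset.range n, b k ≤ N :=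
      ⟨max n ((Finset.range n).sup b), le_max_left _ _, fun k hk =>
        (Finset.le_sup hk).trans (le_max_right _ _)⟩
    refine le_trans ?_ (h N)
    rw [approx_bits]
    refine le_trans (Finset.sum_le_sum (g := fun k => (1 / 2 : ℝ) ^ (k + 1) *
      if 0 < b k ∧ b k ≤ N then 1 else 0) fun k hk => ?_)
      (Finset.sum_le_sum_of_subset_of_nonneg (Finset.range_mono hN) fun k _ _ => by
        split_ifs <;> positivity)
    refine mul_le_mul_of_nonneg_left ?_ (by positivity)
    have := hb k hk
    split_ifs with h1 h2 <;> first | omega | norm_num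

/-- Convergence of the bits together with the total weight is convergence of all coordinates: the
nonzero coordinates are seen by the bits, and a vanishing coordinate cannot become nonzero without
raising the weight. -/
lemma coord_eventually (b : ℕ → ℕ) (k : ℕ) :
    ∃ U ∈ 𝓝 (bits b, tw b), ∀ b', (bits b', tw b') ∈ U → b' k = b k := by
  have hbit : ∀ l, ∃ U ∈ 𝓝 (bits b), ∀ b', bits b' ∈ U → b l ≠ 0 → b' l = b l := by
    intro l
    refine ⟨{x | x (l, b l - 1) = bits b (l, b l - 1)}, ?_, ?_⟩
    · have h : IsOpen ((fun x : ℕ × ℕ → Bool => x (l, b l - 1)) ⁻¹' {bits b (l, b l - 1)}) :=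
        (isOpen_discrete _).preimage (continuous_apply _)
      exact h.mem_nhds rfl
    · intro b' hb' h0
      have e : bits b' (l, b l - 1) = bits b (l, b l - 1) := hb'
      have h1 : b l = b l - 1 + 1 := by omega
      simp only [bits, ← h1, decide_true, decide_eq_true_eq] at e
      exact e
  choose U hU hUb using hbit
  have hnear : ∀ᶠ u in 𝓝 (tw b), u < tw b + (1 / 2) ^ (k + 2) :=
    gt_mem_nhds (by linarith [show (0:ℝ) < (1 / 2) ^ (k + 2) by positivity])
  refine ⟨(⋂ l ∈ Finset.range (k + 2), U l) ×ˢ {u | u < tw b + (1 / 2) ^ (k + 2)},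
    prod_mem_nhds ((Filter.biInter_finset_mem _).2 fun l _ => hU l) hnear, ?_⟩
  rintro b' ⟨h1, h2⟩
  simp only [mem_iInter] at h1
  have h2' : tw b' < tw b + (1 / 2) ^ (k + 2) := h2
  by_cases h0 : b k = 0
  swap
  · exact hUb k b' (h1 k (by simp)) h0
  by_contra hne
  have hk0 : b' k ≠ 0 := by rwa [h0] at hne
  have hle : ∀ l ∈ Finset.range (k + 2), wt b l + (if l = k then (1 / 2) ^ (k + 1) else 0) ≤
      wt b' l := by
    intro l hl
    by_cases hlk : l = k
    · subst hlk; simp [wt, h0, hk0]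
    · by_cases hl0 : b l = 0
      · simp only [hlk, if_false, wt, hl0, if_true, mul_zero, add_zero]
        exact wt_nonneg b' l
      · simp only [hlk, if_false, add_zero, wt, hUb l b' (h1 l hl) hl0, le_refl]
  have h3 := Finset.sum_le_sum hle
  rw [Finset.sum_add_distrib, Finset.sum_ite_eq' , if_pos (by simp)] at h3
  have h4 := tw_le_sum b (k + 2)
  have h5 := sum_le_tw b' (k + 2)
  have h6 : (1 / 2 : ℝ) ^ (k + 1) = 2 * (1 / 2) ^ (k + 2) := by rw [pow_succ _ (k + 1)]; ring
  linarith

lemma isEmbedding_bits_tw : IsEmbedding fun b => (bits b, tw b) := by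
  refine ⟨isInducing_iff_nhds.2 fun b => le_antisymm
    (continuous_bits.prodMk continuous_tw).continuousAt.le_comap ?_, fun b c h =>
    bits_injective (Prod.mk.inj h).1⟩
  rw [nhds_pi, Filter.pi]
  refine le_iInf fun k => ?_
  rw [nhds_discrete ℕ, Filter.comap_pure, Filter.le_principal_iff]
  obtain ⟨U, hU, h⟩ := coord_eventually b k
  exact ⟨U, hU, h⟩

lemma isClosed_bits_image (r : ℝ) : IsClosed (bits '' {b | r ≤ 1 - tw b}) := by
  have : bits '' {b | r ≤ 1 - tw b} = range bits ∩ ⋂ N, {x | approx N x ≤ 1 - r} := by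
    ext x
    simp only [mem_image, mem_inter_iff, mem_range, mem_iInter, mem_ofPred_eq]
    constructor
    · rintro ⟨b, hb, rfl⟩
      exact ⟨⟨b, rfl⟩, (tw_le_iff b _).1 (by linarith)⟩
    · rintro ⟨⟨b, rfl⟩, h⟩
      exact ⟨b, by linarith [(tw_le_iff b _).2 h], rfl⟩
  rw [this]
  exact isClosed_range_bits.inter (isClosed_iInter fun N =>
    isClosed_le (continuous_approx N) continuous_const)

/-- The Baire space as a model. The bits of a sequence form a closed subset of a Cantor set, but do
not detect coordinates escaping to infinity, which look like `0` in the limit; the height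
`1 - tw b`, which is only upper semicontinuous as a function of the bits, does detect them. -/
def baireModel : Model (ℕ → ℕ) where
  base b := ccHomeo.symm (bits b)
  g b := 1 - tw b
  pt := fun _ => 1
  inj _ _ h := bits_injective (ccHomeo.symm.injective h)
  g_nonneg b := by linarith [tw_le_one b]
  g_le_one b := by linarith [tw_nonneg b]
  g_pt := by rw [tw_one]; norm_num
  closed r := by
    have h2 := ccHomeo.symm.isClosedMap _ (isClosed_bits_image r)
    rwa [image_image] at h2
  emb := by
    have hr : IsEmbedding fun u : ℝ => 1 - u :=
      Function.LeftInverse.isEmbedding (f := fun u : ℝ => 1 - u) (fun u => by simp)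
        (by fun_prop) (by fun_prop)
    have h := (ccHomeo.symm.isEmbedding.prodMap hr).comp isEmbedding_bits_tw
    exact h

end Models

/-! ### Order isomorphism of traces -/

section Traces

/-- Shrinking a compact subset of `(0,1)` towards `0` does not change its order type: a piecewise
linear homeomorphism of `[0,1]`, with break point above the set, undoes the shrinking. -/
lemma orderIsomorphic_scale {A : Set ℝ} (hA : IsCompact A) (hA' : A ⊆ Ioo 0 1) {c : ℝ}
    (hc0 : 0 < c) (hc1 : c < 1) : OrderIsomorphic ((fun x => c * x) '' A) A := by
  obtain ⟨d, hd0, hd1, hd⟩ : ∃ d, 0 < d ∧ d < 1 ∧ ∀ x ∈ A, x ≤ d := by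
    rcases A.eq_empty_or_nonempty with rfl | hne
    · exact ⟨1 / 2, by norm_num, by norm_num, by simp⟩
    · obtain ⟨d, hd⟩ := hA.exists_isGreatest hne
      exact ⟨d, (hA' hd.1).1, (hA' hd.1).2, fun x hx => hd.2 hx⟩
  have hcd : c * d < d := by nlinarith
  set σ := (1 - d) / (1 - c * d) with hσ
  have hσ0 : 0 < σ := div_pos (by linarith) (by linarith)
  have hσ1 : σ < 1 := (div_lt_one (by linarith)).2 (by linarith)
  have hσe : σ * (1 - c * d) = 1 - d := div_mul_cancel₀ _ (by linarith)
  have hc' : 1 < 1 / c := by rw [lt_div_iff₀ hc0]; linarith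
  let f : ℝ → ℝ := fun x => min (x / c) (1 - σ * (1 - x))
  have hmono : StrictMono f := by
    intro x y h
    have h1 : x / c < y / c := div_lt_div_of_pos_right h hc0
    have h2 : 1 - σ * (1 - x) < 1 - σ * (1 - y) := by nlinarith
    exact min_lt_min h1 h2
  have hlow : ∀ y ≤ d, f (c * y) = y := by
    intro y hy
    have e : c * y / c = y := by field_simp
    simp only [f, e]
    refine min_eq_left ?_
    nlinarith [mul_nonneg (sub_nonneg.2 hy) (by nlinarith : 0 ≤ 1 - σ * c)]
  have hf0 : f 0 = 0 := by simpa using hlow 0 hd0.le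
  have hf1 : f 1 = 1 := by simp only [f, sub_self, mul_zero, sub_zero]; exact min_eq_right hc'.le
  have hmem : ∀ x : Icc (0:ℝ) 1, f x ∈ Icc (0:ℝ) 1 := fun x =>
    ⟨hf0.symm.le.trans (hmono.monotone x.2.1), (hmono.monotone x.2.2).trans hf1.le⟩
  let F : Icc (0:ℝ) 1 → Icc (0:ℝ) 1 := fun x => ⟨f x, hmem x⟩
  have hF : StrictMono F := fun x y h => hmono h
  have hcont : Continuous f := by fun_prop
  have hsurj : Function.Surjective F := by
    intro y
    have := intermediate_value_Icc (zero_le_one (α := ℝ)) hcont.continuousOn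
    rw [hf0, hf1] at this
    obtain ⟨x, hx, e⟩ := this y.2
    exact ⟨⟨x, hx⟩, Subtype.ext e⟩
  let h : Icc (0:ℝ) 1 ≃ₜ Icc (0:ℝ) 1 := (StrictMono.orderIsoOfSurjective F hF hsurj).toHomeomorph
  have hh : ∀ x, (h x : ℝ) = f x := fun x => rfl
  refine ⟨h, hF, ?_⟩
  ext y
  constructor
  · rintro ⟨_, ⟨x, ⟨z, hz, hzx⟩, rfl⟩, rfl⟩
    simp only at hzx
    rw [hh, ← hzx, hlow z (hd z hz)]
    exact hz
  · intro hy
    have h1 := hA' hy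
    refine ⟨_, ⟨⟨c * y, by nlinarith [h1.1], by nlinarith [h1.1, h1.2]⟩, ⟨y, hy, rfl⟩, rfl⟩, ?_⟩
    rw [hh, hlow y (hd y hy)]

/-- A set containing all small positive numbers is not order isomorphic to a compact subset of `(0,1)`. -/
lemma not_orderIsomorphic {A B : Set ℝ} (hB : IsCompact B) (hB' : B ⊆ Ioo 0 1) {ε : ℝ}
    (hε : 0 < ε) (hA : ∀ r, 0 < r → r < ε → r < 1 → r ∈ A) : ¬ OrderIsomorphic A B := by
  rintro ⟨h, hmono, rfl⟩
  have hin : ∀ x : Icc (0:ℝ) 1, (x:ℝ) ∈ A →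
      ((h x : Icc (0:ℝ) 1) : ℝ) ∈ Subtype.val '' (⇑h '' (Subtype.val ⁻¹' A)) := fun x hx =>
    ⟨_, ⟨x, hx, rfl⟩, rfl⟩
  have hne : (Subtype.val '' (⇑h '' (Subtype.val ⁻¹' A))).Nonempty := by
    have h1 : 0 < min ε 1 / 2 := by positivity
    have h2 : min ε 1 / 2 < ε := by linarith [min_le_left ε 1]
    have h3 : min ε 1 / 2 < 1 := by linarith [min_le_right ε 1]
    exact ⟨_, hin ⟨min ε 1 / 2, h1.le, h3.le⟩ (hA _ h1 h2 h3)⟩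
  obtain ⟨m, hm, hleast⟩ := hB.exists_isLeast hne
  obtain ⟨_, ⟨x, hx, rfl⟩, rfl⟩ := id hm
  have hx0 : 0 < (x:ℝ) := by
    refine lt_of_le_of_ne x.2.1 fun e => ?_
    have h1 : x ≤ h.symm ⟨0, by simp⟩ := by
      show (x:ℝ) ≤ _
      rw [← e]
      exact (h.symm ⟨0, by simp⟩).2.1
    have h2 := hmono.monotone h1
    rw [h.apply_symm_apply] at h2
    exact absurd (hB' hm).1 (not_lt.2 h2)
  have h1 : 0 < min ε x / 2 := by positivity
  have h2 : min ε x / 2 < ε := by linarith [min_le_left ε (x:ℝ)]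
  have h3 : min ε x / 2 < x := by linarith [min_le_right ε (x:ℝ)]
  have h4 : min ε x / 2 < 1 := h3.trans_le x.2.2
  have h5 : h ⟨min ε x / 2, h1.le, h4.le⟩ < h x := hmono h3
  exact absurd (hleast (hin ⟨min ε x / 2, h1.le, h4.le⟩ (hA _ h1 h2 h4))) (not_le.2 h5)

variable {Y : Type*} [TopologicalSpace Y]

lemma mem_segment_fanPt {ι : Y → ℝ} {y : Y} {t : ℝ} {q : ℝ × ℝ} :
    q ∈ segment ℝ fanVertex (fanPt ι (y, t)) ↔ ∃ θ ∈ Icc (0:ℝ) 1, q = fanPt ι (y, θ * t) := by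
  rw [segment_eq_image']
  simp only [mem_image]
  have : ∀ θ : ℝ, fanVertex + θ • (fanPt ι (y, t) - fanVertex) = fanPt ι (y, θ * t) := by
    intro θ; simp [fanPt, fanVertex, mul_assoc]
  simp only [this, eq_comm]

lemma legTrace_fanPt {ι : Y → ℝ} (hι : IsEmbedding ι) (S : Set (Y × ℝ)) {y : Y} {t : ℝ}
    (ht : 0 < t) : legTrace (fanPt ι '' S) (fanPt ι (y, t)) =
      {r | 0 < r ∧ r < 1 ∧ (y, r * t) ∈ closure S} := by
  ext r
  constructor
  · rintro ⟨q, ⟨⟨h1, h2⟩, h3⟩, rfl⟩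
    obtain ⟨θ, hθ, rfl⟩ := mem_segment_fanPt.1 h2
    have e : (fanPt ι (y, θ * t)).2 / (fanPt ι (y, t)).2 = θ := by
      rw [fanPt_snd, fanPt_snd]; field_simp
    simp only [e]
    simp only [mem_insert_iff, mem_singleton_iff, not_or] at h3
    have h0 : 0 < θ := lt_of_le_of_ne hθ.1 fun e => h3.1 (by rw [← e, zero_mul, fanPt_zero])
    refine ⟨h0, lt_of_le_of_ne hθ.2 fun e => h3.2 (by rw [e, one_mul]), ?_⟩
    exact (mem_closure_fanPt hι (mul_pos h0 ht)).1 h1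
  · rintro ⟨h0, h1, h2⟩
    refine ⟨fanPt ι (y, r * t), ⟨⟨(mem_closure_fanPt hι (mul_pos h0 ht)).2 h2,
      mem_segment_fanPt.2 ⟨r, ⟨h0.le, h1.le⟩, rfl⟩⟩, ?_⟩, ?_⟩
    · simp only [mem_insert_iff, mem_singleton_iff, not_or]
      constructor <;> intro e <;> have e' := congrArg Prod.snd e
      · rw [fanPt_snd] at e'
        exact (mul_pos h0 ht).ne' e'
      · rw [fanPt_snd, fanPt_snd] at e'
        simp only at e'
        nlinarith
    · simp only [fanPt_snd]; field_simp

end Traces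

/-! ### Embedding a fan in a fan -/

section Embeddings

variable {Y Z : Type*} [TopologicalSpace Y] [TopologicalSpace Z]

/-- An embedding of positions under which the height functions correspond induces an embedding of
fans. -/
lemma exists_fan_embedding [CompactSpace Y] {ι : Y → ℝ} (hι : IsEmbedding ι) {κ : Z → ℝ}
    (hκ : IsEmbedding κ) {φ : Y → ℝ} {Φ : Z → ℝ} (h0 : ∀ y, 0 ≤ φ y) (h1 : ∀ y, φ y ≤ 1)
    (h : ∀ ε > 0, IsClosed {y | ε ≤ φ y}) {L : Y → Z} (hL : Continuous L)
    (hLi : Function.Injective L) (hΦ : ∀ y, φ y ≤ Φ (L y)) :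
    ∃ g : fanSet ι φ → fanSet κ Φ, IsEmbedding g ∧
      ∀ x : fanSet ι φ, ∀ q ∈ hypo φ, (x : ℝ × ℝ) = fanPt ι q →
        (g x : ℝ × ℝ) = fanPt κ (L q.1, q.2) := by
  have hcomp : CompactSpace (hypo φ) := isCompact_iff_compactSpace.1 (isCompact_hypo h0 h1 h)
  let π : hypo φ → fanSet ι φ := fun q => ⟨fanPt ι q, by
    rw [fanSet_eq_image]; exact ⟨q, q.2, rfl⟩⟩
  have hπs : Function.Surjective π := by
    rintro ⟨x, hx⟩
    obtain ⟨q, hq, rfl⟩ := (fanSet_eq_image ι φ) ▸ hx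
    exact ⟨⟨q, hq⟩, rfl⟩
  have hπc : Continuous π :=
    ((continuous_fanPt hι.continuous).comp continuous_subtype_val).subtype_mk _
  have hπ : IsQuotientMap π := hπc.isClosedMap.isQuotientMap hπc hπs
  have hX : CompactSpace (fanSet ι φ) := hπs.compactSpace hπc
  let G : hypo φ → fanSet κ Φ := fun q => ⟨fanPt κ (L q.1.1, q.1.2), by
    rw [fanSet_eq_image]; exact ⟨_, ⟨q.2.1, q.2.2.trans (hΦ _)⟩, rfl⟩⟩
  have hGc : Continuous G := by
    refine Continuous.subtype_mk ((continuous_fanPt hκ.continuous).comp ?_) _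
    exact (hL.comp (continuous_fst.comp continuous_subtype_val)).prodMk
      (continuous_snd.comp continuous_subtype_val)
  -- equal points have the same height, and the same position unless they are the vertex
  have hzero : ∀ q : hypo φ, ¬ 0 < q.1.2 → q.1.2 = 0 := fun q hq => le_antisymm (not_lt.1 hq) q.2.1
  have hwd : ∀ q r : hypo φ, π q = π r → G q = G r := by
    intro q r e
    have e1 : fanPt ι q.1 = fanPt ι r.1 := congrArg Subtype.val e
    have e2 : q.1.2 = r.1.2 := by simpa only [fanPt_snd] using congrArg Prod.snd e1
    apply Subtype.ext
    show fanPt κ (L q.1.1, q.1.2) = fanPt κ (L r.1.1, r.1.2)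
    by_cases hq : 0 < q.1.2
    · rw [fanPt_inj hι.injective e1 hq]
    · rw [← e2, hzero q hq, fanPt_zero, fanPt_zero]
  have hinj : ∀ q r : hypo φ, G q = G r → π q = π r := by
    intro q r e
    have e1 : fanPt κ (L q.1.1, q.1.2) = fanPt κ (L r.1.1, r.1.2) := congrArg Subtype.val e
    have e2 : q.1.2 = r.1.2 := by simpa only [fanPt_snd] using congrArg Prod.snd e1
    apply Subtype.ext
    show fanPt ι q.1 = fanPt ι r.1
    by_cases hq : 0 < q.1.2
    · have e3 := fanPt_inj hκ.injective e1 hq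
      rw [show q.1 = r.1 from Prod.ext (hLi (congrArg Prod.fst e3)) e2]
    · have hq0 := hzero q hq
      rw [show q.1 = (q.1.1, 0) from Prod.ext rfl hq0,
        show r.1 = (r.1.1, 0) from Prod.ext rfl (e2 ▸ hq0), fanPt_zero, fanPt_zero]
  choose σ hσ using hπs
  have hgπ : ∀ q, G (σ (π q)) = G q := fun q => hwd _ _ (hσ _)
  refine ⟨fun x => G (σ x), ?_, ?_⟩
  · have hgc : Continuous fun x => G (σ x) := by
      rw [hπ.continuous_iff]
      exact hGc.congr fun q => (hgπ q).symm
    refine (hgc.isClosedEmbedding fun x y e => ?_).isEmbedding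
    rw [← hσ x, ← hσ y]
    exact hinj _ _ e
  · intro x q hq e
    obtain rfl : x = π ⟨q, hq⟩ := Subtype.ext e
    exact congrArg Subtype.val (hgπ ⟨q, hq⟩)

end Embeddings

/-! ### The extended fan -/

section Final

variable {Γ : Type*} [TopologicalSpace Γ] {K : ℕ → Set ℝ} {φ : CC → ℝ} {M : Model Γ}
  (S : Sys K φ M)

namespace Sys

/-- The constructed fan. -/
def fan : Set (ℝ × ℝ) := fanSet iota S.Φ

/-- The endpoints of the constructed fan lying on the legs of the points `M.pt`. -/
def wit (n : ℕ) : ℝ × ℝ := fanPt iota (S.ep (n, M.pt))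

lemma range_wit : range S.wit = fanPt iota '' S.pts := by
  rw [Sys.pts, ← range_comp]; rfl

lemma pts_subset : S.pts ⊆ range S.ep := by
  rintro _ ⟨n, rfl⟩
  exact ⟨_, rfl⟩

lemma isSmoothFan_fan (hφ0 : ∀ w, 0 ≤ φ w) (hφ1 : ∀ w, φ w ≤ 1)
    (hφ : ∀ ε > 0, IsClosed {w | ε ≤ φ w}) (hne : ∃ w, 0 < φ w) : IsSmoothFan S.fan := by
  obtain ⟨w, hw⟩ := hne
  have h1 : S.Φ (S.L 1 (M.base M.pt)) = S.hh 0 M.pt :=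
    ((S.mem_E_iff hφ1).1 (show S.ep (0, M.pt) ∈ S.E from Or.inr ⟨_, rfl⟩)).2.symm
  refine isSmoothFan_fanSet isEmbedding_iota iota_mem (S.Φ_nonneg hφ1) (S.Φ_le_one hφ1)
    (fun ε hε => S.isClosed_le_Φ hφ1 hφ hε) (y := S.L 0 w) (z := S.L 1 (M.base M.pt)) ?_ ?_ ?_
  · intro e
    exact absurd (S.L_inj e).1 (by norm_num)
  · rw [S.Φ_L_zero hφ0]; exact hw
  · rw [h1]; exact S.hh_pos hφ1 _ _

lemma endpoints_fan (hφ1 : ∀ w, φ w ≤ 1) (hfan : IsSmoothFan S.fan) :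
    Endpoints S.fan = fanPt iota '' S.E := by
  rw [fan, endpoints_fanSet isEmbedding_iota.injective iota_mem hfan.vertex_order]
  congr 1
  ext q
  exact (S.mem_E_iff hφ1).symm

lemma trace_eq (hφ1 : ∀ w, φ w ≤ 1) (hfan : IsSmoothFan S.fan) {y : Pos} {t : ℝ} (ht : 0 < t) :
    legTrace (Endpoints S.fan) (fanPt iota (y, t)) =
      {r | 0 < r ∧ r < 1 ∧ (y, r * t) ∈ closure S.E} := by
  rw [S.endpoints_fan hφ1 hfan, legTrace_fanPt isEmbedding_iota _ ht]

lemma spot_mem_closure_E (hφ1 : ∀ w, φ w ≤ 1) {p : ℕ} {w : CC} {r : ℝ}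
    (h : (w, r) ∈ spots K φ M p) : (S.L p w, ha S.s p * r) ∈ closure S.E :=
  closure_mono (S.pts_subset.trans subset_union_right) (S.spot_mem_closure hφ1 h)

lemma trace_wit (hK : KFamily K) (hφ1 : ∀ w, φ w ≤ 1) (hfan : IsSmoothFan S.fan) (n : ℕ) :
    OrderIsomorphic (legTrace (Endpoints S.fan) (S.wit n)) (K n) := by
  have ha0 := ha_pos (S.hs hφ1) (n + 1)
  have hh0 := S.hh_pos hφ1 n M.pt
  have hlt := S.ha_lt_hh hφ1 n M.pt
  have key : legTrace (Endpoints S.fan) (S.wit n) =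
      (fun x => ha S.s (n + 1) / S.hh n M.pt * x) '' K n := by
    rw [wit, ep, S.trace_eq hφ1 hfan hh0]
    ext r
    constructor
    · rintro ⟨h0, h1, h2⟩
      refine ⟨_, S.mem_K_of_mem_closure hφ1 (hK.1 n).1.isClosed (mul_pos h0 hh0)
        (mul_lt_of_lt_one_left hh0 h1) h2, ?_⟩
      field_simp
    · rintro ⟨x, hx, rfl⟩
      obtain ⟨hx0, hx1⟩ := (hK.1 n).2 hx
      have hc : ha S.s (n + 1) / S.hh n M.pt < 1 := (div_lt_one hh0).2 hlt
      have hc0 : 0 < ha S.s (n + 1) / S.hh n M.pt := div_pos ha0 hh0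
      refine ⟨mul_pos hc0 hx0, by nlinarith, ?_⟩
      have := S.spot_mem_closure_E hφ1 (p := n + 1) (w := M.base M.pt) (r := x)
        ⟨⟨_, rfl⟩, hx0, hx1.le, Or.inl hx⟩
      convert this using 2
      field_simp
  rw [key]
  exact orderIsomorphic_scale (hK.1 n).1 (hK.1 n).2 (div_pos ha0 hh0) ((div_lt_one hh0).2 hlt)

/-- On the leg of an endpoint outside the witnessing set, all points close to the vertex are limits
of points of the witnessing set. -/
lemma initial_segment (hφ1 : ∀ w, φ w ≤ 1) {q : Pos × ℝ} (hq : q ∈ S.E) (hq' : q ∉ S.pts) :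
    ∃ ε > 0, ε ≤ q.2 ∧ ∀ r, 0 < r → r ≤ ε → (q.1, r) ∈ closure S.pts := by
  obtain ⟨y, t⟩ := q
  obtain ⟨w, hw, rfl, rfl⟩ | ⟨n, γ, rfl, rfl⟩ := S.mem_E.1 hq
  · refine ⟨φ w, hw, le_rfl, fun r h0 h1 => ?_⟩
    simpa [ha_zero] using S.spot_mem_closure hφ1 (p := 0) (w := w) (r := r) ⟨h0, h1⟩
  · have hne : γ ≠ M.pt := by
      rintro rfl
      exact hq' ⟨n, rfl⟩
    have hd : 0 < dist (M.base γ) (M.base M.pt) := dist_pos.2 fun e => hne (M.inj e)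
    have ha0 := ha_pos (S.hs hφ1) (n + 1)
    refine ⟨ha S.s (n + 1) * min 1 (dist (M.base γ) (M.base M.pt)), by positivity, ?_,
      fun r h0 h1 => ?_⟩
    · exact (mul_le_of_le_one_right ha0.le (min_le_left _ _)).trans (S.ha_lt_hh hφ1 n γ).le
    · have h2 : r / ha S.s (n + 1) ≤ min 1 (dist (M.base γ) (M.base M.pt)) := by
        rw [div_le_iff₀ ha0]; linarith
      have := S.spot_mem_closure hφ1 (p := n + 1) (w := M.base γ) (r := r / ha S.s (n + 1))
        ⟨⟨_, rfl⟩, div_pos h0 ha0, h2.trans (min_le_left _ _), Or.inr (h2.trans (min_le_right _ _))⟩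
      rwa [mul_div_cancel₀ _ ha0.ne'] at this

lemma isKFan_fan (hK : KFamily K) (hφ1 : ∀ w, φ w ≤ 1) (hfan : IsSmoothFan S.fan) :
    IsKFan K S.fan S.wit := by
  have hex : ∀ x ∈ Endpoints S.fan \ range S.wit,
      ∃ q ∈ S.E, q ∉ S.pts ∧ x = fanPt iota q := by
    rintro x ⟨hx, hx'⟩
    rw [S.endpoints_fan hφ1 hfan] at hx
    obtain ⟨q, hq, rfl⟩ := hx
    refine ⟨q, hq, fun h => hx' ?_, rfl⟩
    rw [S.range_wit]
    exact ⟨q, h, rfl⟩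
  refine ⟨hfan, fun n => ?_, S.trace_wit hK hφ1 hfan, ?_, ?_⟩
  · rw [S.endpoints_fan hφ1 hfan]
    exact ⟨_, Or.inr ⟨_, rfl⟩, rfl⟩
  · intro x hx n
    obtain ⟨⟨y, t⟩, hq, hq', rfl⟩ := hex x hx
    obtain ⟨ε, hε, -, hcl⟩ := S.initial_segment hφ1 hq hq'
    have ht : 0 < t := (S.E_pos hφ1 hq).1
    rw [S.trace_eq hφ1 hfan ht]
    refine not_orderIsomorphic (hK.1 n).1 (hK.1 n).2 (div_pos hε ht) fun r h0 h1 h2 => ?_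
    refine ⟨h0, h2, closure_mono (S.pts_subset.trans subset_union_right) ?_⟩
    exact hcl _ (mul_pos h0 ht) ((lt_div_iff₀ ht).1 h1).le
  · intro x hx
    obtain ⟨⟨y, t⟩, hq, hq', rfl⟩ := hex x hx
    obtain ⟨ε, hε, hεt, hcl⟩ := S.initial_segment hφ1 hq hq'
    have ht : 0 < t := (S.E_pos hφ1 hq).1
    refine ⟨fanPt iota (y, ε), ⟨?_, ?_⟩, ?_⟩
    · rw [S.range_wit]
      exact (mem_closure_fanPt isEmbedding_iota hε).2 (hcl ε hε le_rfl)
    · refine mem_segment_fanPt.2 ⟨ε / t, ⟨by positivity, (div_le_one ht).2 hεt⟩, ?_⟩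
      rw [div_mul_cancel₀ _ ht.ne']
    · intro e
      have e' := congrArg Prod.snd e
      rw [fanPt_snd] at e'
      exact hε.ne' e'

end Sys

/-- The construction for an arbitrary cluster system. -/
lemma exists_extension (hK : KFamily K) (hφ0 : ∀ w, 0 ≤ φ w) (hφ1 : ∀ w, φ w ≤ 1)
    (hφ : ∀ ε > 0, IsClosed {w | ε ≤ φ w}) (hne : ∃ w, 0 < φ w) (hX : IsSmoothFan (fanSet cval φ)) :
    ∃ (X' : Set (ℝ × ℝ)) (e : ℕ → ℝ × ℝ) (g : ↥(fanSet cval φ) → ↥X'),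
      IsKFanExtension K (fanSet cval φ) X' e g ∧
      (range fun x : fanSet cval φ => ((g x : X') : ℝ × ℝ)) ⊆
        closure (Endpoints X' \ imageOfEndpoints (fanSet cval φ) X' g) ∧
      Endpoints X' \ imageOfEndpoints (fanSet cval φ) X' g = fanPt iota '' range S.ep ∧
      range e = fanPt iota '' S.pts ∧
      Nonempty (↥(Endpoints X' \ imageOfEndpoints (fanSet cval φ) X' g) ≃ₜ ℕ × Γ) := by
  have hfan := S.isSmoothFan_fan hφ0 hφ1 hφ hne
  obtain ⟨g, hg, hgq⟩ := exists_fan_embedding (κ := iota) (Φ := S.Φ) (L := S.L 0) isEmbedding_cval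
    isEmbedding_iota hφ0 hφ1 hφ (continuous_leg S.zc 0) (fun v w h => (S.L_inj h).2)
    fun w => (S.Φ_L_zero hφ0 w).ge
  have hEX : Endpoints (fanSet cval φ) = fanPt cval '' {q | 0 < q.2 ∧ q.2 = φ q.1} :=
    endpoints_fanSet isEmbedding_cval.injective (fun c => c.2) hX.vertex_order
  have hEX' := S.endpoints_fan hφ1 hfan
  have himg : imageOfEndpoints (fanSet cval φ) S.fan g = fanPt iota '' S.E0 := by
    ext p
    constructor
    · rintro ⟨x, hx, rfl⟩
      have hx' : (x : ℝ × ℝ) ∈ fanPt cval '' {q | 0 < q.2 ∧ q.2 = φ q.1} := hEX ▸ hx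
      obtain ⟨⟨w, t⟩, ⟨h0, e⟩, h1⟩ := hx'
      obtain rfl : t = φ w := e
      exact ⟨_, ⟨w, h0, rfl⟩, (hgq x _ ⟨h0.le, le_rfl⟩ h1.symm).symm⟩
    · rintro ⟨_, ⟨w, hw, rfl⟩, rfl⟩
      have hmem : fanPt cval (w, φ w) ∈ fanSet cval φ := by
        rw [fanSet_eq_image]; exact ⟨_, ⟨hw.le, le_rfl⟩, rfl⟩
      refine ⟨⟨_, hmem⟩, ?_, hgq ⟨_, hmem⟩ (w, φ w) ⟨hw.le, le_rfl⟩ rfl⟩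
      show fanPt cval (w, φ w) ∈ Endpoints (fanSet cval φ)
      rw [hEX]
      exact ⟨_, ⟨hw, rfl⟩, rfl⟩
  have hdiff : Endpoints S.fan \ imageOfEndpoints (fanSet cval φ) S.fan g =
      fanPt iota '' range S.ep := by
    rw [hEX', himg, Sys.E, image_union, union_sdiff_left]
    refine sdiff_eq_left.2 (Set.disjoint_left.2 ?_)
    rintro _ ⟨_, ⟨⟨n, γ⟩, rfl⟩, rfl⟩ ⟨_, ⟨w, hw, rfl⟩, h⟩
    have h1 := fanPt_inj isEmbedding_iota.injective h hw
    exact absurd (S.L_inj (congrArg Prod.fst h1)).1 (Nat.succ_ne_zero n).symm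
  refine ⟨S.fan, S.wit, g, ⟨S.isKFan_fan hK hφ1 hfan, hg, fun x hx => ?_⟩, ?_, hdiff,
    S.range_wit, ?_⟩
  · have h1 : ((g x : S.fan) : ℝ × ℝ) ∈ imageOfEndpoints (fanSet cval φ) S.fan g := ⟨x, hx, rfl⟩
    rw [himg] at h1
    rw [hEX']
    exact image_mono subset_union_left h1
  · rw [hdiff]
    have hpos : ∀ w r, 0 < r → r ≤ φ w →
        fanPt iota (S.L 0 w, r) ∈ closure (fanPt iota '' range S.ep) := by
      intro w r h0 h1
      refine (mem_closure_fanPt isEmbedding_iota h0).2 (closure_mono S.pts_subset ?_)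
      simpa [ha_zero] using S.spot_mem_closure hφ1 (p := 0) (w := w) (r := r) ⟨h0, h1⟩
    rintro _ ⟨x, rfl⟩
    obtain ⟨⟨w, r⟩, hq, hx⟩ : ∃ q ∈ hypo φ, fanPt cval q = (x : ℝ × ℝ) := by
      exact (fanSet_eq_image cval φ).subset x.2
    simp only
    rw [hgq x _ hq hx.symm]
    rcases hq.1.lt_or_eq with h0 | h0
    · exact hpos w r h0 hq.2
    · -- the vertex is a limit of points of a leg of the original fan
      obtain ⟨w₀, hw₀⟩ := hne
      have h0' : r = 0 := h0.symm
      subst h0'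
      have hcont : Continuous fun t : ℝ => fanPt iota (S.L 0 w₀, t) :=
        (continuous_fanPt isEmbedding_iota.continuous).comp (by fun_prop)
      have hclosed := (isClosed_closure (s := fanPt iota '' range S.ep)).preimage hcont
      have hsub : Ioo 0 (φ w₀) ⊆ (fun t : ℝ => fanPt iota (S.L 0 w₀, t)) ⁻¹'
          closure (fanPt iota '' range S.ep) := fun t ht => hpos w₀ t ht.1 ht.2.le
      have h2 := hclosed.closure_subset_iff.2 hsub
      rw [closure_Ioo hw₀.ne] at h2
      have h3 : fanPt iota (S.L 0 w₀, 0) ∈ closure (fanPt iota '' range S.ep) :=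
        h2 (left_mem_Icc.2 hw₀.le)
      rwa [fanPt_zero] at h3 ⊢
  · have hemb : IsEmbedding (fanPt iota ∘ S.ep) :=
      isEmbedding_fanPt isEmbedding_iota (S.isEmbedding_ep hφ1) fun q => S.hh_pos hφ1 q.1 q.2
    rw [hdiff, ← range_comp]
    exact ⟨hemb.toHomeomorph.symm⟩

/-- In a model with a point other than `M.pt`, every cluster has room for attaching further
clusters. -/
lemma spots_nonempty (hne : ∃ w, 0 < φ w) {γ : Γ} (hγ : γ ≠ M.pt) (p : ℕ) :
    (spots K φ M p).Nonempty := by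
  cases p with
  | zero =>
    obtain ⟨w, hw⟩ := hne
    exact ⟨(w, φ w), hw, le_rfl⟩
  | succ k =>
    have hd : 0 < dist (M.base γ) (M.base M.pt) := dist_pos.2 fun e => hγ (M.inj e)
    exact ⟨(M.base γ, min 1 (dist (M.base γ) (M.base M.pt))), ⟨γ, rfl⟩, lt_min one_pos hd,
      min_le_left _ _, Or.inr (min_le_right _ _)⟩

end Final

/-- Every smooth fan `X` embeds in a `𝒦`-fan `X'` with
`E(X) ⊆ E(X')` and `X ⊆ cl(E(X') ∖ E(X))`; moreover `X'` can be chosen with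
`E(X') ∖ E(X)` equal to the witnessing set `E_𝒦` and homeomorphic to `ℕ` (when all `K n`
are nonempty), or homeomorphic to the irrationals, or homeomorphic to (Cantor set) `× ℕ`. -/
theorem kfan_extension_exists (K : ℕ → Set ℝ) (hK : KFamily K)
    (X : Set (ℝ × ℝ)) (hX : IsSmoothFan X) :
    ((∀ n, (K n).Nonempty) →
      ∃ (X' : Set (ℝ × ℝ)) (e : ℕ → ℝ × ℝ) (g : ↥X → ↥X'),
        IsKFanExtension K X X' e g ∧
        (Set.range fun x : X => ((g x : X') : ℝ × ℝ)) ⊆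
          closure (Endpoints X' \ imageOfEndpoints X X' g) ∧
        Endpoints X' \ imageOfEndpoints X X' g = Set.range e ∧
        Nonempty (↥(Endpoints X' \ imageOfEndpoints X X' g) ≃ₜ ℕ)) ∧
    (∃ (X' : Set (ℝ × ℝ)) (e : ℕ → ℝ × ℝ) (g : ↥X → ↥X'),
        IsKFanExtension K X X' e g ∧
        (Set.range fun x : X => ((g x : X') : ℝ × ℝ)) ⊆
          closure (Endpoints X' \ imageOfEndpoints X X' g) ∧
        Nonempty (↥(Endpoints X' \ imageOfEndpoints X X' g) ≃ₜ {x : ℝ // Irrational x})) ∧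
    (∃ (X' : Set (ℝ × ℝ)) (e : ℕ → ℝ × ℝ) (g : ↥X → ↥X'),
        IsKFanExtension K X X' e g ∧
        (Set.range fun x : X => ((g x : X') : ℝ × ℝ)) ⊆
          closure (Endpoints X' \ imageOfEndpoints X X' g) ∧
        Nonempty (↥(Endpoints X' \ imageOfEndpoints X X' g) ≃ₜ (↥cantorSet × ℕ))) := by
  obtain ⟨φ, hφ0, hφ1, hφ, rfl, hne⟩ := hX.exists_height
  refine ⟨fun hKne => ?_, ?_, ?_⟩
  · have hsp : ∀ p, (spots K φ unitModel p).Nonempty := by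
      intro p
      cases p with
      | zero =>
        obtain ⟨w, hw⟩ := hne
        exact ⟨(w, φ w), hw, le_rfl⟩
      | succ k =>
        obtain ⟨r, hr⟩ := hKne k
        have hr' := (hK.1 k).2 hr
        exact ⟨(unitModel.base (), r), ⟨(), rfl⟩, hr'.1, hr'.2.le, Or.inl hr⟩
    obtain ⟨S⟩ := exists_sys K φ unitModel hsp
    obtain ⟨X', e, g, h1, h2, h3, h4, ⟨h5⟩⟩ := exists_extension S hK hφ0 hφ1 hφ hne hX
    refine ⟨X', e, g, h1, h2, ?_, ⟨h5.trans (Homeomorph.prodPUnit ℕ)⟩⟩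
    rw [h3, h4]
    congr 1
    refine Subset.antisymm ?_ S.pts_subset
    rintro _ ⟨⟨n, u⟩, rfl⟩
    exact ⟨n, rfl⟩
  · have hγ : (fun _ => 0 : ℕ → ℕ) ≠ baireModel.pt := fun h => by
      simpa [baireModel] using congrFun h 0
    obtain ⟨S⟩ := exists_sys K φ baireModel (spots_nonempty hne hγ)
    obtain ⟨X', e, g, h1, h2, -, -, ⟨h5⟩⟩ := exists_extension S hK hφ0 hφ1 hφ hne hX
    obtain ⟨hirr⟩ := nonempty_baire_homeo_irrational
    exact ⟨X', e, g, h1, h2, ⟨h5.trans hirr⟩⟩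
  · have hγ : ccHomeo.symm (fun _ => true) ≠ cantorModel.pt := fun h => by
      simpa using congrFun (ccHomeo.symm.injective h) (0, 0)
    obtain ⟨S⟩ := exists_sys K φ cantorModel (spots_nonempty hne hγ)
    obtain ⟨X', e, g, h1, h2, -, -, ⟨h5⟩⟩ := exists_extension S hK hφ0 hφ1 hφ hne hX
    exact ⟨X', e, g, h1, h2, ⟨h5.trans (Homeomorph.prodComm ℕ CC)⟩⟩

end SmoothFanPaper
end
end
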